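/- arXiv:1707.03507 — 5 statements merged into one kernel-verified Lean document; each statement's English description precedes it below -/
import Mathlib

section
/- Every 2-regular simple graph admits an antimagic orientation. That is, if G is a finite simple graph in which every vertex has degree exactly 2 (equivalently, G is a disjoint union of cycles), then there exist an orientation D of G and a bijection c from the arc set of D to {1, 2, …, m} (where m is the number of edges of G) such that the vertex-sums of all vertices of D under c are pairwise distinct. -/
open Finset

/-- `A` is an orientation of the simple graph `G`: every edge of `G` receives exactly one
direction, and every arc of `A` comes from an edge of `G`. -/
def IsOrientation {V : Type*} (G : SimpleGraph V) (A : Finset (V × V)) : Prop :=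
  (∀ u v : V, G.Adj u v ↔ ((u, v) ∈ A ∨ (v, u) ∈ A)) ∧
    ∀ u v : V, ¬((u, v) ∈ A ∧ (v, u) ∈ A)

/-- The vertex-sum of `u` for the arc-labeling `c`: the sum of labels of arcs entering `u`
minus the sum of labels of arcs leaving `u`. -/
def vertexSum {V : Type*} [DecidableEq V] (A : Finset (V × V)) (c : V × V → ℤ) (u : V) : ℤ :=
  (∑ a ∈ A.filter (fun a => a.2 = u), c a) - ∑ a ∈ A.filter (fun a => a.1 = u), c a

/-! ### Arithmetic of the labeling

`t` is the number of triangles, `l` the number of odd cycles of length at least five.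
A cycle is described by its length `n` and its index `i` (from 1) within its class
(triangles, longer odd cycles, even cycles). -/

/-- threshold index at which the longer odd cycles switch sign -/
def amC (t l : ℕ) : ℕ := l - (t - t / 2)

/-- a correction modulo 3 -/
def amE (t l : ℕ) : ℕ := if (2 * l + 2 * amC t l + 2) % 3 = 0 then 1 else 0

/-- label of edge `0` of an odd cycle -/
def amP (t n i : ℕ) : ℕ := if n = 3 then i else 2 * t + i

/-- label of edge `n-1` of an odd cycle -/
def amQ (t l n i : ℕ) : ℕ := if n = 3 then 2 * t + 1 - i else 2 * (t + l) + 1 - i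

/-- label of edge `1` of an odd cycle -/
def amX (t l n i : ℕ) : ℕ :=
  if n = 3 then (if i ≤ t / 2 then 2 * (t + l) + 2 * i else 2 * (t + l) + 2 * (i - t / 2) - 1)
  else if i ≤ amC t l then 2 * (t + l) + t + 2 * (amC t l + 1 - i) - amE t l
  else 2 * (t + l) + t + 2 * i

/-- label of edge `n-2` of an odd cycle -/
def amY (t l n i : ℕ) : ℕ :=
  if n = 3 then (if i ≤ t / 2 then 2 * (t + l) + 2 * i else 2 * (t + l) + 2 * (i - t / 2) - 1)
  else if i ≤ amC t l then 2 * (t + l) + t + 2 * (amC t l + 1 - i) - (1 - amE t l)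
  else 2 * (t + l) + t + 2 * i - 1

/-- sign of a cycle (0 is plus, 1 is minus) -/
def amS (t l n i : ℕ) : ℕ :=
  if n = 3 then (if i ≤ t / 2 then 0 else 1)
  else if n % 2 = 1 then (if i ≤ amC t l then 1 else 0) else 0

/-- the order index of a cycle that is not a triangle -/
def amI (t l n i : ℕ) : ℕ :=
  if n % 2 = 1 then (if i ≤ amC t l then amC t l + 1 - i else i) else l + i

/-- level of edge `j` -/
def amLev (n j : ℕ) : ℕ := if n % 2 = 1 then min j (n - 1 - j) else 1 + min j (n - j)

/-- number of explicitly labelled edges -/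
def amK (t l : ℕ) : ℕ := 3 * t + 4 * l

/-- key of a non-core edge -/
def amEnc (t l B n i j : ℕ) : ℕ :=
  amK t l + 1 + ((amLev n j * B + amI t l n i) * 2 + (if 2 * j < n then 0 else 1))

/-- key of an edge; labels are ranks of keys -/
def amKey (t l B n i j : ℕ) : ℕ :=
  if n % 2 = 1 then
    (if j = 0 then amP t n i else if j = n - 1 then amQ t l n i
     else if j = 1 then amX t l n i else if j = n - 2 then amY t l n i
     else amEnc t l B n i j)
  else amEnc t l B n i j

/-- `n, i` describe a legitimate cycle -/
def amOK (t l B n i : ℕ) : Prop :=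
  3 ≤ n ∧ 1 ≤ i ∧ (n = 3 → i ≤ t) ∧ (n ≠ 3 → n % 2 = 1 → i ≤ l) ∧ l + i < B

/-- same class of cycles and same index -/
def amSame (n i n' i' : ℕ) : Prop :=
  i = i' ∧ (n = 3 ↔ n' = 3) ∧ (n % 2 = n' % 2)

lemma amE_cases (t l : ℕ) : (amE t l = 0 ∧ (2 * l + 2 * amC t l + 2) % 3 ≠ 0) ∨
    (amE t l = 1 ∧ (2 * l + 2 * amC t l + 2) % 3 = 0) := by
  unfold amE; split_ifs <;> simp_all

lemma odd_cls {t l n i : ℕ} (_h1 : 3 ≤ n) (hn : n % 2 = 1) (h3 : n = 3 → i ≤ t)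
    (h4 : n ≠ 3 → n % 2 = 1 → i ≤ l) : (n = 3 ∧ i ≤ t) ∨ (n ≠ 3 ∧ i ≤ l) := by
  by_cases n3 : n = 3
  · exact .inl ⟨n3, h3 n3⟩
  · exact .inr ⟨n3, h4 n3 hn⟩

lemma core_bounds {t l B n i : ℕ} (h : amOK t l B n i) (hn : n % 2 = 1) :
    1 ≤ amP t n i ∧ amP t n i < amQ t l n i ∧ amQ t l n i ≤ 2 * (t + l) ∧
    2 * (t + l) < amX t l n i ∧ 2 * (t + l) < amY t l n i ∧
    amX t l n i ≤ amK t l ∧ amY t l n i ≤ amK t l ∧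
    (n ≠ 3 → 2 * (t + l) + t < amX t l n i ∧ 2 * (t + l) + t < amY t l n i) := by
  obtain ⟨h1, h2, h3, h4, h5⟩ := h
  have hC : amC t l = l - (t - t / 2) := rfl
  rcases amE_cases t l with ⟨he, -⟩ | ⟨he, -⟩ <;>
  by_cases n3 : n = 3 <;>
  simp only [amP, amQ, amX, amY, amK, n3, he, if_true, if_false] <;>
  split_ifs <;> omega

lemma pass_sep {t l B n i n' i' : ℕ} (h : amOK t l B n i) (hn : n % 2 = 1)
    (h' : amOK t l B n' i') (hn' : n' % 2 = 1) (hs : amS t l n i = amS t l n' i')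
    (e : amQ t l n i + amP t n' i' = amQ t l n' i' + amP t n i) : amSame n i n' i' := by
  obtain ⟨h1, h2, h3, h4, h5⟩ := h
  obtain ⟨h1', h2', h3', h4', h5'⟩ := h'
  have hC : amC t l = l - (t - t / 2) := rfl
  refine (fun hh : i = i' ∧ (n = 3 ↔ n' = 3) => ⟨hh.1, hh.2, hn.trans hn'.symm⟩) ?_
  rcases odd_cls h1 hn h3 h4 with ⟨n3, hi⟩ | ⟨n3, hi⟩ <;>
  rcases odd_cls h1' hn' h3' h4' with ⟨n3', hi'⟩ | ⟨n3', hi'⟩ <;>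
  clear h3 h4 h3' h4' <;>
  simp only [amP, amQ, amS, n3, n3', hn, hn', if_true, if_false] at hs e <;>
  clear hn hn' h1 h1' h5 h5' <;>
  split_ifs at hs e <;> omega

lemma sep_PP {t l B n i n' i' : ℕ} (h : amOK t l B n i) (hn : n % 2 = 1)
    (h' : amOK t l B n' i') (hn' : n' % 2 = 1) (hs : amS t l n i = amS t l n' i')
    (e : amP t n i + amX t l n i = amP t n' i' + amX t l n' i') : amSame n i n' i' := by
  obtain ⟨h1, h2, h3, h4, h5⟩ := h
  obtain ⟨h1', h2', h3', h4', h5'⟩ := h'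
  have hC : amC t l = l - (t - t / 2) := rfl
  refine (fun hh : i = i' ∧ (n = 3 ↔ n' = 3) => ⟨hh.1, hh.2, hn.trans hn'.symm⟩) ?_
  rcases amE_cases t l with ⟨he, he'⟩ | ⟨he, he'⟩ <;>
  rcases odd_cls h1 hn h3 h4 with ⟨n3, hi⟩ | ⟨n3, hi⟩ <;>
  rcases odd_cls h1' hn' h3' h4' with ⟨n3', hi'⟩ | ⟨n3', hi'⟩ <;>
  clear h3 h4 h3' h4' <;>
  simp only [amP, amX, amS, n3, n3', hn, hn', he, if_true, if_false] at hs e <;>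
  clear hn hn' h1 h1' h5 h5' <;>
  split_ifs at hs e <;> omega

lemma sep_QQ {t l B n i n' i' : ℕ} (h : amOK t l B n i) (hn : n % 2 = 1)
    (h' : amOK t l B n' i') (hn' : n' % 2 = 1) (hs : amS t l n i = amS t l n' i')
    (e : amQ t l n i + amY t l n i = amQ t l n' i' + amY t l n' i') : amSame n i n' i' := by
  obtain ⟨h1, h2, h3, h4, h5⟩ := h
  obtain ⟨h1', h2', h3', h4', h5'⟩ := h'
  have hC : amC t l = l - (t - t / 2) := rfl
  refine (fun hh : i = i' ∧ (n = 3 ↔ n' = 3) => ⟨hh.1, hh.2, hn.trans hn'.symm⟩) ?_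
  rcases amE_cases t l with ⟨he, he'⟩ | ⟨he, he'⟩ <;>
  rcases odd_cls h1 hn h3 h4 with ⟨n3, hi⟩ | ⟨n3, hi⟩ <;>
  rcases odd_cls h1' hn' h3' h4' with ⟨n3', hi'⟩ | ⟨n3', hi'⟩ <;>
  clear h3 h4 h3' h4' <;>
  simp only [amQ, amY, amS, n3, n3', hn, hn', he, if_true, if_false] at hs e <;>
  clear hn hn' h1 h1' h5 h5' <;>
  split_ifs at hs e <;> omega

lemma sep_PQ {t l B n i n' i' : ℕ} (h : amOK t l B n i) (hn : n % 2 = 1)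
    (h' : amOK t l B n' i') (hn' : n' % 2 = 1) (hs : amS t l n i ≠ amS t l n' i')
    (e : amP t n i + amX t l n i = amQ t l n' i' + amY t l n' i') : False := by
  obtain ⟨h1, h2, h3, h4, h5⟩ := h
  obtain ⟨h1', h2', h3', h4', h5'⟩ := h'
  have hC : amC t l = l - (t - t / 2) := rfl
  rcases amE_cases t l with ⟨he, he'⟩ | ⟨he, he'⟩ <;>
  rcases odd_cls h1 hn h3 h4 with ⟨n3, hi⟩ | ⟨n3, hi⟩ <;>
  rcases odd_cls h1' hn' h3' h4' with ⟨n3', hi'⟩ | ⟨n3', hi'⟩ <;>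
  clear h3 h4 h3' h4' <;>
  simp only [amP, amX, amQ, amY, amS, n3, n3', hn, hn', he, if_true, if_false] at hs e <;>
  clear hn hn' h1 h1' h5 h5' <;>
  split_ifs at hs e <;> omega

/-- monotonicity of `amEnc` -/
lemma enc_lt {t l B n i j n' i' j' : ℕ} (h : amOK t l B n i)
    (hlt : amLev n j < amLev n' j' ∨
      (amLev n j = amLev n' j' ∧ amI t l n i < amI t l n' i')) :
    amEnc t l B n i j < amEnc t l B n' i' j' := by
  have hI : amI t l n i < B := by
    obtain ⟨h1, h2, h3, h4, h5⟩ := h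
    have hC : amC t l = l - (t - t / 2) := rfl
    unfold amI; split_ifs <;> omega
  have key : amLev n j * B + amI t l n i < amLev n' j' * B + amI t l n' i' := by
    rcases hlt with hlt | ⟨he, hlt⟩
    · have : (amLev n j + 1) * B ≤ amLev n' j' * B := Nat.mul_le_mul_right _ hlt
      rw [Nat.add_mul] at this; omega
    · rw [he]; omega
  unfold amEnc
  split_ifs <;> omega

lemma I_inj {t l B n i n' i' : ℕ} (h : amOK t l B n i) (h' : amOK t l B n' i')
    (n3 : n ≠ 3) (n3' : n' ≠ 3)
    (e : amI t l n i = amI t l n' i') : amSame n i n' i' := by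
  obtain ⟨h1, h2, h3, h4, h5⟩ := h
  obtain ⟨h1', h2', h3', h4', h5'⟩ := h'
  have hC : amC t l = l - (t - t / 2) := rfl
  unfold amSame
  unfold amI at e
  split_ifs at e <;> omega

lemma enc_inj {t l B n i j n' i' j' : ℕ} (h : amOK t l B n i) (h' : amOK t l B n' i')
    (hj : j < n) (hj' : j' < n') (n3 : n ≠ 3) (n3' : n' ≠ 3)
    (e : amEnc t l B n i j = amEnc t l B n' i' j') :
    amSame n i n' i' ∧ (n = n' → j = j') := by
  have a1 : amLev n j = amLev n' j' := by
    by_contra hne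
    rcases Nat.lt_or_gt_of_ne hne with hl | hl
    · exact absurd e (enc_lt h (.inl hl)).ne
    · exact absurd e (enc_lt h' (.inl hl)).ne'
  have a2 : amI t l n i = amI t l n' i' := by
    by_contra hne
    rcases Nat.lt_or_gt_of_ne hne with hl | hl
    · exact absurd e (enc_lt h (.inr ⟨a1, hl⟩)).ne
    · exact absurd e (enc_lt h' (.inr ⟨a1.symm, hl⟩)).ne'
  refine ⟨I_inj h h' n3 n3' a2, ?_⟩
  rintro rfl
  unfold amEnc at e
  rw [a1, a2] at e
  unfold amLev at a1
  split_ifs at * <;> omega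

lemma enc_gt (t l B n i j : ℕ) : amK t l < amEnc t l B n i j := by
  unfold amEnc; omega

lemma X_eq_Y_tri {t l n i : ℕ} (n3 : n = 3) : amX t l n i = amY t l n i := by
  simp [amX, amY, n3]

lemma XY_I {t l B n i : ℕ} (h : amOK t l B n i) (hn : n % 2 = 1) (n3 : n ≠ 3) :
    1 ≤ amI t l n i ∧ amI t l n i ≤ l ∧
    ((amX t l n i = 2 * (t + l) + t + 2 * amI t l n i ∧
      amY t l n i + 1 = 2 * (t + l) + t + 2 * amI t l n i) ∨
    (amY t l n i = 2 * (t + l) + t + 2 * amI t l n i ∧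
      amX t l n i + 1 = 2 * (t + l) + t + 2 * amI t l n i)) := by
  obtain ⟨h1, h2, h3, h4, h5⟩ := h
  have h4 := h4 n3 hn
  have hC : amC t l = l - (t - t / 2) := rfl
  rcases amE_cases t l with ⟨he, -⟩ | ⟨he, -⟩ <;>
  simp only [amX, amY, amI, n3, hn, he, if_true, if_false] <;>
  split_ifs <;> omega

lemma X_tri {t l B n i : ℕ} (h : amOK t l B n i) (n3 : n = 3) :
    amX t l n i ≤ 2 * (t + l) + t := by
  obtain ⟨h1, h2, h3, h4, h5⟩ := h
  have h3 := h3 n3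
  simp only [amX, n3, if_true]
  split_ifs <;> omega

lemma XX_inj {t l B n i n' i' : ℕ} (h : amOK t l B n i) (hn : n % 2 = 1)
    (h' : amOK t l B n' i') (hn' : n' % 2 = 1)
    (e : amX t l n i = amX t l n' i') : amSame n i n' i' := by
  by_cases n3 : n = 3 <;> by_cases n3' : n' = 3
  · obtain ⟨h1, h2, h3, h4, h5⟩ := h
    obtain ⟨h1', h2', h3', h4', h5'⟩ := h'
    have h3 := h3 n3
    have h3' := h3' n3'
    refine ⟨?_, by tauto, by omega⟩
    simp only [amX, n3, n3', if_true] at e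
    split_ifs at e <;> omega
  · have := X_tri h n3
    have := (core_bounds h' hn').2.2.2.2.2.2.2 n3'
    omega
  · have := X_tri h' n3'
    have := (core_bounds h hn).2.2.2.2.2.2.2 n3
    omega
  · have := XY_I h hn n3
    have := XY_I h' hn' n3'
    exact I_inj h h' n3 n3' (by omega)

lemma YY_inj {t l B n i n' i' : ℕ} (h : amOK t l B n i) (hn : n % 2 = 1)
    (h' : amOK t l B n' i') (hn' : n' % 2 = 1) (n3 : n ≠ 3) (n3' : n' ≠ 3)
    (e : amY t l n i = amY t l n' i') : amSame n i n' i' := by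
  have := XY_I h hn n3
  have := XY_I h' hn' n3'
  exact I_inj h h' n3 n3' (by omega)

lemma XY_ne {t l B n i n' i' : ℕ} (h : amOK t l B n i) (hn : n % 2 = 1)
    (h' : amOK t l B n' i') (hn' : n' % 2 = 1) (n3' : n' ≠ 3) :
    amX t l n i ≠ amY t l n' i' := by
  intro e
  by_cases n3 : n = 3
  · have := X_tri h n3
    have := (core_bounds h' hn').2.2.2.2.2.2.2 n3'
    omega
  · have a := XY_I h hn n3
    have b := XY_I h' hn' n3'
    have := I_inj h h' n3 n3' (by omega)
    obtain ⟨c1, c2, c3⟩ := this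
    have hX : amX t l n' i' = amX t l n i := by simp [amX, n3, n3', c1]
    omega

lemma PP_inj {t l B n i n' i' : ℕ} (h : amOK t l B n i) (hn : n % 2 = 1)
    (h' : amOK t l B n' i') (hn' : n' % 2 = 1)
    (e : amP t n i = amP t n' i') : amSame n i n' i' := by
  obtain ⟨h1, h2, h3, h4, h5⟩ := h
  obtain ⟨h1', h2', h3', h4', h5'⟩ := h'
  unfold amSame
  unfold amP at e
  split_ifs at e <;> omega

lemma QQ_inj {t l B n i n' i' : ℕ} (h : amOK t l B n i) (hn : n % 2 = 1)
    (h' : amOK t l B n' i') (hn' : n' % 2 = 1)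
    (e : amQ t l n i = amQ t l n' i') : amSame n i n' i' := by
  obtain ⟨h1, h2, h3, h4, h5⟩ := h
  obtain ⟨h1', h2', h3', h4', h5'⟩ := h'
  unfold amSame
  unfold amQ at e
  split_ifs at e <;> omega

lemma PQ_ne {t l B n i n' i' : ℕ} (h : amOK t l B n i) (hn : n % 2 = 1)
    (h' : amOK t l B n' i') (hn' : n' % 2 = 1) :
    amP t n i ≠ amQ t l n' i' := by
  obtain ⟨h1, h2, h3, h4, h5⟩ := h
  obtain ⟨h1', h2', h3', h4', h5'⟩ := h'
  intro e
  unfold amP amQ at e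
  split_ifs at e <;> omega

lemma key_cases {t l B n i j : ℕ} (h : amOK t l B n i) (hj : j < n) :
    (n % 2 = 1 ∧ j = 0 ∧ amKey t l B n i j = amP t n i) ∨
    (n % 2 = 1 ∧ j = n - 1 ∧ amKey t l B n i j = amQ t l n i) ∨
    (n % 2 = 1 ∧ j = 1 ∧ amKey t l B n i j = amX t l n i) ∨
    (n % 2 = 1 ∧ n ≠ 3 ∧ j = n - 2 ∧ amKey t l B n i j = amY t l n i) ∨
    (n ≠ 3 ∧ (n % 2 = 1 → 2 ≤ j ∧ j + 3 ≤ n) ∧ amKey t l B n i j = amEnc t l B n i j) := by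
  have h1 := h.1
  unfold amKey
  by_cases hn : n % 2 = 1
  · by_cases j0 : j = 0
    · left; simp [hn, j0]
    by_cases j1 : j = n - 1
    · right; left; simp only [hn, j1, if_true]; simp; omega
    by_cases j2 : j = 1
    · right; right; left; refine ⟨hn, j2, ?_⟩; rw [if_pos hn, if_neg j0, if_neg j1, if_pos j2]
    by_cases j3 : j = n - 2
    · right; right; right; left; refine ⟨hn, by omega, j3, ?_⟩
      rw [if_pos hn, if_neg j0, if_neg j1, if_neg j2, if_pos j3]
    · right; right; right; right; refine ⟨by omega, by omega, ?_⟩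
      rw [if_pos hn, if_neg j0, if_neg j1, if_neg j2, if_neg j3]
  · right; right; right; right
    refine ⟨by omega, by omega, ?_⟩
    rw [if_neg hn]

lemma key_inj {t l B n i j n' i' j' : ℕ} (h : amOK t l B n i) (h' : amOK t l B n' i')
    (hj : j < n) (hj' : j' < n')
    (e : amKey t l B n i j = amKey t l B n' i' j') :
    amSame n i n' i' ∧ (n = n' → j = j') := by
  have g := enc_gt t l B n i j
  have g' := enc_gt t l B n' i' j'
  have hK : amK t l = 3 * t + 4 * l := rfl
  rcases key_cases h hj with ⟨hn, a, k⟩ | ⟨hn, a, k⟩ | ⟨hn, a, k⟩ | ⟨hn, n3, a, k⟩ | ⟨n3, a, k⟩ <;>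
  rcases key_cases h' hj' with
    ⟨hn', a', k'⟩ | ⟨hn', a', k'⟩ | ⟨hn', a', k'⟩ | ⟨hn', n3', a', k'⟩ | ⟨n3', a', k'⟩ <;>
  rw [k, k'] at e <;>
  first
  | exact ⟨PP_inj h hn h' hn' e, by omega⟩
  | exact ⟨QQ_inj h hn h' hn' e, by omega⟩
  | exact ⟨XX_inj h hn h' hn' e, by omega⟩
  | exact ⟨YY_inj h hn h' hn' n3 n3' e, by omega⟩
  | exact enc_inj h h' hj hj' n3 n3' e
  | exact absurd e (PQ_ne h hn h' hn')
  | exact absurd e.symm (PQ_ne h' hn' h hn)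
  | exact absurd e (XY_ne h hn h' hn' n3')
  | exact absurd e.symm (XY_ne h' hn' h hn n3)
  | (have b := core_bounds h hn
     have b' := core_bounds h' hn'
     omega)
  | (have b := core_bounds h hn
     omega)
  | (have b' := core_bounds h' hn'
     omega)

lemma key_pos {t l B n i j : ℕ} (h : amOK t l B n i) (hj : j < n) :
    1 ≤ amKey t l B n i j := by
  have g := enc_gt t l B n i j
  rcases key_cases h hj with ⟨hn, a, k⟩ | ⟨hn, a, k⟩ | ⟨hn, a, k⟩ | ⟨hn, n3, a, k⟩ | ⟨n3, a, k⟩ <;>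
  first
  | (have b := core_bounds h hn
     omega)
  | omega

/-- monotonicity of keys on levels at least one -/
lemma key_lt {t l B n i j n' i' j' : ℕ} (h : amOK t l B n i) (h' : amOK t l B n' i')
    (hj : j < n) (hj' : j' < n') (n3 : n ≠ 3) (n3' : n' ≠ 3)
    (hl : 1 ≤ amLev n j)
    (hlt : amLev n j < amLev n' j' ∨
      (amLev n j = amLev n' j' ∧ amI t l n i < amI t l n' i')) :
    amKey t l B n i j < amKey t l B n' i' j' := by
  have e := enc_lt h hlt
  have g := enc_gt t l B n i j
  have g' := enc_gt t l B n' i' j'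
  have hK : amK t l = 3 * t + 4 * l := rfl
  have h1 := h.1
  have h1' := h'.1
  have hi' := h'.2.1
  rcases key_cases h hj with ⟨hn, a, k⟩ | ⟨hn, a, k⟩ | ⟨hn, a, k⟩ | ⟨hn, -, a, k⟩ | ⟨-, a, k⟩ <;>
  rcases key_cases h' hj' with
    ⟨hn', a', k'⟩ | ⟨hn', a', k'⟩ | ⟨hn', a', k'⟩ | ⟨hn', -, a', k'⟩ | ⟨-, a', k'⟩ <;>
  rw [k, k'] <;>
  first
  | exact e
  | (exfalso
     have : amLev n j = min j (n - 1 - j) := if_pos hn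
     omega)
  | (exfalso
     have : amLev n' j' = min j' (n' - 1 - j') := if_pos hn'
     omega)
  | (have b := core_bounds h hn
     omega)
  | (have b := XY_I h hn n3
     have b' := XY_I h' hn' n3'
     have : amLev n j = min j (n - 1 - j) := if_pos hn
     have : amLev n' j' = min j' (n' - 1 - j') := if_pos hn'
     omega)
  | (exfalso
     have b' := XY_I h' hn' n3'
     have e1 : amLev n' j' = min j' (n' - 1 - j') := if_pos hn'
     by_cases hn : n % 2 = 1
     · have e2 : amLev n j = min j (n - 1 - j) := if_pos hn
       omega
     · have e2 : amLev n j = 1 + min j (n - j) := if_neg hn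
       have e3 : amI t l n i = l + i := if_neg hn
       have := h.2.1
       omega)

lemma key_cover {t l r : ℕ} (hr : 1 ≤ r) (hr' : r ≤ amK t l) :
    (∃ i, 1 ≤ i ∧ i ≤ t ∧ ∀ B, ∃ j < 3, amKey t l B 3 i j = r) ∨
    (∃ i, 1 ≤ i ∧ i ≤ l ∧ ∀ B n, 5 ≤ n → n % 2 = 1 → ∃ j < n, amKey t l B n i j = r) := by
  have hK : amK t l = 3 * t + 4 * l := rfl
  have hC : amC t l = l - (t - t / 2) := rfl
  by_cases c1 : r ≤ t
  · left; refine ⟨r, hr, c1, fun B => ⟨0, by norm_num, ?_⟩⟩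
    simp [amKey, amP]
  by_cases c2 : r ≤ 2 * t
  · left; refine ⟨2 * t + 1 - r, by omega, by omega, fun B => ⟨2, by norm_num, ?_⟩⟩
    simp [amKey, amQ]; omega
  by_cases c3 : r ≤ 2 * t + l
  · right; refine ⟨r - 2 * t, by omega, by omega, fun B n hn hn' => ⟨0, by omega, ?_⟩⟩
    have : n ≠ 3 := by omega
    simp [amKey, amP, hn', this]; omega
  by_cases c4 : r ≤ 2 * (t + l)
  · right; refine ⟨2 * (t + l) + 1 - r, by omega, by omega, fun B n hn hn' => ⟨n - 1, by omega, ?_⟩⟩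
    have h0 : n ≠ 3 := by omega
    have h1 : n - 1 ≠ 0 := by omega
    simp only [amKey, amQ, hn', h0, h1, if_true, if_false]; omega
  by_cases c5 : r ≤ 2 * (t + l) + t
  · left
    by_cases p : r % 2 = 0
    · refine ⟨(r - 2 * (t + l)) / 2, by omega, by omega, fun B => ⟨1, by norm_num, ?_⟩⟩
      have : (r - 2 * (t + l)) / 2 ≤ t / 2 := by omega
      simp [amKey, amX]
      rw [if_pos this]; omega
    · refine ⟨(r - 2 * (t + l) + 1) / 2 + t / 2, by omega, by omega, fun B => ⟨1, by norm_num, ?_⟩⟩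
      have : ¬ ((r - 2 * (t + l) + 1) / 2 + t / 2 ≤ t / 2) := by omega
      simp only [amKey, amX]
      norm_num
      rw [if_neg (by omega)]; omega
  · right
    have hx : ∃ b, 1 ≤ b ∧ b ≤ l ∧ (r = 2 * (t + l) + t + 2 * b ∨ r + 1 = 2 * (t + l) + t + 2 * b) :=
      ⟨(r - (2 * (t + l) + t) + 1) / 2, by omega, by omega, by omega⟩
    obtain ⟨b, b1, b2, hb⟩ := hx
    have hi : ∃ i, 1 ≤ i ∧ i ≤ l ∧ (if i ≤ amC t l then amC t l + 1 - i else i) = b := by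
      by_cases hbc : b ≤ amC t l
      · refine ⟨amC t l + 1 - b, by omega, by omega, ?_⟩
        rw [if_pos (by omega)]; omega
      · exact ⟨b, b1, b2, if_neg hbc⟩
    obtain ⟨i, i1, i2, hi⟩ := hi
    refine ⟨i, i1, i2, fun B n hn hn' => ?_⟩
    have n3 : n ≠ 3 := by omega
    have ok : amOK t l (l + i + 1) n i := ⟨by omega, i1, by omega, by omega, by omega⟩
    have hI : amI t l n i = b := by rw [← hi]; exact if_pos hn'
    have kX : amKey t l B n i 1 = amX t l n i := by
      unfold amKey
      rw [if_pos hn', if_neg (by omega), if_neg (by omega), if_pos rfl]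
    have kY : amKey t l B n i (n - 2) = amY t l n i := by
      unfold amKey
      rw [if_pos hn', if_neg (by omega), if_neg (by omega), if_neg (by omega), if_pos rfl]
    have := XY_I ok hn' n3
    rw [hI] at this
    by_cases hc : r = amX t l n i
    · exact ⟨1, by omega, by omega⟩
    · exact ⟨n - 2, by omega, by omega⟩

/-- sign of edge `j` -/
def amSg (t l n i j : ℕ) : ℤ := if (amS t l n i + j) % 2 = 0 then 1 else -1

/-- cyclic predecessor -/
def amPred (n j : ℕ) : ℕ := if j = 0 then n - 1 else j - 1

/-- vertex sum at vertex `j` -/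
def amVal (R : ℕ → ℕ) (t l B n i j : ℕ) : ℤ :=
  amSg t l n i (amPred n j) * (R (amKey t l B n i (amPred n j)) : ℤ) -
    amSg t l n i j * (R (amKey t l B n i j) : ℤ)

/-- signed value -/
def amSV (b M : ℕ) : ℤ := if b = 0 then (M : ℤ) else -(M : ℤ)

lemma amSV_inj {b M b' M' : ℕ} (hb : b < 2) (hb' : b' < 2) (hM : 0 < M) (hM' : 0 < M')
    (e : amSV b M = amSV b' M') : b = b' ∧ M = M' := by
  unfold amSV at e
  split_ifs at e <;> omega

lemma amS_lt (t l n i : ℕ) : amS t l n i < 2 := by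
  unfold amS; split_ifs <;> omega

/-- The data of a vertex all whose edges have level at least one. -/
def amD (R : ℕ → ℕ) (t l B n i j b M : ℕ) : Prop :=
  n ≠ 3 ∧ b = (amS t l n i + j + 1) % 2 ∧ ∃ lo hi, lo < n ∧ hi < n ∧
    M = R (amKey t l B n i lo) + R (amKey t l B n i hi) ∧ amLev n hi = amLev n lo + 1 ∧
    1 ≤ amLev n lo ∧
    (n % 2 = 1 → j = amLev n lo + 1 ∨ j + 1 + amLev n lo = n) ∧
    (n % 2 = 0 → j = amLev n lo ∨ j + amLev n lo = n + 1 ∨ (j = 0 ∧ amLev n lo = 1))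

lemma vert_cases {R : ℕ → ℕ} {t l B n i j : ℕ} (h : amOK t l B n i) (hj : j < n)
    (hR : ∀ r, r ≤ amK t l → R r = r)
    (hR' : ∀ j < n, 0 < R (amKey t l B n i j)) :
    ∃ b M : ℕ, b < 2 ∧ 0 < M ∧ amVal R t l B n i j = amSV b M ∧
    ((n % 2 = 1 ∧ j = 0 ∧ b = amS t l n i ∧ M + amP t n i = amQ t l n i) ∨
     (n % 2 = 1 ∧ j = 1 ∧ b = amS t l n i ∧ M = amP t n i + amX t l n i) ∨
     (n % 2 = 1 ∧ j + 1 = n ∧ b + amS t l n i = 1 ∧ M = amQ t l n i + amY t l n i) ∨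
     amD R t l B n i j b M) := by
  have hS := amS_lt t l n i
  have h1 := h.1
  by_cases hn : n % 2 = 1
  · have cb := core_bounds h hn
    have hK : amK t l = 3 * t + 4 * l := rfl
    have k0 : amKey t l B n i 0 = amP t n i := by simp [amKey, hn]
    have k1 : amKey t l B n i 1 = amX t l n i := by
      unfold amKey; rw [if_pos hn, if_neg (by omega), if_neg (by omega), if_pos rfl]
    have kn1 : amKey t l B n i (n - 1) = amQ t l n i := by
      unfold amKey; rw [if_pos hn, if_neg (by omega), if_pos rfl]
    have kn2 : amKey t l B n i (n - 2) = amY t l n i := by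
      by_cases n3 : n = 3
      · rw [← X_eq_Y_tri n3, ← k1]; congr 1; omega
      · unfold amKey
        rw [if_pos hn, if_neg (by omega), if_neg (by omega), if_neg (by omega), if_pos rfl]
    have rP := hR (amP t n i) (by omega)
    have rQ := hR (amQ t l n i) (by omega)
    have rX := hR (amX t l n i) (by omega)
    have rY := hR (amY t l n i) (by omega)
    by_cases j0 : j = 0
    · refine ⟨amS t l n i, amQ t l n i - amP t n i, hS, by omega, ?_,
        .inl ⟨hn, j0, rfl, by omega⟩⟩
      have p : amPred n j = n - 1 := if_pos j0
      unfold amVal amSg amSV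
      rw [p, kn1, j0, k0, rP, rQ]
      split_ifs <;> omega
    by_cases j1 : j = 1
    · refine ⟨amS t l n i, amP t n i + amX t l n i, hS, by omega, ?_,
        .inr (.inl ⟨hn, j1, rfl, rfl⟩)⟩
      have p : amPred n j = 0 := by unfold amPred; rw [if_neg j0]; omega
      unfold amVal amSg amSV
      rw [p, j1, k0, k1, rP, rX]
      split_ifs <;> omega
    by_cases j2 : j = n - 1
    · refine ⟨1 - amS t l n i, amQ t l n i + amY t l n i, by omega, by omega, ?_,
        .inr (.inr (.inl ⟨hn, by omega, by omega, rfl⟩))⟩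
      have p : amPred n j = n - 2 := by unfold amPred; rw [if_neg j0]; omega
      unfold amVal amSg amSV
      rw [p, j2, kn1, kn2, rQ, rY]
      split_ifs <;> omega
    have p : amPred n j = j - 1 := if_neg j0
    have r1 := hR' (j - 1) (by omega)
    have r2 := hR' j hj
    refine ⟨(amS t l n i + j + 1) % 2, R (amKey t l B n i (j - 1)) + R (amKey t l B n i j),
      by omega, by omega, ?_, .inr (.inr (.inr ⟨by omega, rfl, ?_⟩))⟩
    · unfold amVal amSg amSV
      rw [p]
      split_ifs <;> omega
    · have lev : ∀ x, amLev n x = min x (n - 1 - x) := fun x => if_pos hn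
      by_cases c : 2 * j < n
      · refine ⟨j - 1, j, by omega, by omega, rfl, ?_⟩
        simp only [lev]; omega
      · refine ⟨j, j - 1, by omega, by omega, by omega, ?_⟩
        simp only [lev]; omega
  · have lev : ∀ x, amLev n x = 1 + min x (n - x) := fun x => if_neg hn
    have pl : amPred n j < n := by unfold amPred; split_ifs <;> omega
    have r1 := hR' (amPred n j) pl
    have r2 := hR' j hj
    refine ⟨(amS t l n i + j + 1) % 2, R (amKey t l B n i (amPred n j)) + R (amKey t l B n i j),
      by omega, by omega, ?_, .inr (.inr (.inr ⟨by omega, rfl, ?_⟩))⟩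
    · unfold amVal amSg amSV
      have : amPred n j % 2 = (j + 1) % 2 := by unfold amPred; split_ifs <;> omega
      split_ifs <;> omega
    · by_cases c : 1 ≤ j ∧ 2 * j ≤ n
      · have p : amPred n j = j - 1 := if_neg (by omega)
        refine ⟨amPred n j, j, by omega, by omega, rfl, ?_⟩
        simp only [lev, p]; omega
      · refine ⟨j, amPred n j, by omega, by omega, by omega, ?_⟩
        by_cases j0 : j = 0
        · have p : amPred n j = n - 1 := if_pos j0
          simp only [lev, p]; omega
        · have p : amPred n j = j - 1 := if_neg j0
          simp only [lev, p]; omega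

lemma D_large {R : ℕ → ℕ} {t l B n i j b M : ℕ} (h : amOK t l B n i)
    (hR : ∀ r, r ≤ amK t l → R r = r)
    (hgt : ∀ j < n, amK t l < amKey t l B n i j → amK t l < R (amKey t l B n i j))
    (hD : amD R t l B n i j b M) : 2 * (t + l) + amK t l < M := by
  obtain ⟨n3, -, lo, hi, hlo, hhi, rfl, e, e1, -, -⟩ := hD
  have h1 := h.1
  have hK : amK t l = 3 * t + 4 * l := rfl
  have a2 : amK t l < R (amKey t l B n i hi) := by
    apply hgt hi hhi
    have g := enc_gt t l B n i hi
    rcases key_cases h hhi with ⟨hn, a, k⟩ | ⟨hn, a, k⟩ | ⟨hn, a, k⟩ | ⟨hn, n3, a, k⟩ | ⟨n3, a, k⟩ <;>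
    first
    | omega
    | (exfalso
       have : amLev n hi = min hi (n - 1 - hi) := if_pos hn
       omega)
  have a1 : 2 * (t + l) ≤ R (amKey t l B n i lo) := by
    have g := enc_gt t l B n i lo
    have hg := hgt lo hlo
    have hr := hR (amKey t l B n i lo)
    rcases key_cases h hlo with ⟨hn, a, k⟩ | ⟨hn, a, k⟩ | ⟨hn, a, k⟩ | ⟨hn, n3, a, k⟩ | ⟨n3, a, k⟩ <;>
    first
    | omega
    | (have cb := core_bounds h hn
       omega)
    | (exfalso
       have : amLev n lo = min lo (n - 1 - lo) := if_pos hn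
       omega)
  omega

lemma DD_lt {R : ℕ → ℕ} {t l B n i M n' i' M' : ℕ}
    (h : amOK t l B n i) (h' : amOK t l B n' i')
    (hmono : ∀ x < n, ∀ y < n', amKey t l B n i x < amKey t l B n' i' y →
      R (amKey t l B n i x) < R (amKey t l B n' i' y))
    (n3 : n ≠ 3) (n3' : n' ≠ 3) {lo hi lo' hi' : ℕ} (hlo : lo < n) (hhi : hi < n)
    (hlo' : lo' < n') (hhi' : hi' < n')
    (eM : M = R (amKey t l B n i lo) + R (amKey t l B n i hi))
    (eM' : M' = R (amKey t l B n' i' lo') + R (amKey t l B n' i' hi'))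
    (e : amLev n hi = amLev n lo + 1) (e' : amLev n' hi' = amLev n' lo' + 1)
    (g : 1 ≤ amLev n lo)
    (hlt : amLev n lo < amLev n' lo' ∨
      (amLev n lo = amLev n' lo' ∧ amI t l n i < amI t l n' i')) : M < M' := by
  have a := hmono lo hlo lo' hlo' (key_lt h h' hlo hlo' n3 n3' g hlt)
  have b := hmono hi hhi hi' hhi' (key_lt h h' hhi hhi' n3 n3' (by omega) (by omega))
  omega

lemma vert_sep {R : ℕ → ℕ} {t l B n i j n' i' j' : ℕ}
    (h : amOK t l B n i) (h' : amOK t l B n' i') (hj : j < n) (hj' : j' < n')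
    (hR : ∀ r, r ≤ amK t l → R r = r)
    (hgt : ∀ j < n, amK t l < amKey t l B n i j → amK t l < R (amKey t l B n i j))
    (hgt' : ∀ j < n', amK t l < amKey t l B n' i' j → amK t l < R (amKey t l B n' i' j))
    (hmono : ∀ x < n, ∀ y < n', amKey t l B n i x < amKey t l B n' i' y →
      R (amKey t l B n i x) < R (amKey t l B n' i' y))
    (hmono' : ∀ x < n', ∀ y < n, amKey t l B n' i' x < amKey t l B n i y →
      R (amKey t l B n' i' x) < R (amKey t l B n i y))
    (hsame : amSame n i n' i' → n = n')
    (e : amVal R t l B n i j = amVal R t l B n' i' j') : amSame n i n' i' ∧ j = j' := by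
  have pos : ∀ j < n, 0 < R (amKey t l B n i j) := by
    intro x hx
    have := key_pos (t := t) (l := l) h hx
    by_cases c : amKey t l B n i x ≤ amK t l
    · rw [hR _ c]; omega
    · have := hgt x hx (by omega); omega
  have pos' : ∀ j < n', 0 < R (amKey t l B n' i' j) := by
    intro x hx
    have := key_pos (t := t) (l := l) h' hx
    by_cases c : amKey t l B n' i' x ≤ amK t l
    · rw [hR _ c]; omega
    · have := hgt' x hx (by omega); omega
  obtain ⟨b, M, hb, hM, hv, hc⟩ := vert_cases h hj hR pos
  obtain ⟨b', M', hb', hM', hv', hc'⟩ := vert_cases h' hj' hR pos'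
  rw [hv, hv'] at e
  obtain ⟨rfl, rfl⟩ := amSV_inj hb hb' hM hM' e
  rcases hc with ⟨hn, a1, a2, a3⟩ | ⟨hn, a1, a2, a3⟩ | ⟨hn, a1, a2, a3⟩ | hD <;>
  rcases hc' with ⟨hn', a1', a2', a3'⟩ | ⟨hn', a1', a2', a3'⟩ | ⟨hn', a1', a2', a3'⟩ | hD'
  · exact ⟨pass_sep h hn h' hn' (by omega) (by omega), by omega⟩
  · have := core_bounds h hn; have := core_bounds h' hn'; omega
  · have := core_bounds h hn; have := core_bounds h' hn'; omega
  · have := core_bounds h hn; have := D_large h' hR hgt' hD'; omega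
  · have := core_bounds h hn; have := core_bounds h' hn'; omega
  · exact ⟨sep_PP h hn h' hn' (by omega) (by omega), by omega⟩
  · exact (sep_PQ h hn h' hn' (by omega) (by omega)).elim
  · have := core_bounds h hn; have := D_large h' hR hgt' hD'; omega
  · have := core_bounds h hn; have := core_bounds h' hn'; omega
  · exact (sep_PQ h' hn' h hn (by omega) (by omega)).elim
  · have sm := sep_QQ h hn h' hn' (by omega) (by omega)
    have := hsame sm
    exact ⟨sm, by omega⟩
  · have := core_bounds h hn; have := D_large h' hR hgt' hD'; omega
  · have := core_bounds h' hn'; have := D_large h hR hgt hD; omega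
  · have := core_bounds h' hn'; have := D_large h hR hgt hD; omega
  · have := core_bounds h' hn'; have := D_large h hR hgt hD; omega
  · obtain ⟨n3, sb, lo, hi, hlo, hhi, eM, e1, g1, q1, q2⟩ := hD
    obtain ⟨n3', sb', lo', hi', hlo', hhi', eM', e1', g1', q1', q2'⟩ := hD'
    have f1 := DD_lt h h' hmono n3 n3' hlo hhi hlo' hhi' eM eM' e1 e1' g1
    have f2 := DD_lt h' h hmono' n3' n3 hlo' hhi' hlo hhi eM' eM e1' e1 g1'
    have eL : amLev n lo = amLev n' lo' := by
      by_contra hne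
      rcases Nat.lt_or_gt_of_ne hne with hl | hl
      · exact absurd (f1 (.inl hl)) (lt_irrefl _)
      · exact absurd (f2 (.inl hl)) (lt_irrefl _)
    have eI : amI t l n i = amI t l n' i' := by
      by_contra hne
      rcases Nat.lt_or_gt_of_ne hne with hl | hl
      · exact absurd (f1 (.inr ⟨eL, hl⟩)) (lt_irrefl _)
      · exact absurd (f2 (.inr ⟨eL.symm, hl⟩)) (lt_irrefl _)
    have sm := I_inj h h' n3 n3' eI
    have hnn := hsame sm
    have hii := sm.1
    subst hnn
    subst hii
    refine ⟨sm, ?_⟩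
    rcases Nat.mod_two_eq_zero_or_one n with p | p
    · have q2 := q2 p
      have q2' := q2' p
      omega
    · have q1 := q1 p
      have q1' := q1' p
      omega

lemma exists_index {C : Type*} (S : Finset C) :
    ∃ f : C → ℕ, Set.BijOn f ↑S (Set.Icc 1 S.card) := by
  classical
  let e := S.equivFin
  refine ⟨fun c => if h : c ∈ S then (e ⟨c, h⟩ : ℕ) + 1 else 0, ?_, ?_, ?_⟩
  · intro c hc
    have hc' : c ∈ S := hc
    have := (e ⟨c, hc'⟩).2
    simp only [hc', dif_pos, Set.mem_Icc]
    omega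
  · intro c hc d hd h
    have hc' : c ∈ S := hc
    have hd' : d ∈ S := hd
    simp only [hc', hd', dif_pos] at h
    have h2 : e ⟨c, hc'⟩ = e ⟨d, hd'⟩ := Fin.ext (by omega)
    have h3 := e.injective h2
    exact congrArg Subtype.val h3
  · intro r hr
    have h1 : 1 ≤ r := hr.1
    have h2 : r ≤ S.card := hr.2
    refine ⟨e.symm ⟨r - 1, by omega⟩, (e.symm ⟨r - 1, by omega⟩).2, ?_⟩
    simp only [Finset.coe_mem, dif_pos, Subtype.coe_eta, Equiv.apply_symm_apply]
    omega

/-- number of elements with key at most `r` -/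
def amRank {V : Type*} [Fintype V] (key : V → ℕ) (r : ℕ) : ℕ :=
  (univ.filter (fun u => key u ≤ r)).card

lemma amRank_lt {V : Type*} [Fintype V] (key : V → ℕ) {r : ℕ} {v : V} (h : r < key v) :
    amRank key r < amRank key (key v) := by
  apply Finset.card_lt_card
  rw [Finset.ssubset_iff_of_subset]
  · exact ⟨v, by simp, by simpa using h⟩
  · intro u hu
    simp only [mem_filter, mem_univ, true_and] at hu ⊢
    omega

lemma amRank_eq {V : Type*} [Fintype V] (key : V → ℕ) (inj : Function.Injective key)
    (pos : ∀ v, 1 ≤ key v) {K : ℕ} (cov : ∀ r, 1 ≤ r → r ≤ K → ∃ v, key v = r)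
    {r : ℕ} (hr : r ≤ K) : amRank key r = r := by
  classical
  unfold amRank
  rw [← Finset.card_image_of_injective _ inj]
  have : (univ.filter (fun u => key u ≤ r)).image key = Finset.Icc 1 r := by
    ext x
    simp only [mem_image, mem_filter, mem_univ, true_and, Finset.mem_Icc]
    constructor
    · rintro ⟨v, h, rfl⟩
      exact ⟨pos v, h⟩
    · rintro ⟨h1, h2⟩
      obtain ⟨v, rfl⟩ := cov x h1 (by omega)
      exact ⟨v, h2, rfl⟩
  rw [this]; simp

lemma amRank_bij {V : Type*} [Fintype V] (key : V → ℕ) (inj : Function.Injective key) :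
    Set.BijOn (fun v => (amRank key (key v) : ℤ)) Set.univ (Set.Icc 1 (Fintype.card V : ℤ)) := by
  classical
  have inj2 : Function.Injective (fun v => (amRank key (key v) : ℤ)) := by
    intro u v h
    have h' : amRank key (key u) = amRank key (key v) := Int.ofNat.inj h
    apply inj
    rcases lt_trichotomy (key u) (key v) with a | a | a
    · have := amRank_lt key a; omega
    · exact a
    · have := amRank_lt key a; omega
  have maps : ∀ v, (amRank key (key v) : ℤ) ∈ Finset.Icc 1 (Fintype.card V : ℤ) := by
    intro v
    have h1 : 0 < amRank key (key v) := Finset.card_pos.mpr ⟨v, by simp⟩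
    have h2 : amRank key (key v) ≤ Fintype.card V := Finset.card_le_univ _
    rw [Finset.mem_Icc]; constructor <;> omega
  have im : univ.image (fun v => (amRank key (key v) : ℤ)) = Finset.Icc 1 (Fintype.card V : ℤ) := by
    apply Finset.eq_of_subset_of_card_le
    · intro x hx
      obtain ⟨v, -, rfl⟩ := Finset.mem_image.mp hx
      exact maps v
    · rw [Finset.card_image_of_injective _ inj2]; simp
  refine ⟨fun v _ => by simpa using maps v, inj2.injOn, ?_⟩
  intro x hx
  have : x ∈ univ.image (fun v => (amRank key (key v) : ℤ)) := by rw [im]; simpa using hx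
  obtain ⟨v, -, h⟩ := Finset.mem_image.mp this
  exact ⟨v, trivial, h⟩

lemma amSg_pm (t l n i j : ℕ) : amSg t l n i j = 1 ∨ amSg t l n i j = -1 := by
  unfold amSg; split_ifs <;> simp

theorem exists_labeling {V C : Type*} [Fintype V] [Fintype C] (n : C → ℕ) (hn : ∀ c, 3 ≤ n c)
    (cy : V → C) (jj : V → ℕ) (hjj : ∀ v, jj v < n (cy v))
    (inj : ∀ u v, cy u = cy v → jj u = jj v → u = v)
    (surj : ∀ c j, j < n c → ∃ v, cy v = c ∧ jj v = j)
    (pr : V → V) (hcy : ∀ v, cy (pr v) = cy v)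
    (hpr : ∀ v, jj (pr v) = amPred (n (cy v)) (jj v)) :
    ∃ lab s : V → ℤ, (∀ v, s v = 1 ∨ s v = -1) ∧
      Set.BijOn lab Set.univ (Set.Icc 1 (Fintype.card V : ℤ)) ∧
      Function.Injective (fun v => s (pr v) * lab (pr v) - s v * lab v) := by
  classical
  set S3 : Finset C := univ.filter (fun c => n c = 3) with hS3
  set So : Finset C := univ.filter (fun c => n c ≠ 3 ∧ n c % 2 = 1) with hSo
  set Se : Finset C := univ.filter (fun c => n c ≠ 3 ∧ ¬ n c % 2 = 1) with hSe
  obtain ⟨f3, b3⟩ := exists_index S3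
  obtain ⟨fo, bo⟩ := exists_index So
  obtain ⟨fe, be⟩ := exists_index Se
  set idx : C → ℕ := fun c => if n c = 3 then f3 c else if n c % 2 = 1 then fo c else fe c
    with hidx
  set t := S3.card with ht
  set l := So.card with hl
  set B := l + Fintype.card C + 1 with hB
  have m3 : ∀ c, n c = 3 → c ∈ (S3 : Set C) := by intro c h; simp [hS3, h]
  have mo : ∀ c, n c ≠ 3 → n c % 2 = 1 → c ∈ (So : Set C) := by intro c h h'; simp [hSo, h, h']
  have me : ∀ c, n c ≠ 3 → ¬ n c % 2 = 1 → c ∈ (Se : Set C) := by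
    intro c h h'; simp only [hSe, coe_filter, mem_univ, true_and]; exact ⟨h, h'⟩
  have c3 : t ≤ Fintype.card C := Finset.card_le_univ _
  have co : l ≤ Fintype.card C := Finset.card_le_univ _
  have ce : Se.card ≤ Fintype.card C := Finset.card_le_univ _
  have ok : ∀ c, amOK t l B (n c) (idx c) := by
    intro c
    have h3 := hn c
    unfold amOK
    by_cases a : n c = 3
    · obtain ⟨u, v⟩ := b3.mapsTo (m3 c a)
      have : idx c = f3 c := by simp [hidx, a]
      rw [this]
      refine ⟨h3, u, fun _ => v, fun h => absurd a h, by omega⟩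
    · by_cases b : n c % 2 = 1
      · obtain ⟨u, v⟩ := bo.mapsTo (mo c a b)
        have : idx c = fo c := by simp [hidx, a, b]
        rw [this]
        refine ⟨h3, u, fun h => absurd h a, fun _ _ => v, by omega⟩
      · obtain ⟨u, v⟩ := be.mapsTo (me c a b)
        have : idx c = fe c := by simp [hidx, a, b]
        rw [this]
        refine ⟨h3, u, fun h => absurd h a, fun _ h => absurd h b, by omega⟩
  have same : ∀ c d, amSame (n c) (idx c) (n d) (idx d) → c = d := by
    rintro c d ⟨e1, e2, e3⟩
    by_cases a : n c = 3
    · have a' := e2.mp a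
      apply b3.injOn (m3 c a) (m3 d a')
      simpa [hidx, a, a'] using e1
    · have a' : n d ≠ 3 := fun h => a (e2.mpr h)
      by_cases b : n c % 2 = 1
      · have b' : n d % 2 = 1 := by omega
        apply bo.injOn (mo c a b) (mo d a' b')
        simpa [hidx, a, a', b, b'] using e1
      · have b' : ¬ n d % 2 = 1 := by omega
        apply be.injOn (me c a b) (me d a' b')
        simpa only [hidx, a, a', b, b', if_false] using e1
  set key : V → ℕ := fun v => amKey t l B (n (cy v)) (idx (cy v)) (jj v) with hkey
  have kinj : Function.Injective key := by
    intro u v e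
    obtain ⟨e1, e2⟩ := key_inj (ok (cy u)) (ok (cy v)) (hjj u) (hjj v) e
    have e3 := same _ _ e1
    exact inj u v e3 (e2 (by rw [e3]))
  have kpos : ∀ v, 1 ≤ key v := fun v => key_pos (ok (cy v)) (hjj v)
  have kcov : ∀ r, 1 ≤ r → r ≤ amK t l → ∃ v, key v = r := by
    intro r h1 h2
    rcases key_cover h1 h2 with ⟨i, i1, i2, H⟩ | ⟨i, i1, i2, H⟩
    · obtain ⟨c, hc, hci⟩ := b3.surjOn ⟨i1, i2⟩
      have a : n c = 3 := by simpa [hS3] using hc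
      obtain ⟨j, hj, hk⟩ := H B
      obtain ⟨v, rfl, rfl⟩ := surj c j (by omega)
      refine ⟨v, ?_⟩
      have : idx (cy v) = i := by simp [hidx, a, hci]
      simp only [hkey]
      rw [this, a, hk]
    · obtain ⟨c, hc, hci⟩ := bo.surjOn ⟨i1, i2⟩
      have a : n c ≠ 3 ∧ n c % 2 = 1 := by simpa [hSo] using hc
      have := hn c
      obtain ⟨j, hj, hk⟩ := H B (n c) (by omega) a.2
      obtain ⟨v, rfl, rfl⟩ := surj c j hj
      refine ⟨v, ?_⟩
      have : idx (cy v) = i := by simp [hidx, a.1, a.2, hci]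
      simp only [hkey]
      rw [this, hk]
  have hR : ∀ r, r ≤ amK t l → amRank key r = r := fun r hr => amRank_eq key kinj kpos kcov hr
  have kgt : ∀ c, ∀ j < n c, amK t l < amKey t l B (n c) (idx c) j →
      amK t l < amRank key (amKey t l B (n c) (idx c) j) := by
    intro c j hj h
    obtain ⟨v, rfl, rfl⟩ := surj c j hj
    have := amRank_lt key (v := v) h
    rwa [hR _ le_rfl] at this
  have kmono : ∀ c d, ∀ x < n c, ∀ y < n d,
      amKey t l B (n c) (idx c) x < amKey t l B (n d) (idx d) y →
      amRank key (amKey t l B (n c) (idx c) x) < amRank key (amKey t l B (n d) (idx d) y) := by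
    intro c d x hx y hy h
    obtain ⟨v, rfl, rfl⟩ := surj d y hy
    exact amRank_lt key (v := v) h
  refine ⟨fun v => (amRank key (key v) : ℤ),
    fun v => amSg t l (n (cy v)) (idx (cy v)) (jj v), fun v => amSg_pm _ _ _ _ _,
    amRank_bij key kinj, ?_⟩
  intro u v e
  have e' : amVal (amRank key) t l B (n (cy u)) (idx (cy u)) (jj u) =
      amVal (amRank key) t l B (n (cy v)) (idx (cy v)) (jj v) := by
    simpa only [hkey, amVal, hcy, hpr] using e
  obtain ⟨g1, g2⟩ := vert_sep (ok (cy u)) (ok (cy v)) (hjj u) (hjj v) hR (kgt _) (kgt _)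
    (kmono _ _) (kmono _ _) (fun h => by rw [same _ _ h]) e'
  exact inj u v (same _ _ g1) g2

theorem exists_cycles {V : Type*} [Fintype V] [DecidableEq V]
    (G : SimpleGraph V) [DecidableRel G.Adj] (hreg : ∀ v : V, G.degree v = 2)
    (c : G.ConnectedComponent) :
    ∃ (n : ℕ) (w : ℕ → V), 3 ≤ n ∧ (∀ i j, i < n → j < n → w i = w j → i = j) ∧ w n = w 0 ∧
      (∀ j < n, G.Adj (w j) (w (j + 1))) ∧
      (∀ v, G.connectedComponentMk v = c ↔ ∃ j < n, w j = v) := by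
  classical
  have cyc : G.IsCycles := by
    intro v _
    have := hreg v
    rw [← SimpleGraph.card_neighborSet_eq_degree] at this
    rw [← Nat.card_coe_set_eq, Nat.card_eq_fintype_card, this]
  obtain ⟨v, rfl⟩ := c.exists_rep
  have hne : (G.neighborSet v).Nonempty := by
    have h : 0 < G.degree v := by rw [hreg v]; norm_num
    obtain ⟨w, hw⟩ := (G.degree_pos_iff_exists_adj v).mp h
    exact ⟨w, hw⟩
  obtain ⟨p, hp, hs⟩ := cyc.exists_cycle_toSubgraph_verts_eq_connectedComponentSupp
    (c := G.connectedComponentMk v) (v := v) rfl hne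
  have h3 := hp.three_le_length
  refine ⟨p.length, p.getVert, h3, ?_, by simp, ?_, ?_⟩
  · intro i j hi hj e
    apply hp.getVert_injOn' _ _ e
    · change i ≤ p.length - 1
      omega
    · change j ≤ p.length - 1
      omega
  · intro j hj
    exact p.adj_getVert_succ hj
  · intro u
    have e : u ∈ p.support ↔ u ∈ (G.connectedComponentMk v).supp := by
      rw [← hs, SimpleGraph.Walk.mem_verts_toSubgraph]
    rw [SimpleGraph.ConnectedComponent.mem_supp_iff] at e
    refine e.symm.trans ?_
    rw [SimpleGraph.Walk.mem_support_iff_exists_getVert]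
    constructor
    · rintro ⟨j, hj, hj'⟩
      by_cases a : j = p.length
      · refine ⟨0, by omega, ?_⟩
        rw [← hj, a]; simp
      · exact ⟨j, by omega, hj⟩
    · rintro ⟨j, hj, hj'⟩
      exact ⟨j, hj', hj.le⟩

theorem exists_structure {V : Type*} [Fintype V] [DecidableEq V]
    (G : SimpleGraph V) [DecidableRel G.Adj] (hreg : ∀ v : V, G.degree v = 2) :
    ∃ (n : G.ConnectedComponent → ℕ) (cy : V → G.ConnectedComponent) (jj : V → ℕ)
      (pr nx : V → V),
      (∀ c, 3 ≤ n c) ∧ (∀ v, jj v < n (cy v)) ∧ (∀ u v, cy u = cy v → jj u = jj v → u = v) ∧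
      (∀ c j, j < n c → ∃ v, cy v = c ∧ jj v = j) ∧ (∀ v, cy (pr v) = cy v) ∧
      (∀ v, jj (pr v) = amPred (n (cy v)) (jj v)) ∧
      (∀ v, pr (nx v) = v) ∧ (∀ v, nx (pr v) = v) ∧ (∀ v, nx (nx v) ≠ v) ∧
      (∀ u v, G.Adj u v ↔ v = nx u ∨ u = nx v) := by
  classical
  choose n w h3 winj wn wadj wc using exists_cycles G hreg
  set cy : V → G.ConnectedComponent := fun v => G.connectedComponentMk v with hcy
  have ex : ∀ v, ∃ j < n (cy v), w (cy v) j = v := fun v => (wc (cy v) v).mp rfl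
  choose jj hjj hw using ex
  have wcy : ∀ c j, j < n c → cy (w c j) = c := fun c j hj => (wc c _).mpr ⟨j, hj, rfl⟩
  have wjj : ∀ c j, j < n c → jj (w c j) = j := by
    intro c j hj
    have e := wcy c j hj
    have h1 := hjj (w c j)
    have h2 := hw (w c j)
    rw [e] at h1 h2
    exact winj c _ _ h1 hj h2
  have inj : ∀ u v, cy u = cy v → jj u = jj v → u = v := by
    intro u v e1 e2
    rw [← hw u, ← hw v, e1, e2]
  set sc : V → ℕ := fun v => if jj v + 1 = n (cy v) then 0 else jj v + 1 with hsc
  have scl : ∀ v, sc v < n (cy v) := by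
    intro v
    have a := hjj v
    have b := h3 (cy v)
    simp only [hsc]; split_ifs <;> omega
  have prl : ∀ v, amPred (n (cy v)) (jj v) < n (cy v) := by
    intro v
    have a := hjj v
    have b := h3 (cy v)
    unfold amPred; split_ifs <;> omega
  set pr : V → V := fun v => w (cy v) (amPred (n (cy v)) (jj v)) with hpr
  set nx : V → V := fun v => w (cy v) (sc v) with hnx
  have cpr : ∀ v, cy (pr v) = cy v := fun v => wcy _ _ (prl v)
  have cnx : ∀ v, cy (nx v) = cy v := fun v => wcy _ _ (scl v)
  have jpr : ∀ v, jj (pr v) = amPred (n (cy v)) (jj v) := fun v => wjj _ _ (prl v)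
  have jnx : ∀ v, jj (nx v) = sc v := fun v => wjj _ _ (scl v)
  have pn : ∀ v, pr (nx v) = v := by
    intro v
    apply inj
    · rw [cpr, cnx]
    · have a := hjj v
      have b := h3 (cy v)
      rw [jpr, cnx, jnx]
      simp only [hsc, amPred]
      by_cases h : jj v + 1 = n (cy v)
      · simp only [h, if_true]; omega
      · rw [if_neg h, if_neg (Nat.succ_ne_zero _)]
        omega
  have np : ∀ v, nx (pr v) = v := by
    intro v
    apply inj
    · rw [cnx, cpr]
    · have a := hjj v
      have b := h3 (cy v)
      rw [jnx]
      simp only [hsc]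
      rw [cpr, jpr]
      simp only [amPred]
      by_cases h : jj v = 0
      · simp only [h, if_true]
        split_ifs <;> omega
      · simp only [h, if_false]
        split_ifs <;> omega
  have nn : ∀ v, nx (nx v) ≠ v := by
    intro v e
    have e1 := congrArg jj e
    have a := hjj v
    have b := h3 (cy v)
    rw [jnx] at e1
    simp only [hsc] at e1
    rw [cnx, jnx] at e1
    simp only [hsc] at e1
    split_ifs at e1 <;> omega
  have adj : ∀ v, G.Adj v (nx v) := by
    intro v
    have a := wadj (cy v) (jj v) (hjj v)
    rw [hw] at a
    have : nx v = w (cy v) (jj v + 1) := by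
      simp only [hnx, hsc]
      split_ifs with h
      · rw [h, wn]
      · rfl
    rwa [this]
  refine ⟨n, cy, jj, pr, nx, h3, hjj, inj, fun c j hj => ⟨w c j, wcy c j hj, wjj c j hj⟩,
    cpr, jpr, pn, np, nn, ?_⟩
  intro u v
  constructor
  · intro h
    have hsub : ({nx u, pr u} : Finset V) ⊆ G.neighborFinset u := by
      intro x hx
      rw [SimpleGraph.mem_neighborFinset]
      rcases Finset.mem_insert.mp hx with rfl | hx
      · exact adj u
      · rw [Finset.mem_singleton.mp hx]
        have := adj (pr u)
        rw [np] at this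
        exact this.symm
    have hne : nx u ≠ pr u := by
      intro e
      apply nn u
      rw [e, np]
    have heq := Finset.eq_of_subset_of_card_le hsub (by
      rw [Finset.card_pair hne, SimpleGraph.card_neighborFinset_eq_degree, hreg])
    have hv : v ∈ G.neighborFinset u := by rwa [SimpleGraph.mem_neighborFinset]
    rw [← heq] at hv
    rcases Finset.mem_insert.mp hv with rfl | hv
    · exact Or.inl rfl
    · right
      rw [Finset.mem_singleton.mp hv, np]
  · rintro (rfl | rfl)
    · exact adj u
    · exact (adj v).symm

theorem every_two_regular_graph_admits_antimagic_orientation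
    {V : Type*} [Fintype V] [DecidableEq V]
    (G : SimpleGraph V) [DecidableRel G.Adj]
    (hreg : ∀ v : V, G.degree v = 2) :
    ∃ (A : Finset (V × V)) (c : V × V → ℤ),
      IsOrientation G A ∧
      Set.BijOn c ↑A (Set.Icc 1 (G.edgeFinset.card : ℤ)) ∧
      Pairwise fun u v : V => vertexSum A c u ≠ vertexSum A c v := by
  classical
  obtain ⟨n, cy, jj, pr, nx, h3, hjj, inj, surj, hcy, hpr, pn, np, nn, adj⟩ :=
    exists_structure G hreg
  obtain ⟨lab, s, hs, bij, sinj⟩ := exists_labeling n h3 cy jj hjj inj surj pr hcy hpr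
  have hcard : G.edgeFinset.card = Fintype.card V := by
    have h := G.sum_degrees_eq_twice_card_edges
    simp only [hreg, sum_const, smul_eq_mul, card_univ] at h
    omega
  have nxinj : ∀ u v, nx u = nx v → u = v := fun u v e => by rw [← pn u, ← pn v, e]
  set arc : V → V × V := fun v => if s v = 1 then (v, nx v) else (nx v, v) with harc
  have arc1 : ∀ v, s v = 1 → arc v = (v, nx v) := fun v h => by simp [harc, h]
  have arc2 : ∀ v, s v = -1 → arc v = (nx v, v) := fun v h => by simp [harc, h]
  have arcinj : Function.Injective arc := by
    intro u v e
    rcases hs u with a | a <;> rcases hs v with b | b <;>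
      simp only [arc1, arc2, a, b, Prod.mk.injEq] at e
    · exact e.1
    · obtain ⟨e1, e2⟩ := e
      rw [e1] at e2
      exact absurd e2 (nn v)
    · obtain ⟨e1, e2⟩ := e
      rw [e2] at e1
      exact absurd e1 (nn v)
    · exact e.2
  set c : V × V → ℤ := fun a => if a.2 = nx a.1 then lab a.1 else lab a.2 with hc
  have carc : ∀ v, c (arc v) = lab v := by
    intro v
    rcases hs v with a | a
    · rw [arc1 v a]; simp [hc]
    · rw [arc2 v a]; simp [hc, (nn v).symm]
  have mem : ∀ a, a ∈ univ.image arc ↔ ∃ v, arc v = a := by intro a; simp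
  have vs : ∀ u, vertexSum (univ.image arc) c u = s (pr u) * lab (pr u) - s u * lab u := by
    intro u
    unfold vertexSum
    rw [Finset.sum_filter, Finset.sum_filter, Finset.sum_image arcinj.injOn,
      Finset.sum_image arcinj.injOn, ← Finset.sum_sub_distrib]
    have e : ∀ v, ((if (arc v).2 = u then c (arc v) else 0) -
        (if (arc v).1 = u then c (arc v) else 0)) =
        (if v = pr u then s v * lab v else 0) - (if v = u then s v * lab v else 0) := by
      intro v
      have hiff : v = pr u ↔ nx v = u :=
        ⟨fun h => by rw [h, np], fun h => by rw [← h, pn]⟩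
      rw [carc]
      simp only [hiff]
      rcases hs v with a | a
      · rw [arc1 v a, a]; simp
      · rw [arc2 v a, a]
        dsimp only
        split_ifs <;> ring
    rw [Finset.sum_congr rfl (fun v _ => e v), Finset.sum_sub_distrib]
    simp
  refine ⟨univ.image arc, c, ⟨?_, ?_⟩, ?_, ?_⟩
  · intro u v
    rw [adj, mem, mem]
    constructor
    · rintro (rfl | rfl)
      · rcases hs u with a | a
        · exact Or.inl ⟨u, arc1 u a⟩
        · exact Or.inr ⟨u, arc2 u a⟩
      · rcases hs v with a | a
        · exact Or.inr ⟨v, arc1 v a⟩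
        · exact Or.inl ⟨v, arc2 v a⟩
    · rintro (⟨x, hx⟩ | ⟨x, hx⟩) <;> rcases hs x with a | a <;>
        simp only [arc1, arc2, a, Prod.mk.injEq] at hx <;> obtain ⟨rfl, rfl⟩ := hx <;> simp
  · rintro u v ⟨h1, h2⟩
    rw [mem] at h1 h2
    obtain ⟨x, hx⟩ := h1
    obtain ⟨y, hy⟩ := h2
    have loop : ∀ z, nx z ≠ z := fun z h => nn z (by rw [h, h])
    rcases hs x with a | a <;> rcases hs y with b | b <;>
      simp only [arc1, arc2, a, b, Prod.mk.injEq] at hx hy <;>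
      obtain ⟨rfl, rfl⟩ := hx <;> obtain ⟨e1, e2⟩ := hy
    · subst e1; exact nn _ e2
    · subst e2; rw [a] at b; norm_num at b
    · subst e1; rw [a] at b; norm_num at b
    · subst e2; exact nn _ e1
  · rw [hcard]
    refine ⟨?_, ?_, ?_⟩
    · intro a ha
      obtain ⟨v, rfl⟩ := (mem a).mp ha
      rw [carc]
      exact bij.mapsTo (Set.mem_univ v)
    · intro a ha b hb e
      obtain ⟨v, rfl⟩ := (mem a).mp ha
      obtain ⟨w, rfl⟩ := (mem b).mp hb
      rw [carc, carc] at e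
      rw [bij.injOn (Set.mem_univ v) (Set.mem_univ w) e]
    · intro x hx
      obtain ⟨v, -, hv⟩ := bij.surjOn hx
      exact ⟨arc v, (mem _).mpr ⟨v, rfl⟩, by rw [carc, hv]⟩
  · intro u v huv e
    rw [vs, vs] at e
    exact huv (sinj e)
end

section
/- For every integer d ≥ 2, every connected 2d-regular simple graph admits an antimagic orientation. That is, if G is a finite connected simple graph in which every vertex has degree exactly 2d for some integer d ≥ 2, then there exist an orientation D of G and a bijection c from the arc set of D to {1, 2, …, m} (where m is the number of edges of G) such that the vertex-sums of all vertices of D under c are pairwise distinct. -/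
open Finset

theorem zigzag_labels (m : ℕ) (hm : 2 ≤ m) (P : ℕ → Prop) (h1 : P 1) :
    ∃ x : ℕ → ℤ, Set.InjOn (fun i => |x i|) (Set.Iio m) ∧ (∀ i < m, 1 ≤ |x i| ∧ |x i| ≤ m) ∧
      (∀ i, i + 1 < m → ¬ P (i + 1) → x i - x (i + 1) = -1) ∧
      (∀ i j, i < j → j + 1 < m → P (i + 1) → P (j + 1) → x i - x (i + 1) ≠ x j - x (j + 1)) ∧
      (∀ i, i + 1 < m → P (i + 1) → x (m - 1) - x 0 ≠ x i - x (i + 1)) := by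
  classical
  obtain ⟨r, hr0, hrs⟩ : ∃ r : ℕ → ℤ, r 0 = 0 ∧
      ∀ i, r (i + 1) = r i + if P (i + 1) then 1 else 0 := by
    refine ⟨fun n => ∑ i ∈ range n, if P (i + 1) then 1 else 0, by simp, fun i => ?_⟩
    exact Finset.sum_range_succ _ _
  have hmono : ∀ i j, i ≤ j → r i ≤ r j := by
    intro i j hij
    induction hij with
    | refl => rfl
    | step h ih => rw [hrs]; split_ifs <;> omega
  have hub : ∀ i : ℕ, r i ≤ i := by
    intro i
    induction i with
    | zero => simp [hr0]
    | succ n ih => rw [hrs]; push_cast; split_ifs <;> omega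
  obtain ⟨s, hs⟩ : ∃ s : ℕ → ℤ, ∀ i, s i = if r i % 2 = 0 then r i else 2 * m + 1 - r i :=
    ⟨_, fun _ => rfl⟩
  obtain ⟨y, hy⟩ : ∃ y : ℕ → ℕ, ∀ i, y i =
      #{j ∈ Ico 1 m | s j < s i ∨ (s j = s i ∧ j ≤ i)} := ⟨_, fun _ => rfl⟩
  have ylt : ∀ i j, 1 ≤ j → j < m → (s i < s j ∨ (s i = s j ∧ i < j)) → y i < y j := by
    intro i j h1 h2 h3
    rw [hy, hy]
    apply Finset.card_lt_card
    rw [Finset.ssubset_iff_of_subset]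
    · exact ⟨j, by simp; omega, by simp; omega⟩
    · intro k; simp only [Finset.mem_filter, Finset.mem_Ico]; omega
  have ypos : ∀ i, 1 ≤ i → i < m → 1 ≤ y i := by
    intro i h1 h2
    rw [hy]
    exact Finset.card_pos.2 ⟨i, by simp; omega⟩
  have yub : ∀ i, y i ≤ m - 1 := by
    intro i
    rw [hy]
    exact (Finset.card_filter_le _ _).trans (by simp)
  have yinj : ∀ i j, 1 ≤ i → i < m → 1 ≤ j → j < m → y i = y j → i = j := by
    intro i j _ _ _ _ h
    by_contra hne
    have a := ylt i j (by omega) (by omega)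
    have b := ylt j i (by omega) (by omega)
    omega
  have ysucc : ∀ i, 1 ≤ i → i + 1 < m → ¬ P (i + 1) → y (i + 1) = y i + 1 := by
    intro i h1 h2 h3
    have hss : s (i + 1) = s i := by rw [hs, hs, hrs]; simp [h3]
    rw [hy, hy, hss, ← Finset.card_insert_of_notMem (a := i + 1)]
    · congr 1
      ext k
      simp only [Finset.mem_filter, Finset.mem_Ico, Finset.mem_insert]
      by_cases hk : k = i + 1
      · subst hk; omega
      · omega
    · simp [hss]
  refine ⟨fun i => if i = 0 then -(m : ℤ) else y i, ?_, ?_, ?_, ?_, ?_⟩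
  · intro i hi j hj h
    simp only [Set.mem_Iio] at hi hj
    have := yub i
    have := yub j
    have := yinj i j
    by_cases hi0 : i = 0 <;> by_cases hj0 : j = 0 <;> simp [hi0, hj0] at h ⊢ <;> omega
  · intro i hi
    have := yub i
    have := ypos i
    by_cases hi0 : i = 0 <;> simp [hi0] <;> omega
  · intro i hi hP
    have hi0 : i ≠ 0 := by rintro rfl; exact hP h1
    have := ysucc i (by omega) hi hP
    simp [hi0]; omega
  · intro i j hij hj hPi hPj
    have hj0 : j ≠ 0 := by omega
    by_cases hi0 : i = 0
    · have := yub (j + 1)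
      have := ypos 1
      have := ypos j
      simp [hi0, hj0]; omega
    · have e1 := hrs i
      have e2 := hrs j
      rw [if_pos hPi] at e1
      rw [if_pos hPj] at e2
      have e3 := hmono (i + 1) j hij
      have u1 := hub (j + 1)
      have l1 := hmono 0 i (by omega)
      have a1 := hs i
      have a2 := hs (i + 1)
      have a3 := hs j
      have a4 := hs (j + 1)
      have b1 := ylt i (i + 1) (by omega) (by omega)
      have b2 := ylt (i + 1) i (by omega) (by omega)
      have b3 := ylt j (j + 1) (by omega) (by omega)
      have b4 := ylt (j + 1) j (by omega) (by omega)
      have c1 := ylt i j (by omega) (by omega)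
      have c2 := ylt j i (by omega) (by omega)
      have c3 := ylt (i + 1) (j + 1) (by omega) (by omega)
      have c4 := ylt (j + 1) (i + 1) (by omega) (by omega)
      simp only [hi0, hj0, if_false, Nat.succ_ne_zero]
      rcases Int.emod_two_eq_zero_or_one (r i) with hi2 | hi2 <;>
      rcases Int.emod_two_eq_zero_or_one (r j) with hj2 | hj2
      all_goals
        first
        | rw [if_pos hi2] at a1
        | rw [if_neg (by omega)] at a1
        first
        | rw [if_pos hj2] at a3
        | rw [if_neg (by omega)] at a3
        first
        | rw [if_pos (by omega)] at a2
        | rw [if_neg (by omega)] at a2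
        first
        | rw [if_pos (by omega)] at a4
        | rw [if_neg (by omega)] at a4
      all_goals
        push_cast at u1
      · have := c1 (by omega); have := c4 (by omega); omega
      · have := b1 (by omega); have := b4 (by omega); omega
      · have := b2 (by omega); have := b3 (by omega); omega
      · have := c2 (by omega); have := c3 (by omega); omega
  · intro i hi hP
    have hm1 : m - 1 ≠ 0 := by omega
    have := yub i
    have := ypos (m - 1) (by omega) (by omega)
    have := ypos (i + 1) (by omega) (by omega)
    by_cases hi0 : i = 0 <;> simp [hi0, hm1] <;> omega


theorem exists_euler_circuit {V : Type*} [Fintype V] [DecidableEq V]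
    (G : SimpleGraph V) [DecidableRel G.Adj]
    (hconn : G.Connected) (heven : ∀ v : V, Even (G.degree v)) :
    ∃ (u : V) (p : G.Walk u u), p.IsEulerian := by
  classical
  -- a longest trail
  let S : Set ℕ := {n | ∃ (u v : V) (p : G.Walk u v), p.IsTrail ∧ p.length = n}
  have hS : S.Nonempty := by
    obtain ⟨v⟩ := hconn.nonempty
    exact ⟨0, v, v, .nil, by simp, rfl⟩
  have hbd : BddAbove S := by
    refine ⟨G.edgeFinset.card, ?_⟩
    rintro n ⟨u, v, p, hp, rfl⟩
    exact hp.length_le_card_edgeFinset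
  obtain ⟨u, v, p, hp, hlen⟩ := Nat.sSup_mem hS hbd
  have hmax : ∀ (a b : V) (q : G.Walk a b), q.IsTrail → q.length ≤ p.length := by
    intro a b q hq
    rw [hlen]
    exact le_csSup hbd ⟨a, b, q, hq, rfl⟩
  -- edges at the end point are all used
  have hend : ∀ (a b c : V) (q : G.Walk a b), q.IsTrail → q.length = p.length → G.Adj c a →
      s(c, a) ∈ q.edges := by
    intro a b c q hq hl hac
    by_contra hne
    have := hmax c b (.cons hac q) (by simp [hq, hne])
    simp at this
    omega
  have huv : u = v := by
    by_contra hne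
    have h := hp.even_countP_edges_iff u
    have h2 : p.edges.countP (fun e => u ∈ e) = G.degree u := by
      rw [← SimpleGraph.card_incidenceFinset_eq_degree, List.countP_eq_length_filter,
        ← List.toFinset_card_of_nodup (hp.edges_nodup.filter _)]
      congr 1
      ext e
      simp only [List.mem_toFinset, List.mem_filter, decide_eq_true_eq,
        SimpleGraph.mem_incidenceFinset]
      constructor
      · rintro ⟨h1, h2⟩
        exact ⟨p.edges_subset_edgeSet h1, h2⟩
      · rintro ⟨h1, h2⟩
        refine ⟨?_, h2⟩
        obtain ⟨c, rfl⟩ := h2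
        rw [Sym2.eq_swap]
        exact hend u v c p hp rfl (SimpleGraph.Adj.symm h1)
    have h3 := h.1 (by convert heven u using 1)
    exact (h3 hne).1 rfl
  subst huv
  refine ⟨u, p, hp.isEulerian_of_forall_mem ?_⟩
  -- all edges at a support vertex are used
  have hsup : ∀ a ∈ p.support, ∀ c, G.Adj c a → s(c, a) ∈ p.edges := by
    intro a ha c hc
    have := hend a a c (p.rotate a ha) (hp.rotate ha) (by simp) hc
    exact (p.rotate_edges a ha).mem_iff.1 this
  have hall : ∀ a, a ∈ p.support := by
    intro a
    obtain ⟨q⟩ := hconn.preconnected a u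
    induction q with
    | nil => simp
    | cons h q ih => exact p.fst_mem_support_of_mem_edges (hsup _ (ih p hp hlen hmax hend hsup) _ h)
  intro e he
  induction e with
  | _ a b => exact hsup b (hall b) a he

theorem exists_euler_seq {V : Type*} [Fintype V] [DecidableEq V]
    (G : SimpleGraph V) [DecidableRel G.Adj]
    (hconn : G.Connected) (heven : ∀ v : V, Even (G.degree v)) :
    ∃ w : ℕ → V, w G.edgeFinset.card = w 0 ∧ (∀ i < G.edgeFinset.card, G.Adj (w i) (w (i + 1))) ∧
      (∀ i < G.edgeFinset.card, ∀ j < G.edgeFinset.card,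
        s(w i, w (i + 1)) = s(w j, w (j + 1)) → i = j) ∧
      (∀ e ∈ G.edgeSet, ∃ i < G.edgeFinset.card, s(w i, w (i + 1)) = e) := by
  obtain ⟨u, p, hp⟩ := exists_euler_circuit G hconn heven
  have hl : p.length = G.edgeFinset.card := by
    rw [← hp.edgesFinset_eq]
    exact p.length_edges.symm
  have hg : ∀ i (h : i < p.edges.length), p.edges[i] = s(p.getVert i, p.getVert (i + 1)) := by
    intro i h
    simp [SimpleGraph.Walk.edges, SimpleGraph.Walk.darts_getElem_eq_getVert]
  have hel : p.edges.length = p.length := by simp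
  rw [← hl]
  refine ⟨p.getVert, by simp, fun i hi => p.adj_getVert_succ hi, ?_, ?_⟩
  · intro i hi j hj h
    rw [← hg i (by omega), ← hg j (by omega)] at h
    exact (hp.isTrail.edges_nodup.getElem_inj_iff).1 h
  · intro e he
    have := hp.mem_edges_iff.2 he
    obtain ⟨i, hi, h⟩ := List.getElem_of_mem this
    exact ⟨i, by omega, by rw [← hg i hi, h]⟩

/-- Cyclic shift of a sum along a closed sequence. -/
theorem sum_cyclic_shift {V : Type*} [DecidableEq V] (m : ℕ) (w : ℕ → V)
    (hw : w (m + 1) = w 0) (x : ℕ → ℤ) (u : V) :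
    ∑ i ∈ range (m + 1), (if w (i + 1) = u then x i else 0) =
      ∑ i ∈ range (m + 1), (if w i = u then x (if i = 0 then m else i - 1) else 0) := by
  rw [Finset.sum_range_succ, Finset.sum_range_succ' _ m, hw]
  simp

theorem visit_count {V : Type*} [Fintype V] [DecidableEq V]
    (G : SimpleGraph V) [DecidableRel G.Adj] (m : ℕ) (w : ℕ → V) (hw : w (m + 1) = w 0)
    (hadj : ∀ i < m + 1, G.Adj (w i) (w (i + 1)))
    (hinj : ∀ i < m + 1, ∀ j < m + 1, s(w i, w (i + 1)) = s(w j, w (j + 1)) → i = j)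
    (hsurj : ∀ e ∈ G.edgeSet, ∃ i < m + 1, s(w i, w (i + 1)) = e) (u : V) :
    G.degree u = 2 * #{i ∈ range (m + 1) | w i = u} := by
  have h1 : #{i ∈ range (m + 1) | w (i + 1) = u} = #{i ∈ range (m + 1) | w i = u} := by
    have := sum_cyclic_shift m w hw (fun _ => 1) u
    simp only [Finset.sum_boole] at this
    exact_mod_cast this
  have h2 : G.incidenceFinset u = ({i ∈ range (m + 1) | w (i + 1) = u} ∪
      {i ∈ range (m + 1) | w i = u}).image (fun i => s(w i, w (i + 1))) := by
    ext e
    simp only [SimpleGraph.mem_incidenceFinset, Finset.mem_image, Finset.mem_union,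
      Finset.mem_filter, Finset.mem_range]
    constructor
    · rintro ⟨he, hu⟩
      obtain ⟨i, hi, rfl⟩ := hsurj e he
      refine ⟨i, ?_, rfl⟩
      rw [Sym2.mem_iff] at hu
      rcases hu with hu | hu
      · exact Or.inr ⟨hi, hu.symm⟩
      · exact Or.inl ⟨hi, hu.symm⟩
    · rintro ⟨i, hi, rfl⟩
      rcases hi with ⟨hi, rfl⟩ | ⟨hi, rfl⟩
      · exact ⟨hadj i hi, Sym2.mem_mk_right _ _⟩
      · exact ⟨hadj i hi, Sym2.mem_mk_left _ _⟩
  rw [← SimpleGraph.card_incidenceFinset_eq_degree, h2, Finset.card_image_of_injOn,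
    Finset.card_union_of_disjoint, h1, two_mul]
  · rw [Finset.disjoint_left]
    intro i hi hi'
    simp only [Finset.mem_filter, Finset.mem_range] at hi hi'
    exact (hadj i hi.1).ne (hi'.2.trans hi.2.symm)
  · intro i hi j hj h
    simp only [Finset.coe_union, Finset.coe_filter, Finset.mem_range, Set.mem_union,
      Set.mem_ofPred_eq] at hi hj
    exact hinj i (by tauto) j (by tauto) h

theorem exists_orientation_of_signed {V : Type*} [Fintype V] [DecidableEq V]
    (G : SimpleGraph V) [DecidableRel G.Adj] (m : ℕ) (hcard : G.edgeFinset.card = m)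
    (w : ℕ → V)
    (hadj : ∀ i < m, G.Adj (w i) (w (i + 1)))
    (hinj : ∀ i < m, ∀ j < m, s(w i, w (i + 1)) = s(w j, w (j + 1)) → i = j)
    (hsurj : ∀ e ∈ G.edgeSet, ∃ i < m, s(w i, w (i + 1)) = e)
    (x : ℕ → ℤ) (hxinj : Set.InjOn (fun i => |x i|) (Set.Iio m))
    (hx : ∀ i < m, 1 ≤ |x i| ∧ |x i| ≤ m) :
    ∃ (A : Finset (V × V)) (c : V × V → ℤ),
      IsOrientation G A ∧
      Set.BijOn c ↑A (Set.Icc 1 (G.edgeFinset.card : ℤ)) ∧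
      ∀ u, vertexSum A c u = ∑ i ∈ range m, (if w (i + 1) = u then x i else 0) -
        ∑ i ∈ range m, (if w i = u then x i else 0) := by
  classical
  obtain ⟨f, hf⟩ : ∃ f : ℕ → V × V, ∀ i, f i =
      if 0 < x i then (w i, w (i + 1)) else (w (i + 1), w i) := ⟨_, fun _ => rfl⟩
  have hfs : ∀ i, s((f i).1, (f i).2) = s(w i, w (i + 1)) := by
    intro i
    rw [hf]
    split_ifs
    · rfl
    · exact Sym2.eq_swap
  have hfinj : Set.InjOn f (range m : Set ℕ) := by
    intro i hi j hj h
    simp only [Finset.coe_range, Set.mem_Iio] at hi hj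
    apply hinj i hi j hj
    rw [← hfs, ← hfs, h]
  obtain ⟨c, hc⟩ : ∃ c : V × V → ℤ, ∀ i < m, c (f i) = |x i| := by
    refine ⟨fun a => |x (Function.invFunOn f (range m : Set ℕ) a)|, fun i hi => ?_⟩
    have : Function.invFunOn f (range m : Set ℕ) (f i) = i :=
      hfinj.leftInvOn_invFunOn (by simpa using hi)
    simp only [this]
  refine ⟨(range m).image f, c, ⟨?_, ?_⟩, ?_, ?_⟩
  · intro u v
    simp only [Finset.mem_image, Finset.mem_range]
    constructor
    · intro h
      obtain ⟨i, hi, he⟩ := hsurj s(u, v) h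
      rw [← hfs, Sym2.eq_iff] at he
      rcases he with ⟨h1, h2⟩ | ⟨h1, h2⟩
      · exact Or.inl ⟨i, hi, Prod.ext h1 h2⟩
      · exact Or.inr ⟨i, hi, Prod.ext h1 h2⟩
    · rintro (⟨i, hi, h⟩ | ⟨i, hi, h⟩)
      · have h1 := hfs i
        rw [h] at h1
        have : s(u, v) ∈ G.edgeSet := h1 ▸ hadj i hi
        exact this
      · have h1 := hfs i
        rw [h] at h1
        have : s(v, u) ∈ G.edgeSet := h1 ▸ hadj i hi
        exact SimpleGraph.Adj.symm this
  · intro u v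
    simp only [Finset.mem_image, Finset.mem_range]
    rintro ⟨⟨i, hi, h⟩, ⟨j, hj, h'⟩⟩
    have h1 := hfs i
    have h2 := hfs j
    rw [h] at h1
    rw [h'] at h2
    have hij := hinj i hi j hj (by rw [← h1, ← h2]; exact Sym2.eq_swap)
    subst hij
    have huv : u = v := congrArg Prod.fst (h.symm.trans h')
    have : s(u, v) ∈ G.edgeSet := h1 ▸ hadj i hi
    exact (show G.Adj u v from this).ne huv
  · have hcinj : Set.InjOn c ((range m).image f : Finset (V × V)) := by
      intro a ha b hb h
      simp only [Finset.coe_image, Finset.coe_range, Set.mem_image, Set.mem_Iio] at ha hb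
      obtain ⟨i, hi, rfl⟩ := ha
      obtain ⟨j, hj, rfl⟩ := hb
      rw [hc i hi, hc j hj] at h
      rw [hxinj hi hj h]
    have hmaps : ∀ a ∈ (range m).image f, c a ∈ Finset.Icc (1 : ℤ) m := by
      intro a ha
      simp only [Finset.mem_image, Finset.mem_range] at ha
      obtain ⟨i, hi, rfl⟩ := ha
      rw [hc i hi, Finset.mem_Icc]
      exact hx i hi
    rw [hcard]
    refine ⟨fun a ha => by simpa using hmaps a ha, hcinj, ?_⟩
    have := Finset.surjOn_of_injOn_of_card_le c hmaps hcinj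
      (by rw [Finset.card_image_of_injOn hfinj]; simp)
    simpa using this
  · intro u
    unfold vertexSum
    rw [Finset.sum_filter, Finset.sum_filter, Finset.sum_image hfinj, Finset.sum_image hfinj,
      ← Finset.sum_sub_distrib, ← Finset.sum_sub_distrib]
    apply Finset.sum_congr rfl
    intro i hi
    rw [hc i (by simpa using hi), hf]
    by_cases h0 : 0 < x i
    · simp [h0, abs_of_pos h0]
    · rw [abs_of_nonpos (not_lt.1 h0)]
      simp only [h0, if_false]
      split_ifs <;> ring

/-- For every integer d ≥ 2, every connected 2d-regular simple graph admits an
antimagic orientation. -/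
theorem connected_even_regular_admits_antimagic_orientation
    {V : Type*} [Fintype V] [DecidableEq V]
    (G : SimpleGraph V) [DecidableRel G.Adj] (d : ℕ) (hd : 2 ≤ d)
    (hconn : G.Connected) (hreg : ∀ v : V, G.degree v = 2 * d) :
    ∃ (A : Finset (V × V)) (c : V × V → ℤ),
      IsOrientation G A ∧
      Set.BijOn c ↑A (Set.Icc 1 (G.edgeFinset.card : ℤ)) ∧
      Pairwise fun u v : V => vertexSum A c u ≠ vertexSum A c v := by
  classical
  obtain ⟨w, hw, hadj, hinj, hsurj⟩ := exists_euler_seq G hconn (fun v => by simp [hreg v])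
  obtain ⟨m, hm⟩ : ∃ m, G.edgeFinset.card = m := ⟨_, rfl⟩
  have hm2 : 2 ≤ m := by
    obtain ⟨v⟩ := hconn.nonempty
    have h1 : #(G.incidenceFinset v) ≤ #G.edgeFinset :=
      Finset.card_le_card (G.incidenceFinset_subset v)
    rw [SimpleGraph.card_incidenceFinset_eq_degree, hreg] at h1
    omega
  obtain ⟨k, rfl⟩ : ∃ k, m = k + 1 := ⟨m - 1, by omega⟩
  rw [hm] at hw hadj hinj hsurj
  have hvis : ∀ u, #{i ∈ range (k + 1) | w i = u} = d := by
    intro u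
    have := visit_count G k w hw hadj hinj hsurj u
    rw [hreg] at this
    omega
  -- first visits
  have hex : ∀ u, ∃ i, i < k + 1 ∧ w i = u := by
    intro u
    have : 0 < #{i ∈ range (k + 1) | w i = u} := by rw [hvis]; omega
    obtain ⟨i, hi⟩ := Finset.card_pos.1 this
    exact ⟨i, by simpa using hi⟩
  obtain ⟨F, hF⟩ : ∃ F : V → ℕ, ∀ u, F u = Nat.find (hex u) := ⟨_, fun _ => rfl⟩
  have hFs : ∀ u, F u < k + 1 ∧ w (F u) = u := fun u => by
    rw [hF]; exact Nat.find_spec (hex u)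
  have hFmin : ∀ u i, i < F u → i < k + 1 → w i ≠ u := by
    intro u i h1 h2 h3
    rw [hF] at h1
    exact Nat.find_min (hex u) h1 ⟨h2, h3⟩
  let P : ℕ → Prop := fun i => F (w i) = i
  have hP0 : F (w 0) = 0 := by
    by_contra h
    exact hFmin (w 0) 0 (by omega) (by omega) rfl
  have hP1 : P 1 := by
    show F (w 1) = 1
    have h1 : ¬ (1 < F (w 1)) := fun h => hFmin (w 1) 1 h (by omega) rfl
    have h2 : F (w 1) ≠ 0 := by
      intro h
      have h3 := (hFs (w 1)).2
      rw [h] at h3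
      exact (hadj 0 (by omega)).ne h3
    omega
  obtain ⟨x, hx1, hx2, hx3, hx4, hx5⟩ := zigzag_labels (k + 1) hm2 P hP1
  obtain ⟨A, c, hA, hc, hs⟩ :=
    exists_orientation_of_signed G (k + 1) hm w hadj hinj hsurj x hx1 hx2
  refine ⟨A, c, hA, hc, ?_⟩
  obtain ⟨D, hD⟩ : ∃ D : ℕ → ℤ, ∀ i, D i = x (if i = 0 then k else i - 1) - x i :=
    ⟨_, fun _ => rfl⟩
  have hsum : ∀ u, vertexSum A c u = D (F u) - (d - 1) := by
    intro u
    have hmem : F u ∈ ({i ∈ range (k + 1) | w i = u} : Finset ℕ) := by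
      simpa using hFs u
    have h1 : vertexSum A c u = ∑ i ∈ range (k + 1) with w i = u, D i := by
      rw [hs, sum_cyclic_shift k w hw, ← Finset.sum_sub_distrib, Finset.sum_filter]
      apply Finset.sum_congr rfl
      intro i _
      rw [hD]
      by_cases h : w i = u
      · rw [if_pos h, if_pos h, if_pos h]
      · rw [if_neg h, if_neg h, if_neg h, sub_zero]
    have h2 : ∀ i ∈ ({i ∈ range (k + 1) | w i = u} : Finset ℕ).erase (F u), D i = -1 := by
      intro i hi
      simp only [Finset.mem_erase, Finset.mem_filter, Finset.mem_range] at hi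
      obtain ⟨hne, hi, rfl⟩ := hi
      have hi0 : i ≠ 0 := by rintro rfl; exact hne hP0.symm
      obtain ⟨j, rfl⟩ : ∃ j, i = j + 1 := ⟨i - 1, by omega⟩
      rw [hD, if_neg hi0]
      exact hx3 j hi (fun h => hne h.symm)
    rw [h1, ← Finset.add_sum_erase _ _ hmem, Finset.sum_congr rfl h2, Finset.sum_const,
      Finset.card_erase_of_mem hmem, hvis]
    simp only [nsmul_eq_mul]
    rw [Nat.cast_sub (by omega)]
    push_cast
    ring
  have hdist : ∀ u v, F u < F v → D (F u) ≠ D (F v) := by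
    intro u v huv
    have hu := hFs u
    have hv := hFs v
    have pu : P (F u) := by show F (w (F u)) = F u; rw [hu.2]
    have pv : P (F v) := by show F (w (F v)) = F v; rw [hv.2]
    obtain ⟨j, hj⟩ : ∃ j, F v = j + 1 := ⟨F v - 1, by omega⟩
    rw [hj] at pv huv hv ⊢
    rw [hD, hD, if_neg (Nat.succ_ne_zero j)]
    by_cases h0 : F u = 0
    · rw [h0, if_pos rfl]
      exact hx5 j hv.1 pv
    · obtain ⟨i, hi⟩ : ∃ i, F u = i + 1 := ⟨F u - 1, by omega⟩
      rw [hi] at pu huv ⊢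
      rw [if_neg (Nat.succ_ne_zero i)]
      exact hx4 i j (by omega) hv.1 pu pv
  intro u v huv h
  rw [hsum, hsum] at h
  have h' : D (F u) = D (F v) := by linarith
  rcases lt_trichotomy (F u) (F v) with hlt | heq | hgt
  · exact hdist u v hlt h'
  · exact huv (by rw [← (hFs u).2, heq, (hFs v).2])
  · exact hdist v u hgt h'.symm
end

section
/- Let d ≥ 2 be an integer and let G be a 2d-regular simple graph (not necessarily connected). If G has at most two odd components, i.e., at most two connected components with an odd number of vertices, then G admits an antimagic orientation. -/
open Finset

def ind {V : Type*} [DecidableEq V] (x u : V) : ℤ := if x = u then 1 else 0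

def nt {V : Type*} [DecidableEq V] : List (V × V) → V → ℤ
  | [], _ => 0
  | a :: L, u => ind a.2 u - ind a.1 u + nt L u

def vl {V : Type*} [DecidableEq V] : ℤ → List (V × V) → V → ℤ
  | _, [], _ => 0
  | s, a :: L, u => (s + 1) * ind a.2 u - s * ind a.1 u + vl (s + 1) L u

def arcs {V : Type*} {G : SimpleGraph V} {a b : V} (p : G.Walk a b) : List (V × V) :=
  p.darts.map (fun e => e.toProd)

def toE {V : Type*} (L : List (V × V)) : List (Sym2 V) := L.map (fun a => s(a.1, a.2))

set_option linter.unusedSectionVars false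

section
variable {V : Type*} [DecidableEq V] {G : SimpleGraph V}

theorem nt_append (L M : List (V × V)) (u : V) : nt (L ++ M) u = nt L u + nt M u := by
  induction L with
  | nil => simp [nt]
  | cons a L ih => simp [nt, ih]; ring

theorem vl_append (s : ℤ) (L M : List (V × V)) (u : V) :
    vl s (L ++ M) u = vl s L u + vl (s + L.length) M u := by
  induction L generalizing s with
  | nil => simp [vl]
  | cons a L ih =>
    simp only [List.cons_append, vl, ih, List.length_cons]
    push_cast
    rw [show s + 1 + (L.length : ℤ) = s + (L.length + 1) by ring]; ring

theorem arcs_length {a b : V} (p : G.Walk a b) : (arcs p).length = p.length := by simp [arcs]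

theorem nt_arcs {a b : V} (p : G.Walk a b) (u : V) : nt (arcs p) u = ind b u - ind a u := by
  induction p with
  | nil => simp [arcs, nt]
  | cons h p ih =>
    simp only [arcs] at ih
    simp [arcs, nt, ih]

theorem vl_arcs {a b : V} (p : G.Walk a b) (s : ℤ) (u : V) :
    vl s (arcs p) u = (s + p.length) * ind b u - s * ind a u := by
  induction p generalizing s with
  | nil => simp [arcs, vl]
  | cons h p ih =>
    simp only [arcs] at ih
    simp only [arcs, SimpleGraph.Walk.darts_cons, List.map_cons, vl, ih,
      SimpleGraph.Walk.length_cons]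
    push_cast
    ring

theorem toE_arcs {a b : V} (p : G.Walk a b) : toE (arcs p) = p.edges := by
  induction p with
  | nil => simp [arcs, toE]
  | cons h p ih => simp only [arcs, toE] at ih; simp [arcs, toE, ← ih]

theorem toE_append (L M : List (V × V)) : toE (L ++ M) = toE L ++ toE M := by simp [toE]

theorem split_first {a b : V} (p : G.Walk a b) (U : Finset V) (hU : U.Nonempty)
    (hs : ∀ u ∈ U, u ∈ p.support) :
    ∃ x ∈ U, ∃ (q : G.Walk a x) (r : G.Walk x b), p.edges = q.edges ++ r.edges ∧
      ∀ u ∈ U, u ∈ r.support := by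
  induction p with
  | nil =>
    rename_i a
    obtain ⟨x, hx⟩ := hU
    have := hs x hx
    simp at this
    subst this
    exact ⟨x, hx, .nil, .nil, by simp, hs⟩
  | cons h p ih =>
    rename_i a c b
    by_cases ha : a ∈ U
    · exact ⟨a, ha, .nil, .cons h p, by simp, hs⟩
    · obtain ⟨x, hx, q, r, h1, h2⟩ := ih (by
        intro u hu
        have := hs u hu
        simp only [SimpleGraph.Walk.support_cons, List.mem_cons] at this
        rcases this with rfl | h
        · exact absurd hu ha
        · exact h)
      exact ⟨x, hx, .cons h q, r, by simp [h1], h2⟩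

theorem length_pos_ne {a b : V} (p : G.Walk a b) (h : a ≠ b) : (1 : ℤ) ≤ p.length := by
  cases p with
  | nil => exact absurd rfl h
  | cons h p => simp

/-- The peeling lemma. -/
theorem peel (n : ℕ) : ∀ {a b : V} (p : G.Walk a b) (U : Finset V) (_ : U.card = 2 * n + 1)
    (_ : a ∉ U) (_ : b ∉ U) (_ : ∀ u ∈ U, u ∈ p.support) (s : ℤ) (_ : 0 ≤ s)
    (ε : ℤ) (_ : ε = 1 ∨ ε = -1),
    ∃ (L : List (V × V)) (pa pb : ℤ), (toE L).Perm p.edges ∧ s ≤ pa ∧ pa < pb ∧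
      pb ≤ s + L.length ∧
      (∀ u ∉ U, vl s L u = ε * (pa * ind a u + pb * ind b u) ∧
        nt L u = ε * (ind a u + ind b u)) ∧
      (∀ u ∈ U, ∃ δ : ℤ, (δ = 1 ∨ δ = -1) ∧ nt L u = 2 * δ ∧ 2 * s < δ * vl s L u ∧
        δ * vl s L u < 2 * (s + L.length) ∧ (δ = ε → 2 * pb < δ * vl s L u)) ∧
      (∀ u ∈ U, ∀ v ∈ U, vl s L u = vl s L v → u = v) := by
  induction n with
  | zero =>
    intro a b p U hc ha hb hs s s0 ε hε
    obtain ⟨x, hx⟩ := Finset.card_eq_one.1 hc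
    obtain ⟨y, hy, q, r, he, hr⟩ := split_first p U (by simp [hx]) hs
    have hxy : y = x := by simpa [hx] using hy
    subst hxy
    have hax : a ≠ y := by rintro rfl; exact ha hy
    have hbx : b ≠ y := by rintro rfl; exact hb hy
    have k1 := length_pos_ne q hax
    have k2 := length_pos_ne r hbx.symm
    have iay : ind a y = 0 := by simp [ind, hax]
    have iby : ind b y = 0 := by simp [ind, hbx]
    have iyy : ind y y = 1 := by simp [ind]
    rcases hε with rfl | rfl
    · refine ⟨arcs q.reverse ++ arcs r, s + q.length, s + q.length + r.length, ?_, ?_, ?_, ?_, ?_, ?_, ?_⟩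
      · rw [toE_append, toE_arcs, toE_arcs, he, SimpleGraph.Walk.edges_reverse]
        exact List.Perm.append_right _ (List.reverse_perm _)
      · omega
      · omega
      · simp [arcs_length]; omega
      · intro u hu
        have iyu : ind y u = 0 := by
          simp only [ind, ite_eq_right_iff]; rintro rfl; exact absurd hy hu
        simp only [vl_append, nt_append, vl_arcs, nt_arcs, arcs_length, iyu, SimpleGraph.Walk.length_reverse]
        constructor <;> ring
      · intro u hu
        have : u = y := by simpa [hx] using hu
        subst this
        refine ⟨-1, by simp, ?_⟩
        simp only [vl_append, nt_append, vl_arcs, nt_arcs, arcs_length, iyy, iay, iby, SimpleGraph.Walk.length_reverse, List.length_append]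
        push_cast
        refine ⟨?_, ?_, ?_, ?_⟩ <;> (try ring_nf) <;>
          first | trivial | omega | (intro h; exact absurd h (by norm_num))
      · simp [hx]
    · refine ⟨arcs q ++ arcs r.reverse, s, s + q.length, ?_, ?_, ?_, ?_, ?_, ?_, ?_⟩
      · rw [toE_append, toE_arcs, toE_arcs, he, SimpleGraph.Walk.edges_reverse]
        exact List.Perm.append_left _ (List.reverse_perm _)
      · omega
      · omega
      · simp [arcs_length]
      · intro u hu
        have iyu : ind y u = 0 := by
          simp only [ind, ite_eq_right_iff]; rintro rfl; exact absurd hy hu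
        simp only [vl_append, nt_append, vl_arcs, nt_arcs, arcs_length, iyu, SimpleGraph.Walk.length_reverse]
        constructor <;> ring
      · intro u hu
        have : u = y := by simpa [hx] using hu
        subst this
        refine ⟨1, by simp, ?_⟩
        simp only [vl_append, nt_append, vl_arcs, nt_arcs, arcs_length, iyy, iay, iby, SimpleGraph.Walk.length_reverse, List.length_append]
        push_cast
        refine ⟨?_, ?_, ?_, ?_⟩ <;> (try ring_nf) <;>
          first | trivial | omega | (intro h; exact absurd h (by norm_num))
      · simp [hx]
  | succ n ih =>
    intro a b p U hc ha hb hs s s0 ε hε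
    obtain ⟨x, hx, q, r, he, hr⟩ := split_first p U (Finset.card_pos.1 (by omega)) hs
    have hcx : (U.erase x).card = 2 * n + 2 := by rw [Finset.card_erase_of_mem hx]; omega
    obtain ⟨y, hy, q', r', he', hr'⟩ := split_first r.reverse (U.erase x)
      (Finset.card_pos.1 (by omega)) (by
        intro u hu
        simpa using hr u (Finset.mem_of_mem_erase hu))
    have hcy : ((U.erase x).erase y).card = 2 * n + 1 := by
      rw [Finset.card_erase_of_mem hy]; omega
    have hyU := Finset.mem_of_mem_erase hy
    have hyx : y ≠ x := Finset.ne_of_mem_erase hy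
    have hax : a ≠ x := by rintro rfl; exact ha hx
    have hbx : b ≠ x := by rintro rfl; exact hb hx
    have hay : a ≠ y := by rintro rfl; exact ha hyU
    have hby : b ≠ y := by rintro rfl; exact hb hyU
    have k1 := length_pos_ne q hax
    have k2 := length_pos_ne q' hby
    obtain ⟨L, pa, pb, hE, h1, h2, h3, h4, h5, h6⟩ := ih r'.reverse ((U.erase x).erase y) hcy
      (by simp) (by simp) (by
        intro u hu
        simpa using hr' u (Finset.mem_of_mem_erase hu)) (s + q.length + q'.length) (by omega) (-ε)
        (by omega)
    have hP : p.edges.Perm (q.edges ++ q'.edges ++ toE L) := by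
      rw [he, List.append_assoc]
      refine List.Perm.append_left _ ?_
      have : r.edges.Perm (q'.edges ++ r'.edges) := by
        rw [← he']; simp [SimpleGraph.Walk.edges_reverse]
      refine this.trans (List.Perm.append_left _ ?_)
      refine (hE.trans ?_).symm
      simp
    have ixx : ind x x = 1 := by simp [ind]
    have iyy : ind y y = 1 := by simp [ind]
    have ixy : ind x y = 0 := by simp [ind, hyx.symm]
    have iyx : ind y x = 0 := by simp [ind, hyx]
    have iax : ind a x = 0 := by simp [ind, hax]
    have ibx : ind b x = 0 := by simp [ind, hbx]
    have iay : ind a y = 0 := by simp [ind, hay]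
    have iby : ind b y = 0 := by simp [ind, hby]
    have h4x := h4 x (by simp)
    have h4y := h4 y (by simp)
    have i0 : ∀ u v, u ∉ U → v ∈ U → ind u v = 0 := by
      intro u v hu hv; simp only [ind, ite_eq_right_iff]; rintro rfl; exact absurd hv hu
    have i0' : ∀ u v, u ∉ U → v ∈ U → ind v u = 0 := by
      intro u v hu hv; simp only [ind, ite_eq_right_iff]; rintro rfl; exact absurd hv hu
    have iU : ∀ u ∈ (U.erase x).erase y, ind a u = 0 ∧ ind b u = 0 ∧ ind x u = 0 ∧ ind y u = 0 := by
      intro u hu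
      simp only [Finset.mem_erase] at hu
      refine ⟨i0 _ _ ha hu.2.2, i0 _ _ hb hu.2.2, ?_, ?_⟩
      · simp [ind, Ne.symm hu.2.1]
      · simp [ind, Ne.symm hu.1]
    have hcases : ∀ u ∈ U, u = x ∨ u = y ∨ u ∈ (U.erase x).erase y := by
      intro u hu; simp only [Finset.mem_erase]; tauto
    rcases hε with rfl | rfl
    · obtain ⟨T, hT⟩ : ∃ T, T = arcs q.reverse ++ arcs q'.reverse ++ L := ⟨_, rfl⟩
      have hTl : (T.length : ℤ) = q.length + q'.length + L.length := by
        rw [hT]; simp [arcs_length]; ring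
      have hv : ∀ u, vl s T u = ((s + q.length) * ind a u - s * ind x u) + ((s + q.length + q'.length) * ind b u -
          (s + q.length) * ind y u) + vl (s + q.length + q'.length) L u := by
        intro u
        rw [hT]
        simp only [vl_append, vl_arcs, arcs_length, SimpleGraph.Walk.length_reverse,
          List.length_append]
        push_cast
        rw [← add_assoc]
      have hn : ∀ u, nt T u = (ind a u - ind x u) + (ind b u - ind y u) + nt L u := by
        intro u
        rw [hT]
        simp only [nt_append, nt_arcs]
      have vx := hv x
      have vy := hv y
      have nx := hn x
      have ny := hn y
      simp only [h4x, h4y, ixx, iyy, ixy, iyx, iax, ibx, iay, iby] at vx vy nx ny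
      have vU : ∀ u ∈ (U.erase x).erase y, vl s T u = vl (s + q.length + q'.length) L u ∧
          nt T u = nt L u := by
        intro u hu
        obtain ⟨e1, e2, e3, e4⟩ := iU u hu
        rw [hv, hn, e1, e2, e3, e4]
        constructor <;> ring
      refine ⟨T, s + q.length, s + q.length + q'.length, ?_, by omega, by omega, by omega, ?_, ?_, ?_⟩
      · refine List.Perm.trans ?_ hP.symm
        rw [hT, toE_append, toE_append, toE_arcs, toE_arcs]
        refine List.Perm.append_right _ ?_
        simp only [SimpleGraph.Walk.edges_reverse]; exact List.Perm.append (List.reverse_perm _) (List.reverse_perm _)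
      · intro u hu
        have e1 := i0' u x hu hx
        have e2 := i0' u y hu hyU
        obtain ⟨f1, f2⟩ := h4 u (by simp [hu])
        rw [hv, hn, f1, f2, e1, e2]
        constructor <;> ring
      · intro u hu
        rcases hcases u hu with rfl | rfl | hu'
        · exact ⟨-1, by simp, by omega, by omega, by omega, by omega⟩
        · exact ⟨-1, by simp, by omega, by omega, by omega, by omega⟩
        · obtain ⟨δ, g1, g2, g3, g4, g5⟩ := h5 u hu'
          obtain ⟨f1, f2⟩ := vU u hu'
          rw [f1, f2]
          exact ⟨δ, g1, g2, by omega, by omega, by omega⟩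
      · have key : ∀ u ∈ (U.erase x).erase y, vl s T u ≠ vl s T x ∧ vl s T u ≠ vl s T y := by
          intro u hu'
          obtain ⟨δ, g1, g2, g3, g4, g5⟩ := h5 u hu'
          obtain ⟨f1, f2⟩ := vU u hu'
          rw [f1, vx, vy]
          rcases g1 with rfl | rfl <;> constructor <;> omega
        intro u hu v hv' huv
        rcases hcases u hu with rfl | rfl | hu' <;> rcases hcases v hv' with rfl | rfl | hw'
        · rfl
        · omega
        · exact absurd huv.symm (key v hw').1
        · omega
        · rfl
        · exact absurd huv.symm (key v hw').2
        · exact absurd huv (key u hu').1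
        · exact absurd huv (key u hu').2
        · rw [(vU u hu').1, (vU v hw').1] at huv
          exact h6 u hu' v hw' huv
    · obtain ⟨T, hT⟩ : ∃ T, T = arcs q ++ arcs q' ++ L := ⟨_, rfl⟩
      have hTl : (T.length : ℤ) = q.length + q'.length + L.length := by
        rw [hT]; simp [arcs_length]; ring
      have hv : ∀ u, vl s T u = ((s + q.length) * ind x u - s * ind a u) + ((s + q.length + q'.length) * ind y u -
          (s + q.length) * ind b u) + vl (s + q.length + q'.length) L u := by
        intro u
        rw [hT]
        simp only [vl_append, vl_arcs, arcs_length, SimpleGraph.Walk.length_reverse,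
          List.length_append]
        push_cast
        rw [← add_assoc]
      have hn : ∀ u, nt T u = (ind x u - ind a u) + (ind y u - ind b u) + nt L u := by
        intro u
        rw [hT]
        simp only [nt_append, nt_arcs]
      have vx := hv x
      have vy := hv y
      have nx := hn x
      have ny := hn y
      simp only [h4x, h4y, ixx, iyy, ixy, iyx, iax, ibx, iay, iby] at vx vy nx ny
      have vU : ∀ u ∈ (U.erase x).erase y, vl s T u = vl (s + q.length + q'.length) L u ∧
          nt T u = nt L u := by
        intro u hu
        obtain ⟨e1, e2, e3, e4⟩ := iU u hu
        rw [hv, hn, e1, e2, e3, e4]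
        constructor <;> ring
      refine ⟨T, s, s + q.length, ?_, by omega, by omega, by omega, ?_, ?_, ?_⟩
      · refine List.Perm.trans ?_ hP.symm
        rw [hT, toE_append, toE_append, toE_arcs, toE_arcs]
      · intro u hu
        have e1 := i0' u x hu hx
        have e2 := i0' u y hu hyU
        obtain ⟨f1, f2⟩ := h4 u (by simp [hu])
        rw [hv, hn, f1, f2, e1, e2]
        constructor <;> ring
      · intro u hu
        rcases hcases u hu with rfl | rfl | hu'
        · exact ⟨1, by simp, by omega, by omega, by omega, by omega⟩
        · exact ⟨1, by simp, by omega, by omega, by omega, by omega⟩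
        · obtain ⟨δ, g1, g2, g3, g4, g5⟩ := h5 u hu'
          obtain ⟨f1, f2⟩ := vU u hu'
          rw [f1, f2]
          exact ⟨δ, g1, g2, by omega, by omega, by omega⟩
      · have key : ∀ u ∈ (U.erase x).erase y, vl s T u ≠ vl s T x ∧ vl s T u ≠ vl s T y := by
          intro u hu'
          obtain ⟨δ, g1, g2, g3, g4, g5⟩ := h5 u hu'
          obtain ⟨f1, f2⟩ := vU u hu'
          rw [f1, vx, vy]
          rcases g1 with rfl | rfl <;> constructor <;> omega
        intro u hu v hv' huv
        rcases hcases u hu with rfl | rfl | hu' <;> rcases hcases v hv' with rfl | rfl | hw'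
        · rfl
        · omega
        · exact absurd huv.symm (key v hw').1
        · omega
        · rfl
        · exact absurd huv.symm (key v hw').2
        · exact absurd huv (key u hu').1
        · exact absurd huv (key u hu').2
        · rw [(vU u hu').1, (vU v hw').1] at huv
          exact h6 u hu' v hw' huv
end

theorem euler {V : Type*} [Fintype V] [DecidableEq V] (G : SimpleGraph V) [DecidableRel G.Adj]
    (hev : ∀ v, Even (G.degree v)) (x0 : V) :
    ∃ (a : V) (p : G.Walk a a), p.IsTrail ∧ G.Reachable x0 a ∧
      (∀ v, G.Reachable x0 v ↔ v ∈ p.support) ∧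
      (∀ v w, G.Reachable x0 v → G.Adj v w → s(v, w) ∈ p.edges) := by
  classical
  let P : ℕ → Prop := fun n => ∃ (a b : V) (p : G.Walk a b), G.Reachable x0 a ∧ p.IsTrail ∧
    p.length = n
  have hP0 : P 0 := ⟨x0, x0, .nil, .refl _, by simp, rfl⟩
  have hbd : ∀ n, P n → n ≤ #G.edgeFinset := by
    rintro n ⟨a, b, p, -, hp, rfl⟩
    exact hp.length_le_card_edgeFinset
  obtain ⟨a, b, p, ha, hp, hl⟩ := Nat.findGreatest_spec (P := P) (Nat.zero_le (#G.edgeFinset)) hP0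
  have hmax : ∀ n, P n → n ≤ p.length := by
    intro n hn
    rw [hl]
    exact Nat.le_findGreatest (hbd n hn) hn
  have hend : ∀ {a b : V} (q : G.Walk a b), G.Reachable x0 a → q.IsTrail → q.length = p.length →
      ∀ z, G.Adj z a → s(z, a) ∈ q.edges := by
    intro a b q ha hq hlen z hz
    by_contra hne
    have := hmax (q.length + 1) ⟨z, b, .cons hz q, ha.trans hz.symm.reachable,
      by simp [SimpleGraph.Walk.isTrail_cons, hq, hne], by simp⟩
    omega
  have hab : a = b := by
    by_contra hab
    have hodd := (hp.even_countP_edges_iff a).not.2 (by simp [hab])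
    apply hodd
    have h1 : p.edges.countP (fun e => a ∈ e) = G.degree a := by
      rw [← G.card_incidenceFinset_eq_degree, G.incidenceFinset_eq_filter,
        List.countP_eq_length_filter, ← List.toFinset_card_of_nodup (hp.edges_nodup.filter _)]
      congr 1
      ext e
      simp only [List.mem_toFinset, List.mem_filter, Finset.mem_filter, decide_eq_true_eq,
        SimpleGraph.mem_edgeFinset]
      constructor
      · rintro ⟨h, h'⟩; exact ⟨p.edges_subset_edgeSet h, h'⟩
      · rintro ⟨h, h'⟩
        refine ⟨?_, h'⟩
        obtain ⟨z, rfl⟩ := h'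
        rw [Sym2.eq_swap]
        exact hend p ha hp rfl z (by simpa using h.symm)
    rw [h1]; exact hev a
  subst hab
  have hinc : ∀ v ∈ p.support, ∀ w, G.Adj v w → s(v, w) ∈ p.edges := by
    intro v hv w hvw
    have := hend (p.rotate v hv) (ha.trans ⟨p.takeUntil v hv⟩) (hp.rotate hv) (by simp) w hvw.symm
    rw [(p.rotate_edges v hv).mem_iff, Sym2.eq_swap] at this
    exact this
  have hsup : ∀ v, G.Reachable x0 v ↔ v ∈ p.support := by
    intro v
    constructor
    · intro h
      obtain ⟨q⟩ := ha.symm.trans h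
      have : ∀ {x y : V} (q : G.Walk x y), x ∈ p.support → y ∈ p.support := by
        intro x y q
        induction q with
        | nil => exact id
        | cons h q ih =>
          intro hx
          exact ih (p.snd_mem_support_of_mem_edges (hinc _ hx _ h))
      exact this q p.start_mem_support
    · intro h
      exact ha.trans ⟨p.takeUntil v h⟩
  exact ⟨a, p, hp, ha, hsup, fun v w hv hvw => hinc v ((hsup v).1 hv) w hvw⟩

def sc {V : Type*} [DecidableEq V] (s : ℤ) (L : List (V × V)) (u : V) : ℤ :=
  2 * vl s L u + nt L u

/-- `L` lists (with some direction) every edge with an end in `W` exactly once. -/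
def Cov {V : Type*} (G : SimpleGraph V) (W : Finset V) (L : List (V × V)) : Prop :=
  (toE L).Nodup ∧ ∀ v w, s(v, w) ∈ toE L ↔ G.Adj v w ∧ v ∈ W

def Bd (s m z : ℤ) : Prop :=
  (4 * s < z ∧ z ≤ 4 * (s + m)) ∨ (4 * s < -z ∧ -z ≤ 4 * (s + m))

section
variable {V : Type*} [DecidableEq V] {G : SimpleGraph V}

theorem zero_of_not_mem (L : List (V × V)) (u : V) (h : ∀ w, s(u, w) ∉ toE L) (s : ℤ) :
    vl s L u = 0 ∧ nt L u = 0 := by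
  induction L generalizing s with
  | nil => simp [vl, nt]
  | cons a L ih =>
    have h1 : a.1 ≠ u := by
      rintro rfl
      exact h a.2 (by simp [toE])
    have h2 : a.2 ≠ u := by
      rintro rfl
      apply h a.1
      rw [Sym2.eq_swap]
      simp [toE]
    obtain ⟨i1, i2⟩ := ih (by
      intro w hw
      apply h w
      simp only [toE, List.map_cons, List.mem_cons] at hw ⊢
      exact Or.inr hw) (s + 1)
    simp [vl, nt, i1, i2, ind, h1, h2]

theorem sc_zero {W : Finset V} {L : List (V × V)} (h : Cov G W L) (s : ℤ) (u : V) (hu : u ∉ W) :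
    sc s L u = 0 := by
  obtain ⟨h1, h2⟩ := zero_of_not_mem L u (fun w hw => hu ((h.2 u w).1 hw).2) s
  simp [sc, h1, h2]

theorem sc_append (s : ℤ) (L M : List (V × V)) (u : V) :
    sc s (L ++ M) u = sc s L u + sc (s + L.length) M u := by
  simp only [sc, vl_append, nt_append]; ring

theorem Cov.union {W K : Finset V} {L M : List (V × V)} (h : Cov G W L) (h' : Cov G K M)
    (hd : ∀ v ∈ W, v ∉ K) : Cov G (W ∪ K) (L ++ M) := by
  refine ⟨?_, ?_⟩
  · rw [toE_append]
    refine List.Nodup.append h.1 h'.1 ?_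
    intro e
    induction e with
    | h v w =>
      intro h1 h2
      exact hd v ((h.2 v w).1 h1).2 ((h'.2 v w).1 h2).2
  · intro v w
    rw [toE_append, List.mem_append, h.2, h'.2, Finset.mem_union]
    tauto

/-- Appending a block. -/
theorem glue {W K : Finset V} {L M : List (V × V)} (h : Cov G W L) (h' : Cov G K M)
    (hd : ∀ v ∈ W, v ∉ K) (hi : ∀ u ∈ W, ∀ v ∈ W, sc 0 L u = sc 0 L v → u = v)
    (hi' : ∀ u ∈ K, ∀ v ∈ K, sc L.length M u = sc L.length M v → u = v)
    (hb : ∀ u ∈ W, Bd 0 L.length (sc 0 L u))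
    (hb' : ∀ u ∈ K, sc L.length M u = 0 ∨ Bd L.length M.length (sc L.length M u)) :
    Cov G (W ∪ K) (L ++ M) ∧
    (∀ u ∈ W, sc 0 (L ++ M) u = sc 0 L u) ∧ (∀ u ∈ K, sc 0 (L ++ M) u = sc L.length M u) ∧
    (∀ u ∈ W ∪ K, ∀ v ∈ W ∪ K, sc 0 (L ++ M) u = sc 0 (L ++ M) v → u = v) := by
  have e1 : ∀ u ∈ W, sc 0 (L ++ M) u = sc 0 L u := by
    intro u hu
    rw [sc_append, sc_zero h' _ u (hd u hu), add_zero]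
  have e2 : ∀ u ∈ K, sc 0 (L ++ M) u = sc L.length M u := by
    intro u hu
    rw [sc_append, sc_zero h _ u (fun hw => hd u hw hu), zero_add, zero_add]
  have key : ∀ u ∈ W, ∀ v ∈ K, sc 0 (L ++ M) u ≠ sc 0 (L ++ M) v := by
    intro u hu v hv
    rw [e1 u hu, e2 v hv]
    have a1 := hb u hu
    have a2 := hb' v hv
    unfold Bd at a1 a2
    omega
  refine ⟨h.union h' hd, e1, e2, ?_⟩
  intro u hu v hv huv
  rcases Finset.mem_union.1 hu with hu | hu <;> rcases Finset.mem_union.1 hv with hv | hv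
  · rw [e1 u hu, e1 v hv] at huv; exact hi u hu v hv huv
  · exact absurd huv (key u hu v hv)
  · exact absurd huv.symm (key v hv u hu)
  · rw [e2 u hu, e2 v hv] at huv; exact hi' u hu v hv huv

theorem cov_of_perm {a b : V} {p : G.Walk a b} {K : Finset V} {L : List (V × V)}
    (hp : p.IsTrail) (hK : ∀ v w, s(v, w) ∈ p.edges ↔ G.Adj v w ∧ v ∈ K)
    (h : (toE L).Perm p.edges) : Cov G K L :=
  ⟨h.nodup_iff.2 hp.edges_nodup, fun v w => by rw [h.mem_iff, hK]⟩

theorem block_main {a : V} {p : G.Walk a a} {K : Finset V} (hp : p.IsTrail)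
    (hK : ∀ v w, s(v, w) ∈ p.edges ↔ G.Adj v w ∧ v ∈ K) (hS : ∀ v, v ∈ K ↔ v ∈ p.support)
    (U : Finset V) (hU : U ⊆ K) (haU : a ∉ U) (hUodd : Odd #U) (s : ℤ) (hs : 0 ≤ s)
    (hUr : ∀ u ∈ K, ∀ v ∈ K, u ∉ insert a U → v ∉ insert a U → u = v) :
    ∃ L, Cov G K L ∧ (∀ u ∈ K, ∀ v ∈ K, sc s L u = sc s L v → u = v) ∧
      (∀ u ∈ insert a U, Bd s L.length (sc s L u)) ∧ (∀ u ∉ insert a U, sc s L u = 0) := by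
  obtain ⟨n, hn⟩ := hUodd
  obtain ⟨L, pa, pb, h0, h1, h2, h3, h4, h5, h6⟩ := peel n p U hn haU haU
    (fun u hu => (hS u).1 (hU hu)) s hs (-1) (by simp)
  have sca : sc s L a = -2 * (pa + pb) - 2 := by
    obtain ⟨e1, e2⟩ := h4 a haU
    simp only [sc, e1, e2, ind]
    simp; ring
  have scU : ∀ u ∈ U, (4 * s < sc s L u ∧ sc s L u ≤ 4 * (s + L.length) ∧
      sc s L u = 2 * vl s L u + 2) ∨
      (4 * pb + 2 < - sc s L u ∧ 4 * s < - sc s L u ∧ - sc s L u ≤ 4 * (s + L.length) ∧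
        sc s L u = 2 * vl s L u - 2) := by
    intro u hu
    obtain ⟨δ, g1, g2, g3, g4, g5⟩ := h5 u hu
    unfold sc
    rcases g1 with rfl | rfl
    · left; omega
    · right; have := g5 rfl; omega
  have sc0 : ∀ u ∉ insert a U, sc s L u = 0 := by
    intro u hu
    simp only [Finset.mem_insert, not_or] at hu
    obtain ⟨e1, e2⟩ := h4 u hu.2
    simp [sc, e1, e2, ind, Ne.symm hu.1]
  have scB : ∀ u ∈ insert a U, Bd s L.length (sc s L u) := by
    intro u hu
    unfold Bd
    rcases Finset.mem_insert.1 hu with rfl | hu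
    · rw [sca]; omega
    · have := scU u hu
      omega
  refine ⟨L, cov_of_perm hp hK h0, ?_, scB, sc0⟩
  intro u hu v hv huv
  by_cases hu' : u ∈ insert a U <;> by_cases hv' : v ∈ insert a U
  · rcases Finset.mem_insert.1 hu' with rfl | hu'' <;> rcases Finset.mem_insert.1 hv' with rfl | hv''
    · rfl
    · have := scU v hv''; omega
    · have := scU u hu''; omega
    · apply h6 u hu'' v hv''
      have := scU v hv''
      have := scU u hu''
      omega
  · have a1 := scB u hu'
    have a2 := sc0 v hv'
    unfold Bd at a1; omega
  · have a1 := scB v hv'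
    have a2 := sc0 u hu'
    unfold Bd at a1; omega
  · exact hUr u hu v hv hu' hv'

theorem block_even {a : V} {p : G.Walk a a} {K : Finset V} (hp : p.IsTrail)
    (hK : ∀ v w, s(v, w) ∈ p.edges ↔ G.Adj v w ∧ v ∈ K) (hS : ∀ v, v ∈ K ↔ v ∈ p.support)
    (hev : Even #K) (s : ℤ) (hs : 0 ≤ s) :
    ∃ L, Cov G K L ∧ (∀ u ∈ K, ∀ v ∈ K, sc s L u = sc s L v → u = v) ∧
      (∀ u ∈ K, Bd s L.length (sc s L u)) := by
  have ha : a ∈ K := (hS a).2 p.start_mem_support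
  have hpos := Finset.card_pos.2 ⟨a, ha⟩
  obtain ⟨L, h1, h2, h3, -⟩ := block_main hp hK hS (K.erase a) (Finset.erase_subset _ _) (by simp)
    (by rw [Finset.card_erase_of_mem ha]; obtain ⟨k, hk⟩ := hev; exact ⟨k - 1, by omega⟩) s hs
    (by intro u hu v hv hu'; rw [Finset.insert_erase ha] at hu'; exact absurd hu hu')
  rw [Finset.insert_erase ha] at h3
  exact ⟨L, h1, h2, h3⟩

theorem block_last {a : V} {p : G.Walk a a} {K : Finset V} (hp : p.IsTrail)
    (hK : ∀ v w, s(v, w) ∈ p.edges ↔ G.Adj v w ∧ v ∈ K) (hS : ∀ v, v ∈ K ↔ v ∈ p.support)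
    (hev : Odd #K) (h3 : 3 ≤ #K) (s : ℤ) (hs : 0 ≤ s) :
    ∃ L, Cov G K L ∧ (∀ u ∈ K, ∀ v ∈ K, sc s L u = sc s L v → u = v) ∧
      (∀ u ∈ K, sc s L u = 0 ∨ Bd s L.length (sc s L u)) := by
  have ha : a ∈ K := (hS a).2 p.start_mem_support
  have c1 := Finset.card_erase_of_mem ha
  obtain ⟨w, hw⟩ : (K.erase a).Nonempty := Finset.card_pos.1 (by omega)
  have c2 := Finset.card_erase_of_mem hw
  have hm : ∀ u ∈ K, u ∉ insert a ((K.erase a).erase w) → u = w := by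
    intro u hu h
    simp only [Finset.mem_insert, Finset.mem_erase] at h
    tauto
  obtain ⟨L, h1, h2, h3, h4⟩ := block_main hp hK hS ((K.erase a).erase w)
    ((Finset.erase_subset _ _).trans (Finset.erase_subset _ _)) (by simp)
    (by obtain ⟨k, hk⟩ := hev; exact ⟨k - 1, by omega⟩) s hs
    (by intro u hu v hv hu' hv'; rw [hm u hu hu', hm v hv hv'])
  refine ⟨L, h1, h2, ?_⟩
  intro u _
  by_cases h : u ∈ insert a ((K.erase a).erase w)
  · exact Or.inr (h3 u h)
  · exact Or.inl (h4 u h)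

theorem block_first {a : V} {p : G.Walk a a} {K : Finset V} (hp : p.IsTrail)
    (hK : ∀ v w, s(v, w) ∈ p.edges ↔ G.Adj v w ∧ v ∈ K) (hS : ∀ v, v ∈ K ↔ v ∈ p.support)
    (hev : Odd #K) (hc3 : 3 ≤ #K) :
    ∃ L, Cov G K L ∧ (∀ u ∈ K, ∀ v ∈ K, sc 0 L u = sc 0 L v → u = v) ∧
      (∀ u ∈ K, Bd 0 L.length (sc 0 L u)) := by
  have ha : a ∈ K := (hS a).2 p.start_mem_support
  cases p with
  | nil =>
    exfalso
    have : K = {a} := by ext v; simp [hS]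
    rw [this] at hc3; simp at hc3
  | cons h q =>
    rename_i w
    have hw : w ∈ K := (hS w).2 (by simp)
    have haw : a ≠ w := h.ne
    have c1 := Finset.card_erase_of_mem ha
    have c2 := Finset.card_erase_of_mem (show w ∈ K.erase a by simp [hw, haw.symm])
    obtain ⟨k, hk⟩ := hev
    set U := (K.erase a).erase w with hUdef
    have hm : ∀ u ∈ K, u = a ∨ u = w ∨ u ∈ U := by
      intro u hu
      simp only [hUdef, Finset.mem_erase]
      tauto
    have haU : a ∉ U := by simp [hUdef]
    have hwU : w ∉ U := by simp [hUdef]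
    obtain ⟨L, pa, pb, h0, h1, h2, h3, h4, h5, h6⟩ := peel (k - 1) q U (by omega) hwU haU
      (by
        intro u hu
        simp only [hUdef, Finset.mem_erase] at hu
        have := (hS u).1 hu.2.2
        simp only [SimpleGraph.Walk.support_cons, List.mem_cons] at this
        tauto) 1 (by norm_num) 1 (by simp)
    have hsc : ∀ u, sc 0 ((w, a) :: L) u = 2 * (ind a u + vl 1 L u) + (ind a u - ind w u + nt L u) := by
      intro u; simp [sc, vl, nt]
    have sca : sc 0 ((w, a) :: L) a = 2 * pb + 4 := by
      obtain ⟨e1, e2⟩ := h4 a haU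
      rw [hsc, e1, e2]
      simp [ind, haw.symm]; ring
    have scw : sc 0 ((w, a) :: L) w = 2 * pa := by
      obtain ⟨e1, e2⟩ := h4 w hwU
      rw [hsc, e1, e2]
      simp [ind, haw]
    have hl : (((w, a) :: L).length : ℤ) = L.length + 1 := by simp
    have scU : ∀ u ∈ U, (4 * pb + 2 < sc 0 ((w, a) :: L) u ∧
        sc 0 ((w, a) :: L) u ≤ 4 * (L.length + 1) ∧
        sc 0 ((w, a) :: L) u = 2 * vl 1 L u + 2) ∨
        (0 < - sc 0 ((w, a) :: L) u ∧ - sc 0 ((w, a) :: L) u ≤ 4 * (L.length + 1) ∧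
        sc 0 ((w, a) :: L) u = 2 * vl 1 L u - 2) := by
      intro u hu
      obtain ⟨δ, g1, g2, g3, g4, g5⟩ := h5 u hu
      have ia : ind a u = 0 := by
        simp only [ind, ite_eq_right_iff]; rintro rfl; exact absurd hu haU
      have iw : ind w u = 0 := by
        simp only [ind, ite_eq_right_iff]; rintro rfl; exact absurd hu hwU
      rw [hsc, ia, iw]
      rcases g1 with rfl | rfl
      · left; have := g5 rfl; omega
      · right; omega
    refine ⟨(w, a) :: L, cov_of_perm hp hK ?_, ?_, ?_⟩
    · have : toE ((w, a) :: L) = s(a, w) :: toE L := by simp [toE, Sym2.eq_swap]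
      rw [this, SimpleGraph.Walk.edges_cons]
      exact List.Perm.cons _ h0
    · intro u hu v hv huv
      rcases hm u hu with rfl | rfl | hu' <;> rcases hm v hv with rfl | rfl | hv'
      · rfl
      · omega
      · have := scU v hv'; omega
      · omega
      · rfl
      · have := scU v hv'; omega
      · have := scU u hu'; omega
      · have := scU u hu'; omega
      · apply h6 u hu' v hv'
        have := scU v hv'
        have := scU u hu'
        omega
    · intro u hu
      unfold Bd
      rw [hl]
      rcases hm u hu with rfl | rfl | hu'
      · omega
      · omega
      · have := scU u hu'; omega

end

def dg {V : Type*} [DecidableEq V] : List (V × V) → V → ℤ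
  | [], _ => 0
  | a :: L, u => ind a.2 u + ind a.1 u + dg L u

section
variable {V : Type*} [DecidableEq V] {G : SimpleGraph V}

theorem sum_idx (L : List (V × V)) (hL : L.Nodup) (s : ℤ) (u : V) :
    2 * ∑ a ∈ L.toFinset, (s + 1 + (L.idxOf a : ℤ)) * (ind a.2 u - ind a.1 u) =
      sc s L u - dg L u := by
  induction L generalizing s with
  | nil => simp [sc, vl, nt, dg]
  | cons b L ih =>
    obtain ⟨hb, hL'⟩ := List.nodup_cons.1 hL
    rw [List.toFinset_cons, Finset.sum_insert (by simpa using hb)]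
    have : ∑ a ∈ L.toFinset, (s + 1 + ((b :: L).idxOf a : ℤ)) * (ind a.2 u - ind a.1 u) =
        ∑ a ∈ L.toFinset, (s + 1 + 1 + (L.idxOf a : ℤ)) * (ind a.2 u - ind a.1 u) := by
      refine Finset.sum_congr rfl ?_
      intro a ha
      have hne : b ≠ a := by rintro rfl; exact hb (by simpa using ha)
      rw [List.idxOf_cons_ne _ hne]
      push_cast; ring
    rw [this, mul_add, ih hL' (s + 1)]
    simp only [List.idxOf_cons_self, sc, vl, nt, dg]
    push_cast; ring

theorem dg_eq (L : List (V × V)) (hL : ∀ a ∈ L, a.1 ≠ a.2) (u : V) :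
    dg L u = ((toE L).countP (fun e => u ∈ e) : ℤ) := by
  induction L with
  | nil => simp [dg, toE]
  | cons b L ih =>
    have hb := hL b (by simp)
    have ih' := ih (fun a ha => hL a (by simp [ha]))
    simp only [toE] at ih'
    simp only [dg, toE, List.map_cons, List.countP_cons, ih']
    by_cases h1 : b.1 = u
    · have h2 : b.2 ≠ u := fun h => hb (h1.trans h.symm)
      simp [ind, h1, h2]; ring
    · by_cases h2 : b.2 = u
      · simp [ind, h1, h2]; ring
      · simp [ind, h1, h2, Ne.symm h1, Ne.symm h2]

theorem vertexSum_eq (A : Finset (V × V)) (c : V × V → ℤ) (u : V) :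
    vertexSum A c u = ∑ a ∈ A, c a * (ind a.2 u - ind a.1 u) := by
  unfold vertexSum
  rw [Finset.sum_filter, Finset.sum_filter, ← Finset.sum_sub_distrib]
  refine Finset.sum_congr rfl ?_
  intro a _
  simp only [ind]
  split_ifs <;> ring
end

theorem finish {V : Type*} [Fintype V] [DecidableEq V]
    (G : SimpleGraph V) [DecidableRel G.Adj] (d : ℕ)
    (hreg : ∀ v : V, G.degree v = 2 * d) (L : List (V × V)) (hL : Cov G Finset.univ L)
    (hi : ∀ u v, sc 0 L u = sc 0 L v → u = v) :
    ∃ (A : Finset (V × V)) (c : V × V → ℤ),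
      IsOrientation G A ∧
      Set.BijOn c ↑A (Set.Icc 1 (G.edgeFinset.card : ℤ)) ∧
      Pairwise fun u v : V => vertexSum A c u ≠ vertexSum A c v := by
  have hnd : L.Nodup := List.Nodup.of_map _ hL.1
  have hadj : ∀ u v, G.Adj u v ↔ s(u, v) ∈ toE L := by
    intro u v; rw [hL.2]; simp
  have hne : ∀ a ∈ L, a.1 ≠ a.2 := by
    intro a ha
    have : G.Adj a.1 a.2 := (hadj _ _).2 (List.mem_map_of_mem ha)
    exact this.ne
  have hfin : (toE L).toFinset = G.edgeFinset := by
    ext e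
    induction e with
    | h u v => simp [← hadj]
  have hlen : L.length = #G.edgeFinset := by
    rw [← hfin, List.toFinset_card_of_nodup hL.1]; simp [toE]
  refine ⟨L.toFinset, fun a => 0 + 1 + (L.idxOf a : ℤ), ⟨?_, ?_⟩, ⟨?_, ?_, ?_⟩, ?_⟩
  · intro u v
    rw [hadj]
    simp only [toE, List.mem_map, List.mem_toFinset]
    constructor
    · rintro ⟨a, ha, he⟩
      rcases Sym2.eq_iff.1 he with ⟨h1, h2⟩ | ⟨h1, h2⟩
      · left; rw [← h1, ← h2]; exact ha
      · right; rw [← h1, ← h2]; exact ha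
    · rintro (h | h)
      · exact ⟨_, h, rfl⟩
      · exact ⟨_, h, Sym2.eq_swap⟩
  · rintro u v ⟨h1, h2⟩
    simp only [List.mem_toFinset] at h1 h2
    have := List.inj_on_of_nodup_map hL.1 h1 h2 Sym2.eq_swap
    exact hne _ h1 (congrArg Prod.fst this)
  · intro a ha
    have : L.idxOf a < L.length := List.idxOf_lt_length_iff.2 (by simpa using ha)
    simp only [Set.mem_Icc]
    omega
  · intro a ha b hb hab
    have h1 : L.idxOf a = L.idxOf b := by simpa using hab
    exact (List.idxOf_inj (by simpa using ha)).1 h1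
  · intro z hz
    simp only [Set.mem_Icc] at hz
    obtain ⟨k, hk⟩ : ∃ k : ℕ, z = 1 + k := ⟨(z - 1).toNat, by omega⟩
    have hk' : k < L.length := by omega
    refine ⟨L[k], by simp, ?_⟩
    simp only [hnd.idxOf_getElem k hk']
    omega
  · intro u v huv h
    apply huv
    apply hi
    rw [vertexSum_eq, vertexSum_eq] at h
    have e1 := sum_idx L hnd 0 u
    have e2 := sum_idx L hnd 0 v
    have hdeg : ∀ u, dg L u = 2 * d := by
      intro u
      rw [dg_eq L hne]
      have : (toE L).countP (fun e => u ∈ e) = G.degree u := by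
        rw [← G.card_incidenceFinset_eq_degree, G.incidenceFinset_eq_filter,
          List.countP_eq_length_filter, ← List.toFinset_card_of_nodup (hL.1.filter _),
          List.toFinset_filter, hfin]
        simp
      rw [this, hreg]; push_cast; ring
    rw [hdeg] at e1 e2
    omega

theorem comp_trail {V : Type*} [Fintype V] [DecidableEq V]
    (G : SimpleGraph V) [DecidableRel G.Adj] (d : ℕ) (hd : 2 ≤ d)
    (hreg : ∀ v : V, G.degree v = 2 * d) (C : G.ConnectedComponent) (K : Finset V)
    (hKC : ∀ v, v ∈ K ↔ G.connectedComponentMk v = C) :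
    3 ≤ #K ∧ ∃ (a : V) (p : G.Walk a a), p.IsTrail ∧
      (∀ v w, s(v, w) ∈ p.edges ↔ G.Adj v w ∧ v ∈ K) ∧ (∀ v, v ∈ K ↔ v ∈ p.support) := by
  induction C using SimpleGraph.ConnectedComponent.ind with
  | h x0 =>
    have hKR : ∀ v, v ∈ K ↔ G.Reachable x0 v := by
      intro v
      rw [hKC, SimpleGraph.ConnectedComponent.eq]
      exact ⟨fun h => h.symm, fun h => h.symm⟩
    refine ⟨?_, ?_⟩
    · have : G.neighborFinset x0 ⊆ K := by
        intro v hv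
        rw [hKR]
        exact SimpleGraph.Adj.reachable (by simpa using hv)
      have := Finset.card_le_card this
      rw [SimpleGraph.card_neighborFinset_eq_degree, hreg] at this
      omega
    · obtain ⟨a, p, h1, h2, h3, h4⟩ := euler G (fun v => by rw [hreg]; simp) x0
      refine ⟨a, p, h1, ?_, fun v => by rw [hKR, h3]⟩
      intro v w
      constructor
      · intro h
        exact ⟨p.adj_of_mem_edges h, by rw [hKR, h3]; exact p.fst_mem_support_of_mem_edges h⟩
      · rintro ⟨h, h'⟩
        exact h4 v w ((hKR v).1 h') h

/-- For d ≥ 2, every 2d-regular simple graph with at most two odd components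
(components with an odd number of vertices) admits an antimagic orientation. -/
theorem even_regular_at_most_two_odd_components_antimagic_orientation
    {V : Type*} [Fintype V] [DecidableEq V]
    (G : SimpleGraph V) [DecidableRel G.Adj] (d : ℕ) (hd : 2 ≤ d)
    (hreg : ∀ v : V, G.degree v = 2 * d)
    (hodd : {c : G.ConnectedComponent | Odd c.supp.ncard}.ncard ≤ 2) :
    ∃ (A : Finset (V × V)) (c : V × V → ℤ),
      IsOrientation G A ∧
      Set.BijOn c ↑A (Set.Icc 1 (G.edgeFinset.card : ℤ)) ∧
      Pairwise fun u v : V => vertexSum A c u ≠ vertexSum A c v := by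
  classical
  let K : G.ConnectedComponent → Finset V := fun C => univ.filter (fun v => G.connectedComponentMk v = C)
  let W : Finset G.ConnectedComponent → Finset V :=
    fun S => univ.filter (fun v => G.connectedComponentMk v ∈ S)
  have hK : ∀ C v, v ∈ K C ↔ G.connectedComponentMk v = C := by intro C v; simp [K]
  have hcard : ∀ C : G.ConnectedComponent, C.supp.ncard = #(K C) := by
    intro C
    rw [← Set.ncard_coe_finset]
    congr 1
    ext v
    simp [K]
  let O : Finset G.ConnectedComponent := univ.filter (fun C => Odd #(K C))
  have hO : #O ≤ 2 := by
    refine le_trans (le_of_eq ?_) hodd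
    rw [← Set.ncard_coe_finset]
    congr 1
    ext C
    simp [O, hcard]
  let P : Finset G.ConnectedComponent → Prop := fun S =>
    ∃ L, Cov G (W S) L ∧ (∀ u ∈ W S, ∀ v ∈ W S, sc 0 L u = sc 0 L v → u = v) ∧
      ∀ u ∈ W S, Bd 0 L.length (sc 0 L u)
  have hW : ∀ S C, W (insert C S) = W S ∪ K C := by
    intro S C
    ext v
    simp [W, K, or_comm]
  have hWd : ∀ S C, C ∉ S → ∀ v ∈ W S, v ∉ K C := by
    intro S C hC v hv hv'
    simp only [W, K, Finset.mem_filter, Finset.mem_univ, true_and] at hv hv'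
    rw [hv'] at hv
    exact hC hv
  have hP0 : P ∅ := ⟨[], ⟨by simp [toE], by simp [toE, W]⟩, by simp [W], by simp [W]⟩
  have hP1 : ∀ C, C ∈ O → P {C} := by
    intro C hC
    obtain ⟨h3, a, p, hp, e1, e2⟩ := comp_trail G d hd hreg C (K C) (hK C)
    have hWC : W {C} = K C := by ext v; simp [W, K]
    have := block_first hp e1 e2 (by simpa [O] using hC) h3
    simp only [P, hWC]
    exact this
  have hPs : ∀ S C, C ∉ S → C ∉ O → P S → P (insert C S) := by
    rintro S C hC hCO ⟨L, h1, h2, h3⟩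
    obtain ⟨-, a, p, hp, e1, e2⟩ := comp_trail G d hd hreg C (K C) (hK C)
    obtain ⟨M, g1, g2, g3⟩ := block_even hp e1 e2 (by simpa [O] using hCO) (L.length : ℤ) (by omega)
    obtain ⟨f1, f2, f3, f4⟩ := glue h1 g1 (hWd S C hC) h2 g2 h3 (fun u hu => Or.inr (g3 u hu))
    refine ⟨L ++ M, ?_⟩
    rw [hW]
    refine ⟨f1, f4, ?_⟩
    intro u hu
    rcases Finset.mem_union.1 hu with hu | hu
    · rw [f2 u hu]
      have := h3 u hu
      unfold Bd at this ⊢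
      rw [List.length_append]; push_cast; omega
    · rw [f3 u hu]
      have := g3 u hu
      unfold Bd at this ⊢
      rw [List.length_append]; push_cast; omega
  have hPu : ∀ S0 T : Finset G.ConnectedComponent, P S0 → (∀ C ∈ T, C ∉ O) → P (S0 ∪ T) := by
    intro S0 T h0 hT
    induction T using Finset.induction_on with
    | empty => simpa using h0
    | insert C T hC ih =>
      have ih' := ih (fun D hD => hT D (by simp [hD]))
      rw [Finset.union_insert]
      by_cases hm : C ∈ S0 ∪ T
      · rw [Finset.insert_eq_of_mem hm]; exact ih'
      · exact hPs _ C hm (hT C (by simp)) ih'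
  have hWu : W univ = univ := by ext v; simp [W]
  have hfin : P univ → ∃ L, Cov G univ L ∧ ∀ u v, sc 0 L u = sc 0 L v → u = v := by
    rintro ⟨L, h1, h2, -⟩
    rw [hWu] at h1 h2
    exact ⟨L, h1, fun u v => h2 u (by simp) v (by simp)⟩
  suffices ∃ L, Cov G univ L ∧ ∀ u v, sc 0 L u = sc 0 L v → u = v by
    obtain ⟨L, h1, h2⟩ := this
    exact finish G d hreg L h1 h2
  have hcase : #O = 0 ∨ #O = 1 ∨ #O = 2 := by omega
  rcases hcase with h | h | h
  · apply hfin
    have hOe := Finset.card_eq_zero.1 h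
    have := hPu ∅ univ hP0 (by simp [hOe])
    simpa using this
  · apply hfin
    obtain ⟨C, hC⟩ := Finset.card_eq_one.1 h
    have := hPu {C} (univ \ {C}) (hP1 C (by simp [hC])) (by simp [hC])
    rwa [Finset.union_sdiff_of_subset (by simp)] at this
  · obtain ⟨C, D, hCD, hO2⟩ := Finset.card_eq_two.1 h
    obtain ⟨L, h1, h2, h3⟩ := hPu {C} (univ \ {C, D}) (hP1 C (by simp [hO2])) (by simp [hO2])
    have hDn : D ∉ ({C} ∪ (univ \ {C, D}) : Finset G.ConnectedComponent) := by
      simp [hCD.symm]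
    obtain ⟨c3, a, p, hp, e1, e2⟩ := comp_trail G d hd hreg D (K D) (hK D)
    have hDO : D ∈ O := by simp [hO2]
    obtain ⟨M, g1, g2, g3⟩ := block_last hp e1 e2 (by simpa [O] using hDO) c3 (L.length : ℤ)
      (by omega)
    obtain ⟨f1, f2, f3, f4⟩ := glue h1 g1 (hWd _ D hDn) h2 g2 h3 g3
    have hall : W ({C} ∪ (univ \ {C, D})) ∪ K D = univ := by
      rw [← hW, ← hWu]
      congr 1
      ext E
      simp only [Finset.mem_insert, Finset.mem_union, Finset.mem_sdiff, Finset.mem_singleton,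
        Finset.mem_univ, true_and, iff_true]
      tauto
    rw [hall] at f1 f4
    exact ⟨L ++ M, f1, fun u v => f4 u (by simp) v (by simp)⟩
end

section
/- Let d ≥ 2 be an integer. If G is a finite connected simple graph in which every vertex has degree equal to 2d or to 2d − 2, then G admits an antimagic orientation. -/
open Finset

theorem exists_longest_trail {V : Type*} [Fintype V] [DecidableEq V]
    (G : SimpleGraph V) [DecidableRel G.Adj] [Nonempty V] :
    ∃ (u v : V) (p : G.Walk u v), p.IsTrail ∧
      ∀ (u' v' : V) (q : G.Walk u' v'), q.IsTrail → q.length ≤ p.length := by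
  by_contra! hcon
  have h : ∀ n : ℕ, ∃ (u v : V) (p : G.Walk u v), p.IsTrail ∧ n ≤ p.length := by
    intro n
    induction n with
    | zero =>
      obtain ⟨u⟩ := (inferInstance : Nonempty V)
      exact ⟨u, u, SimpleGraph.Walk.nil, by simp, by simp⟩
    | succ n ih =>
      obtain ⟨u, v, p, hp, hn⟩ := ih
      obtain ⟨u', v', q, hq, hl⟩ := hcon u v p hp
      exact ⟨u', v', q, hq, by omega⟩
  obtain ⟨u, v, p, hp, hn⟩ := h (G.edgeFinset.card + 1)
  have := hp.length_le_card_edgeFinset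
  omega

theorem exists_euler {V : Type*} [Fintype V] [DecidableEq V]
    (G : SimpleGraph V) [DecidableRel G.Adj] (hconn : G.Connected)
    (hev : ∀ v, Even (G.degree v)) :
    ∃ (u : V) (p : G.Walk u u), p.IsTrail ∧ ∀ e ∈ G.edgeSet, e ∈ p.edges := by
  have := hconn.nonempty
  obtain ⟨u, v, p, hp, hmax⟩ := exists_longest_trail G
  -- all edges at the start are used
  have key : ∀ (u v : V) (q : G.Walk u v), q.IsTrail → q.length = p.length →
      ∀ x, G.Adj x u → s(x, u) ∈ q.edges := by
    intro u v q hq hl x hx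
    by_contra hne
    have := hmax _ _ (SimpleGraph.Walk.cons hx q)
      ((SimpleGraph.Walk.isTrail_cons hx q).2 ⟨hq, hne⟩)
    simp at this
    omega
  have huv : u = v := by
    by_contra hne
    have h1 := (hp.even_countP_edges_iff u)
    have h2 : ¬ Even (p.edges.countP fun e => u ∈ e) := by
      rw [h1]; simp [hne]
    apply h2
    have h3 : p.edges.countP (fun e => u ∈ e) = G.degree u := by
      rw [← SimpleGraph.card_incidenceFinset_eq_degree, List.countP_eq_length_filter,
        ← List.toFinset_card_of_nodup (hp.edges_nodup.filter _)]
      congr 1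
      ext e
      simp only [List.mem_toFinset, List.mem_filter, SimpleGraph.mem_incidenceFinset,
        decide_eq_true_eq]
      constructor
      · rintro ⟨h, h'⟩
        exact ⟨p.edges_subset_edgeSet h, h'⟩
      · rintro ⟨h, h'⟩
        refine ⟨?_, h'⟩
        obtain ⟨x, rfl⟩ := Sym2.mem_iff_exists.1 h'
        rw [Sym2.eq_swap]
        exact key _ _ p hp rfl x (SimpleGraph.Adj.symm h)
    rw [h3]; exact hev u
  subst huv
  refine ⟨u, p, hp, ?_⟩
  have key2 : ∀ y ∈ p.support, ∀ x, G.Adj x y → s(x, y) ∈ p.edges := by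
    intro y hy x hx
    have := key y y (p.rotate y hy) (hp.rotate hy) (by simp) x hx
    exact (p.rotate_edges y hy).mem_iff.1 this
  have hall : ∀ y, y ∈ p.support := by
    intro y
    by_contra hy
    obtain ⟨q⟩ := hconn.preconnected u y
    obtain ⟨dt, -, h1, h2⟩ := q.exists_boundary_dart {z | z ∈ p.support}
      (by simp) hy
    have := key2 _ h1 _ dt.adj.symm
    exact h2 (p.fst_mem_support_of_mem_edges this)
  intro e he
  induction e with
  | h a b => exact key2 b (hall b) a he

theorem euler_seq {V : Type*} [Fintype V] [DecidableEq V]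
    (G : SimpleGraph V) [DecidableRel G.Adj] (hconn : G.Connected)
    (hev : ∀ v, Even (G.degree v)) :
    ∃ (m : ℕ) (w : ℕ → V), w m = w 0 ∧ (∀ i < m, G.Adj (w i) (w (i + 1))) ∧
      (∀ i < m, ∀ j < m, s(w i, w (i + 1)) = s(w j, w (j + 1)) → i = j) ∧
      ∀ u v, G.Adj u v → ∃ i < m, s(w i, w (i + 1)) = s(u, v) := by
  obtain ⟨u, p, hp, hall⟩ := exists_euler G hconn hev
  refine ⟨p.length, p.getVert, by simp, fun i hi => p.adj_getVert_succ hi, ?_, ?_⟩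
  · intro i hi j hj h
    have hn := hp.edges_nodup
    have hi' : i < p.edges.length := by simpa using hi
    have hj' : j < p.edges.length := by simpa using hj
    refine (hn.getElem_inj_iff (hi := hi') (hj := hj')).1 ?_
    rw [SimpleGraph.Walk.getElem_edges, SimpleGraph.Walk.getElem_edges]
    exact h
  · intro a b hab
    obtain ⟨i, hi, h⟩ := List.mem_iff_getElem.1 (hall s(a, b) hab)
    refine ⟨i, by simpa using hi, ?_⟩
    rw [← h, SimpleGraph.Walk.getElem_edges]

/-- Zigzag rank of the `s`-th of `2 * q` cyclically arranged segments. -/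
def zigRank (q s : ℕ) : ℕ := if s < q then 2 * s else 2 * (2 * q - 1 - s) + 1

theorem zigRank_pair (q s : ℕ) (hs : s < 2 * q)
    (a : ℕ) (ha : a = if s = 0 then 2 * q - 1 else s - 1) :
    (s = 0 ∧ zigRank q a = 1 ∧ zigRank q s = 0) ∨
    (0 < s ∧ s < q ∧ zigRank q a + 2 = 2 * s ∧ zigRank q s = 2 * s) ∨
    (s = q ∧ zigRank q a + 2 = 2 * q ∧ zigRank q s + 1 = 2 * q) ∨
    (q < s ∧ zigRank q a + 2 * s = 4 * q + 1 ∧ zigRank q s + 2 = zigRank q a) := by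
  subst ha
  unfold zigRank
  split_ifs <;> omega

theorem zigRank_chain (q s s' : ℕ) (hs : s < 2 * q) (hs' : s' < 2 * q) (hne : s ≠ s')
    (hpar : s % 2 = s' % 2) (a a' : ℕ) (ha : a = if s = 0 then 2 * q - 1 else s - 1)
    (ha' : a' = if s' = 0 then 2 * q - 1 else s' - 1) :
    (zigRank q a < zigRank q a' ∧ zigRank q s < zigRank q s') ∨
    (zigRank q a < zigRank q s' ∧ zigRank q s < zigRank q a') ∨
    (zigRank q a' < zigRank q a ∧ zigRank q s' < zigRank q s) ∨
    (zigRank q a' < zigRank q s ∧ zigRank q s' < zigRank q a) := by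
  have h1 := zigRank_pair q s hs a ha
  have h2 := zigRank_pair q s' hs' a' ha'
  generalize zigRank q a = x at *
  generalize zigRank q a' = x' at *
  generalize zigRank q s = y at *
  generalize zigRank q s' = y' at *
  clear ha ha'
  rcases lt_or_gt_of_ne hne with h | h <;>
  rcases h1 with h1 | h1 | h1 | h1 <;> rcases h2 with h2 | h2 | h2 | h2 <;> omega

theorem rank_label (m : ℕ) (key : ℕ → ℕ) (hinj : ∀ i < m, ∀ j < m, key i = key j → i = j) :
    ∃ L : ℕ → ℤ, Set.BijOn L ↑(range m) (Set.Icc 1 (m : ℤ)) ∧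
      (∀ i < m, ∀ j < m, key i < key j → L i < L j) ∧
      (∀ i < m, ∀ j < m, key j = key i + 1 → L j = L i + 1) := by
  classical
  let S : ℕ → Finset ℕ := fun i => (range m).filter (fun j => key j ≤ key i)
  have hmono : ∀ i < m, ∀ j < m, key i < key j → (S i).card < (S j).card := by
    intro i hi j hj h
    apply card_lt_card
    refine ⟨fun x hx => ?_, fun hsub => ?_⟩
    · simp only [S, mem_filter, mem_range] at hx ⊢
      omega
    · have : j ∈ S i := hsub (by simp [S, hj])
      simp only [S, mem_filter, mem_range] at this
      omega
  have hI : Set.InjOn (fun i => ((S i).card : ℤ)) ↑(range m) := by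
    intro i hi j hj h
    simp only [coe_range, Set.mem_Iio] at hi hj
    simp only [Nat.cast_inj] at h
    rcases lt_trichotomy (key i) (key j) with h1 | h1 | h1
    · have := hmono i hi j hj h1; omega
    · exact hinj i hi j hj h1
    · have := hmono j hj i hi h1; omega
  have hM : Set.MapsTo (fun i => ((S i).card : ℤ)) ↑(range m) ↑(Finset.Icc 1 (m : ℤ)) := by
    intro i hi
    have h1 : 0 < (S i).card := card_pos.2 ⟨i, by simpa [S] using hi⟩
    have h2 : (S i).card ≤ m := by
      simpa using card_le_card (filter_subset (fun j => key j ≤ key i) (range m))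
    simp only [coe_Icc, Set.mem_Icc]
    omega
  refine ⟨fun i => ((S i).card : ℤ), ?_, ?_, ?_⟩
  · rw [← Finset.coe_Icc]
    refine ⟨hM, hI, ?_⟩
    exact Finset.surjOn_of_injOn_of_card_le _ hM hI (by simp)
  · intro i hi j hj h
    have := hmono i hi j hj h
    simpa using this
  · intro i hi j hj h
    have : S j = insert j (S i) := by
      ext x
      simp only [S, mem_filter, mem_range, mem_insert]
      constructor
      · rintro ⟨h1, h2⟩
        by_cases hx : key x = key j
        · exact Or.inl (hinj x h1 j hj hx)
        · right; omega
      · rintro (rfl | h1)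
        · exact ⟨hj, le_rfl⟩
        · omega
    have hj' : j ∉ S i := by simp [S]; omega
    simp only [this, card_insert_of_notMem hj']
    push_cast; ring

/-- Cyclic predecessor on `{0, …, m - 1}`. -/
def cycPred (m i : ℕ) : ℕ := if i = 0 then m - 1 else i - 1

theorem exists_signed_labels (m q : ℕ) (P : Finset ℕ) (hP : P ⊆ range m) (h0 : 0 ∈ P)
    (hcard : P.card = 2 * q) :
    ∃ (L : ℕ → ℤ) (fwd : ℕ → Prop) (F : ℕ → ℤ),
      Set.BijOn L ↑(range m) (Set.Icc 1 (m : ℤ)) ∧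
      (∀ i, fwd i → F i = L i) ∧ (∀ i, ¬ fwd i → F i = - L i) ∧
      (∀ i < m, i ∉ P → F (cycPred m i) - F i = -1) ∧
      (∀ i ∈ P, 3 ≤ F (cycPred m i) - F i ∨ F (cycPred m i) - F i ≤ -3) ∧
      (∀ i ∈ P, ∀ j ∈ P, i ≠ j → F (cycPred m i) - F i + 2 ≤ F (cycPred m j) - F j ∨
        F (cycPred m j) - F j + 2 ≤ F (cycPred m i) - F i) := by
  classical
  let C : ℕ → ℕ := fun i => (P.filter (fun p => p ≤ i)).card
  let seg : ℕ → ℕ := fun i => C i - 1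
  have hm : 0 < m := by simpa using hP h0
  have hC1 : ∀ i, 1 ≤ C i := fun i => card_pos.2 ⟨0, by simp [h0]⟩
  have hC2 : ∀ i, C i ≤ 2 * q := fun i => by
    rw [← hcard]; exact card_le_card (filter_subset _ _)
  have hCmono : ∀ i j, i ≤ j → C i ≤ C j := by
    intro i j hij
    apply card_le_card
    intro x hx
    simp only [mem_filter] at hx ⊢
    exact ⟨hx.1, hx.2.trans hij⟩
  have hCin : ∀ i, i + 1 ∈ P → C (i + 1) = C i + 1 := by
    intro i hi
    have : P.filter (fun p => p ≤ i + 1) = insert (i + 1) (P.filter (fun p => p ≤ i)) := by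
      ext x
      simp only [mem_filter, mem_insert]
      constructor
      · rintro ⟨h1, h2⟩
        by_cases hx : x = i + 1
        · exact Or.inl hx
        · right; exact ⟨h1, by omega⟩
      · rintro (rfl | h1)
        · exact ⟨hi, le_rfl⟩
        · exact ⟨h1.1, by omega⟩
    simp only [C, this]
    rw [card_insert_of_notMem (by simp)]
  have hCout : ∀ i, i + 1 ∉ P → C (i + 1) = C i := by
    intro i hi
    simp only [C]
    congr 1
    ext x
    simp only [mem_filter]
    constructor
    · rintro ⟨h1, h2⟩
      have : x ≠ i + 1 := fun h => hi (h ▸ h1)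
      exact ⟨h1, by omega⟩
    · rintro ⟨h1, h2⟩
      exact ⟨h1, by omega⟩
  have hClt : ∀ i j, j ∈ P → i < j → C i < C j := by
    intro i j hj hij
    obtain ⟨k, rfl⟩ : ∃ k, j = k + 1 := ⟨j - 1, by omega⟩
    have := hCin k hj
    have := hCmono i k (by omega)
    omega
  have hCz : C 0 = 1 := by
    have : P.filter (fun p => p ≤ 0) = {0} := by
      ext x
      simp only [mem_filter, mem_singleton]
      constructor
      · rintro ⟨h1, h2⟩; omega
      · rintro rfl; exact ⟨h0, le_rfl⟩
    simp only [C, this, card_singleton]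
  have hCl : C (m - 1) = 2 * q := by
    rw [← hcard]
    simp only [C]
    congr 1
    apply filter_true_of_mem
    intro x hx
    have := mem_range.1 (hP hx)
    omega
  have hsegP : ∀ i ∈ P, seg (cycPred m i) = if seg i = 0 then 2 * q - 1 else seg i - 1 := by
    intro i hi
    simp only [seg, cycPred]
    rcases Nat.eq_zero_or_pos i with rfl | hi0
    · simp [hCz, hCl]
    · obtain ⟨k, rfl⟩ : ∃ k, i = k + 1 := ⟨i - 1, by omega⟩
      have h1 := hCin k hi
      have h2 := hC1 k
      have h3 : C (k + 1) - 1 ≠ 0 := by omega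
      simp only [h3, if_false, Nat.add_sub_cancel, Nat.succ_ne_zero]
      omega
  have hsegout : ∀ i, i ∉ P → seg (cycPred m i) = seg i := by
    intro i hi
    have hi0 : i ≠ 0 := fun h => hi (h ▸ h0)
    obtain ⟨k, rfl⟩ : ∃ k, i = k + 1 := ⟨i - 1, by omega⟩
    simp [seg, cycPred, hCout k hi]
  have hseglt : ∀ i, seg i < 2 * q := by
    intro i
    have := hC1 i; have := hC2 i
    simp only [seg]; omega
  have hsegne : ∀ i ∈ P, ∀ j ∈ P, i ≠ j → seg i ≠ seg j := by
    intro i hi j hj hij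
    have h1 := hC1 i; have h2 := hC1 j
    simp only [seg]
    rcases lt_or_gt_of_ne hij with h | h
    · have := hClt i j hj h; omega
    · have := hClt j i hi h; omega
  have hcp : ∀ i < m, cycPred m i < m := by
    intro i hi; unfold cycPred; split_ifs <;> omega
  let off : ℕ → ℕ := fun i => if seg i % 2 = 0 then i else m - 1 - i
  let key : ℕ → ℕ := fun i => zigRank q (seg i) * m + off i
  have hoff : ∀ i < m, off i < m := by
    intro i hi; simp only [off]; split_ifs <;> omega
  have hkeylt : ∀ i < m, ∀ j < m, zigRank q (seg i) < zigRank q (seg j) → key i < key j := by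
    intro i hi j hj h
    have h1 := hoff i hi
    have h2 : (zigRank q (seg i) + 1) * m ≤ zigRank q (seg j) * m := Nat.mul_le_mul_right m h
    simp only [key]
    rw [add_mul] at h2
    omega
  have hzinj : ∀ s < 2 * q, ∀ s' < 2 * q, zigRank q s = zigRank q s' → s = s' := by
    intro s hs s' hs' h
    unfold zigRank at h
    split_ifs at h <;> omega
  have hkeyinj : ∀ i < m, ∀ j < m, key i = key j → i = j := by
    intro i hi j hj h
    have hr : zigRank q (seg i) = zigRank q (seg j) := by
      by_contra hne
      rcases lt_or_gt_of_ne hne with h1 | h1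
      · have := hkeylt i hi j hj h1; omega
      · have := hkeylt j hj i hi h1; omega
    have hs := hzinj _ (hseglt i) _ (hseglt j) hr
    simp only [key, off, hs] at h
    split_ifs at h <;> omega
  obtain ⟨L, hbij, hLlt, hLs⟩ := rank_label m key hkeyinj
  have hLr : ∀ i < m, ∀ j < m, zigRank q (seg i) < zigRank q (seg j) → L i < L j :=
    fun i hi j hj h => hLlt i hi j hj (hkeylt i hi j hj h)
  have hLpos : ∀ i < m, 1 ≤ L i := by
    intro i hi
    exact (hbij.mapsTo (show i ∈ (↑(range m) : Set ℕ) by simpa using hi)).1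
  have hLne : ∀ i < m, ∀ j < m, i ≠ j → L i ≠ L j := by
    intro i hi j hj hij h
    exact hij (hbij.injOn (by simpa using hi) (by simpa using hj) h)
  have hPm : ∀ i ∈ P, i < m := fun i hi => mem_range.1 (hP hi)
  let F : ℕ → ℤ := fun i => if seg i % 2 = 0 then L i else - L i
  have hodd : ∀ i ∈ P, seg i % 2 = 1 → F (cycPred m i) - F i = L (cycPred m i) + L i := by
    intro i hi h
    have h1 := hsegP i hi
    rw [if_neg (by omega)] at h1
    have h2 : seg (cycPred m i) % 2 = 0 := by omega
    simp only [F, h2, h, if_true, one_ne_zero, if_false]; ring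
  have heven : ∀ i ∈ P, seg i % 2 = 0 → F (cycPred m i) - F i = -(L (cycPred m i) + L i) := by
    intro i hi h
    have h1 := hsegP i hi
    have h3 := hseglt i
    have h2 : seg (cycPred m i) % 2 = 1 := by
      split_ifs at h1 <;> omega
    simp only [F, h2, h, if_true, one_ne_zero, if_false]; ring
  have hge3 : ∀ i ∈ P, 3 ≤ L (cycPred m i) + L i := by
    intro i hi
    have him := hPm i hi
    have h1 := hLpos i him
    have h2 := hLpos _ (hcp i him)
    have h3 : cycPred m i ≠ i := by
      intro h
      have h4 := hsegP i hi
      have h5 := hseglt i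
      rw [h] at h4
      split_ifs at h4 <;> omega
    have h4 := hLne _ (hcp i him) i him h3
    omega
  refine ⟨L, fun i => seg i % 2 = 0, F, hbij, ?_, ?_, ?_, ?_, ?_⟩
  · intro i hi; simp only [F]; rw [if_pos hi]
  · intro i hi; simp only [F]; rw [if_neg hi]
  · intro i him hi
    have hi0 : i ≠ 0 := fun h => hi (h ▸ h0)
    have hs := hsegout i hi
    have hc : cycPred m i = i - 1 := by simp [cycPred, hi0]
    rw [hc] at hs ⊢
    by_cases hpar : seg i % 2 = 0
    · have : L i = L (i - 1) + 1 := by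
        apply hLs _ (by omega) _ him
        simp only [key, off, hs, hpar, if_true]; omega
      simp only [F, hs, hpar, if_true]; omega
    · have : L (i - 1) = L i + 1 := by
        apply hLs _ him _ (by omega)
        simp only [key, off, hs, hpar, if_false]; omega
      simp only [F, hs, hpar, if_false]; omega
  · intro i hi
    have := hge3 i hi
    rcases Nat.mod_two_eq_zero_or_one (seg i) with h | h
    · rw [heven i hi h]; omega
    · rw [hodd i hi h]; omega
  · intro i hi j hj hij
    have hi3 := hge3 i hi
    have hj3 := hge3 j hj
    have him := hPm i hi
    have hjm := hPm j hj
    have hch : seg i % 2 = seg j % 2 →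
        L (cycPred m i) + L i + 2 ≤ L (cycPred m j) + L j ∨
        L (cycPred m j) + L j + 2 ≤ L (cycPred m i) + L i := by
      intro hpar
      rcases zigRank_chain q (seg i) (seg j) (hseglt i) (hseglt j) (hsegne i hi j hj hij) hpar
        _ _ (hsegP i hi) (hsegP j hj) with ⟨h1, h2⟩ | ⟨h1, h2⟩ | ⟨h1, h2⟩ | ⟨h1, h2⟩
      · have := hLr _ (hcp i him) _ (hcp j hjm) h1
        have := hLr _ him _ hjm h2
        omega
      · have := hLr _ (hcp i him) _ hjm h1
        have := hLr _ him _ (hcp j hjm) h2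
        omega
      · have := hLr _ (hcp j hjm) _ (hcp i him) h1
        have := hLr _ hjm _ him h2
        omega
      · have := hLr _ (hcp j hjm) _ him h1
        have := hLr _ hjm _ (hcp i him) h2
        omega
    rcases Nat.mod_two_eq_zero_or_one (seg i) with h | h <;>
      rcases Nat.mod_two_eq_zero_or_one (seg j) with h' | h'
    · rw [heven i hi h, heven j hj h']
      have := hch (by omega)
      omega
    · rw [heven i hi h, hodd j hj h']; omega
    · rw [hodd i hi h, heven j hj h']; omega
    · rw [hodd i hi h, hodd j hj h']
      have := hch (by omega)
      omega

theorem sum_cycPred_shift (m : ℕ) (hm : 0 < m) (F : ℕ → ℤ) (Q : ℕ → Prop) [DecidablePred Q]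
    (hQ : Q m ↔ Q 0) :
    ∑ i ∈ range m, (if Q (i + 1) then F i else 0) =
      ∑ i ∈ range m, (if Q i then F (cycPred m i) else 0) := by
  obtain ⟨k, rfl⟩ : ∃ k, m = k + 1 := ⟨m - 1, by omega⟩
  rw [sum_range_succ, sum_range_succ' (fun i => if Q i then F (cycPred (k + 1) i) else 0)]
  simp [cycPred, hQ]

theorem two_mul_visits {V : Type*} [Fintype V] [DecidableEq V]
    (G : SimpleGraph V) [DecidableRel G.Adj] (m : ℕ) (hm : 0 < m) (w : ℕ → V) (hw : w m = w 0)
    (hadj : ∀ i < m, G.Adj (w i) (w (i + 1)))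
    (hinj : ∀ i < m, ∀ j < m, s(w i, w (i + 1)) = s(w j, w (j + 1)) → i = j)
    (hall : ∀ u v, G.Adj u v → ∃ i < m, s(w i, w (i + 1)) = s(u, v)) (u : V) :
    G.degree u = 2 * ((range m).filter (fun i => w i = u)).card := by
  have h1 : ((range m).filter (fun i => w (i + 1) = u)).card =
      ((range m).filter (fun i => w i = u)).card := by
    have := sum_cycPred_shift m hm (fun _ => 1) (fun i => w i = u) (by rw [hw])
    simp only [sum_boole] at this
    exact_mod_cast this
  have h2 : G.incidenceFinset u = (((range m).filter (fun i => w i = u)) ∪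
      ((range m).filter (fun i => w (i + 1) = u))).image (fun i => s(w i, w (i + 1))) := by
    ext e
    simp only [SimpleGraph.mem_incidenceFinset, mem_image, mem_union, mem_filter, mem_range]
    constructor
    · rintro ⟨he, hu⟩
      induction e with
      | h a b =>
        obtain ⟨i, hi, h⟩ := hall a b he
        refine ⟨i, ?_, h⟩
        rw [← h, Sym2.mem_iff] at hu
        rcases hu with hu | hu
        · exact Or.inl ⟨hi, hu.symm⟩
        · exact Or.inr ⟨hi, hu.symm⟩
    · rintro ⟨i, hi, rfl⟩
      rcases hi with ⟨hi, h⟩ | ⟨hi, h⟩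
      · exact ⟨hadj i hi, by simp [h]⟩
      · exact ⟨hadj i hi, by simp [h]⟩
  rw [← SimpleGraph.card_incidenceFinset_eq_degree, h2, card_image_of_injOn,
    card_union_of_disjoint, h1, two_mul]
  · rw [disjoint_filter]
    intro i hi h h'
    exact (hadj i (mem_range.1 hi)).ne (h.trans h'.symm)
  · intro i hi j hj h
    simp only [coe_union, coe_filter, mem_range, Set.mem_union, Set.mem_setOf_eq] at hi hj
    exact hinj i (by tauto) j (by tauto) h

theorem exists_selection {V : Type*} [Fintype V] [DecidableEq V] (x y : V) (hxy : x ≠ y) :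
    ∃ (S : Finset V) (q : ℕ), x ∈ S ∧ S.card = 2 * q ∧ ∀ u v, u ∉ S → v ∉ S → u = v := by
  rcases Nat.even_or_odd' (Fintype.card V) with ⟨q, h | h⟩
  · exact ⟨univ, q, mem_univ _, by simpa using h, by simp⟩
  · refine ⟨univ.erase y, q, by simp [hxy], ?_, ?_⟩
    · rw [card_erase_of_mem (mem_univ _), card_univ]; omega
    · intro u v hu hv
      simp at hu hv
      rw [hu, hv]

/-- For d ≥ 2, every connected simple graph in which every vertex has degree 2d or 2d − 2
admits an antimagic orientation. -/
theorem connected_two_degrees_admits_antimagic_orientation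
    {V : Type*} [Fintype V] [DecidableEq V]
    (G : SimpleGraph V) [DecidableRel G.Adj] (d : ℕ) (hd : 2 ≤ d)
    (hconn : G.Connected)
    (hdeg : ∀ v : V, G.degree v = 2 * d ∨ G.degree v = 2 * d - 2) :
    ∃ (A : Finset (V × V)) (c : V × V → ℤ),
      IsOrientation G A ∧
      Set.BijOn c ↑A (Set.Icc 1 (G.edgeFinset.card : ℤ)) ∧
      Pairwise fun u v : V => vertexSum A c u ≠ vertexSum A c v := by
  classical
  obtain ⟨m, w, hw, hadj, hinj, hall⟩ := euler_seq G hconn (fun v => by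
    rcases hdeg v with h | h
    · rw [h]; exact ⟨d, by omega⟩
    · rw [h]; exact ⟨d - 1, by omega⟩)
  have hm : 0 < m := by
    obtain ⟨v⟩ := hconn.nonempty
    have : 0 < G.degree v := by rcases hdeg v with h | h <;> omega
    obtain ⟨x, hx⟩ := (G.degree_pos_iff_exists_adj v).1 this
    obtain ⟨i, hi, -⟩ := hall v x hx
    omega
  have hN := two_mul_visits G m hm w hw hadj hinj hall
  let N : V → ℕ := fun u => ((range m).filter (fun i => w i = u)).card
  have hNd : ∀ u, N u = d ∨ N u + 1 = d := by
    intro u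
    have h1 : G.degree u = 2 * N u := hN u
    rcases hdeg u with h | h <;> omega
  have hvis : ∀ u, ∃ i, i < m ∧ w i = u := by
    intro u
    have h1 : 0 < N u := by have := hNd u; omega
    obtain ⟨i, hi⟩ := card_pos.1 h1
    exact ⟨i, by simpa using hi⟩
  let t : V → ℕ := fun u => Nat.find (hvis u)
  have htm : ∀ u, t u < m := fun u => (Nat.find_spec (hvis u)).1
  have htw : ∀ u, w (t u) = u := fun u => (Nat.find_spec (hvis u)).2
  have ht0 : t (w 0) = 0 := by
    have : t (w 0) ≤ 0 := Nat.find_min' (hvis (w 0)) ⟨hm, rfl⟩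
    omega
  have htinj : Function.Injective t := fun u v h => by rw [← htw u, h, htw v]
  obtain ⟨S, q, hS0, hSc, hSm⟩ := exists_selection (w 0) (w 1) (hadj 0 hm).ne
  obtain ⟨L, fwd, F, hbij, hFf, hFb, hout, hin3, hin2⟩ :=
    exists_signed_labels m q (S.image t)
      (by intro x hx; obtain ⟨u, -, rfl⟩ := mem_image.1 hx; exact mem_range.2 (htm u))
      (mem_image.2 ⟨w 0, hS0, ht0⟩)
      (by rw [card_image_of_injective _ htinj, hSc])
  let arc : ℕ → V × V := fun i => if fwd i then (w i, w (i + 1)) else (w (i + 1), w i)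
  have harc : ∀ i, s((arc i).1, (arc i).2) = s(w i, w (i + 1)) := by
    intro i
    simp only [arc]
    split_ifs
    · rfl
    · exact Sym2.eq_swap
  have harcinj : Set.InjOn arc ↑(range m) := by
    intro i hi j hj h
    refine hinj i (by simpa using hi) j (by simpa using hj) ?_
    rw [← harc i, ← harc j, h]
  have hmE : G.edgeFinset.card = m := by
    have : G.edgeFinset = (range m).image (fun i => s(w i, w (i + 1))) := by
      ext e
      simp only [SimpleGraph.mem_edgeFinset, mem_image, mem_range]
      constructor
      · intro he
        induction e with
        | h a b => exact hall a b he
      · rintro ⟨i, hi, rfl⟩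
        exact hadj i hi
    rw [this, card_image_of_injOn, card_range]
    intro i hi j hj h
    exact hinj i (by simpa using hi) j (by simpa using hj) h
  let A : Finset (V × V) := (range m).image arc
  let c : V × V → ℤ := fun a => L (Function.invFunOn arc ↑(range m) a)
  have hc : ∀ i < m, c (arc i) = L i := by
    intro i hi
    have hi' : i ∈ (↑(range m) : Set ℕ) := by simpa using hi
    simp only [c]
    congr 1
    exact harcinj (Function.invFunOn_mem ⟨i, hi', rfl⟩) hi' (Function.invFunOn_eq ⟨i, hi', rfl⟩)
  have hvs : ∀ u, vertexSum A c u =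
      ∑ i ∈ (range m).filter (fun i => w i = u), (F (cycPred m i) - F i) := by
    intro u
    unfold vertexSum
    rw [sum_filter, sum_filter, sum_image harcinj, sum_image harcinj, sum_sub_distrib,
      sum_filter, sum_filter, ← sum_cycPred_shift m hm F (fun i => w i = u) (by rw [hw]),
      ← sum_sub_distrib, ← sum_sub_distrib]
    apply sum_congr rfl
    intro i hi
    rw [hc i (mem_range.1 hi)]
    by_cases hf : fwd i
    · rw [hFf i hf]
      simp only [arc, hf, if_true]
    · rw [hFb i hf]
      simp only [arc, hf, if_false]
      split_ifs <;> ring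
  have hsel : ∀ u ∈ S, vertexSum A c u = F (cycPred m (t u)) - F (t u) + 1 - N u := by
    intro u hu
    have hmem : t u ∈ (range m).filter (fun i => w i = u) := by simp [htm, htw]
    rw [hvs, ← add_sum_erase _ _ hmem]
    have : ∑ i ∈ ((range m).filter (fun i => w i = u)).erase (t u), (F (cycPred m i) - F i) =
        ∑ i ∈ ((range m).filter (fun i => w i = u)).erase (t u), (-1 : ℤ) := by
      apply sum_congr rfl
      intro i hi
      simp only [mem_erase, mem_filter, mem_range] at hi
      apply hout i hi.2.1
      intro h
      obtain ⟨v, -, hv⟩ := mem_image.1 h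
      apply hi.1
      rw [← hi.2.2, ← hv, htw]
    rw [this, sum_const, card_erase_of_mem hmem]
    have hpos : 1 ≤ N u := card_pos.2 ⟨_, hmem⟩
    change _ + (N u - 1) • (-1 : ℤ) = _
    simp only [smul_eq_mul, nsmul_eq_mul]
    push_cast [hpos]
    ring
  have hunsel : ∀ u, u ∉ S → vertexSum A c u = - N u := by
    intro u hu
    rw [hvs]
    have : ∑ i ∈ (range m).filter (fun i => w i = u), (F (cycPred m i) - F i) =
        ∑ i ∈ (range m).filter (fun i => w i = u), (-1 : ℤ) := by
      apply sum_congr rfl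
      intro i hi
      simp only [mem_filter, mem_range] at hi
      apply hout i hi.1
      intro h
      obtain ⟨v, hv', hv⟩ := mem_image.1 h
      apply hu
      rw [← hi.2, ← hv, htw]
      exact hv'
    rw [this, sum_const]
    simp [N]
  refine ⟨A, c, ⟨?_, ?_⟩, ?_, ?_⟩
  · intro u v
    constructor
    · intro h
      obtain ⟨i, hi, he⟩ := hall u v h
      rw [← harc i, Sym2.eq_iff] at he
      have hA : arc i ∈ A := mem_image_of_mem _ (mem_range.2 hi)
      rcases he with ⟨h1, h2⟩ | ⟨h1, h2⟩
      · left; rw [← h1, ← h2]; exact hA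
      · right; rw [← h1, ← h2]; exact hA
    · have hA : ∀ a b, (a, b) ∈ A → G.Adj a b := by
        intro a b h
        obtain ⟨i, hi, he⟩ := mem_image.1 h
        have h1 := harc i
        rw [he] at h1
        have h2 : s(a, b) ∈ G.edgeSet := by
          rw [show s(a, b) = s(w i, w (i + 1)) from h1]
          exact hadj i (mem_range.1 hi)
        exact h2
      rintro (h | h)
      · exact hA _ _ h
      · exact (hA _ _ h).symm
  · rintro u v ⟨h1, h2⟩
    obtain ⟨i, hi, he⟩ := mem_image.1 h1
    obtain ⟨j, hj, he'⟩ := mem_image.1 h2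
    have hij : i = j := by
      apply hinj i (mem_range.1 hi) j (mem_range.1 hj)
      rw [← harc i, ← harc j, he, he']
      exact Sym2.eq_swap
    subst hij
    rw [he] at he'
    have huv : u = v := congrArg Prod.fst he'
    have h3 := harc i
    rw [he, huv] at h3
    have h4 := hadj i (mem_range.1 hi)
    have h5 : s(v, v) ∈ G.edgeSet := by
      rw [show s(v, v) = s(w i, w (i + 1)) from h3]
      exact h4
    exact (SimpleGraph.Adj.ne h5) rfl
  · rw [hmE]
    have hA : (↑A : Set (V × V)) = arc '' ↑(range m) := by simp [A]
    rw [hA]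
    refine ⟨?_, ?_, ?_⟩
    · rintro _ ⟨i, hi, rfl⟩
      rw [hc i (by simpa using hi)]
      exact hbij.mapsTo hi
    · rintro _ ⟨i, hi, rfl⟩ _ ⟨j, hj, rfl⟩ h
      rw [hc i (by simpa using hi), hc j (by simpa using hj)] at h
      rw [hbij.injOn hi hj h]
    · intro z hz
      obtain ⟨i, hi, rfl⟩ := hbij.surjOn hz
      exact ⟨arc i, ⟨i, hi, rfl⟩, hc i (by simpa using hi)⟩
  · intro u v huv
    change vertexSum A c u ≠ vertexSum A c v
    have hu := hNd u
    have hv := hNd v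
    by_cases hu' : u ∈ S <;> by_cases hv' : v ∈ S
    · rw [hsel u hu', hsel v hv']
      have := hin2 (t u) (mem_image_of_mem _ hu') (t v) (mem_image_of_mem _ hv')
        (fun h => huv (htinj h))
      omega
    · rw [hsel u hu', hunsel v hv']
      have := hin3 (t u) (mem_image_of_mem _ hu')
      omega
    · rw [hunsel u hu', hsel v hv']
      have := hin3 (t v) (mem_image_of_mem _ hv')
      omega
    · exact absurd (hSm u v hu' hv') huv
end

section
/- Every finite simple graph that is a disjoint union of even cycles (equivalently, every bipartite 2-regular graph) admits an antimagic orientation. -/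
open Finset

/-- Each component is traversed by a cyclic sequence. -/
lemma comp_param {V : Type*} [Fintype V] [DecidableEq V]
    (G : SimpleGraph V) [DecidableRel G.Adj]
    (hreg : ∀ v : V, G.degree v = 2)
    (heven : ∀ c : G.ConnectedComponent, Even c.supp.ncard) (c : G.ConnectedComponent) :
    ∃ (k : ℕ) (w : ℕ → V), 2 ≤ k ∧ 2 * k ≤ Fintype.card V ∧
      (∀ i, G.connectedComponentMk (w i) = c) ∧
      (∀ i j, i < 2 * k → j < 2 * k → w i = w j → i = j) ∧
      (∀ v, G.connectedComponentMk v = c → ∃ i < 2 * k, w i = v) ∧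
      w (2 * k) = w 0 ∧ ∀ i < 2 * k, G.Adj (w i) (w (i + 1)) := by
  have hcyc : G.IsCycles := by
    intro v _
    rw [Set.ncard_eq_toFinset_card']
    exact hreg v
  obtain ⟨v, hv⟩ := c.exists_rep
  have hne : (G.neighborSet v).Nonempty := by
    have h : 0 < G.degree v := by rw [hreg]; norm_num
    obtain ⟨w, hw⟩ := (G.degree_pos_iff_exists_adj v).1 h
    exact ⟨w, hw⟩
  obtain ⟨p, hp, hps⟩ := hcyc.exists_cycle_toSubgraph_verts_eq_connectedComponentSupp
    (c := c) (v := v) hv hne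
  have h3 := hp.three_le_length
  have hmem : ∀ x, G.connectedComponentMk x = c ↔ ∃ i, p.getVert i = x ∧ i ≤ p.length := by
    intro x
    rw [← SimpleGraph.Walk.mem_support_iff_exists_getVert, ← SimpleGraph.Walk.mem_verts_toSubgraph,
      hps]
    rfl
  have hinj : ∀ i j, i < p.length → j < p.length → p.getVert i = p.getVert j → i = j := by
    intro i j hi hj h
    exact hp.getVert_injOn' (by simp only [Set.mem_ofPred_eq]; omega)
      (by simp only [Set.mem_ofPred_eq]; omega) h
  have hsurj : ∀ x, G.connectedComponentMk x = c → ∃ i < p.length, p.getVert i = x := by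
    intro x hx
    obtain ⟨i, hi, hle⟩ := (hmem x).1 hx
    rcases hle.lt_or_eq with h | h
    · exact ⟨i, h, hi⟩
    · refine ⟨0, by omega, ?_⟩
      rw [← hi, h]; simp
  have hall : ∀ i, G.connectedComponentMk (p.getVert i) = c := by
    intro i
    have := p.getVert_mem_support i
    rw [← SimpleGraph.Walk.mem_verts_toSubgraph, hps] at this
    exact this
  have himg : c.supp = ((Finset.range p.length).image p.getVert : Finset V) := by
    ext x
    simp only [Finset.coe_image, Set.mem_image, Finset.coe_range, Set.mem_Iio]
    constructor
    · intro hx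
      exact hsurj x hx
    · rintro ⟨i, _, rfl⟩
      exact hall i
  have hcard : c.supp.ncard = p.length := by
    rw [himg, Set.ncard_coe_finset, Finset.card_image_of_injOn, Finset.card_range]
    intro i hi j hj h
    simp at hi hj
    exact hinj i j hi hj h
  have hle : p.length ≤ Fintype.card V := by
    rw [← hcard, himg, Set.ncard_coe_finset]
    exact Finset.card_le_univ _
  obtain ⟨k, hk⟩ := heven c
  rw [hcard] at hk
  have hk2 : p.length = 2 * k := by omega
  refine ⟨k, p.getVert, by omega, by omega, hall, ?_, ?_, ?_, ?_⟩
  · rw [← hk2]; exact hinj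
  · rw [← hk2]; exact hsurj
  · rw [← hk2]; simp
  · rw [← hk2]; intro i hi; exact p.adj_getVert_succ hi

lemma struct {V : Type*} [Fintype V] [DecidableEq V]
    (G : SimpleGraph V) [DecidableRel G.Adj]
    (hreg : ∀ v : V, G.degree v = 2)
    (heven : ∀ c : G.ConnectedComponent, Even c.supp.ncard) :
    ∃ (nxt prv : V → V) (idx K comp : V → ℕ),
      (∀ v, 2 ≤ K v ∧ idx v < 2 * K v ∧ 2 * K v ≤ Fintype.card V) ∧
      (∀ v, nxt (prv v) = v) ∧ (∀ v, prv (nxt v) = v) ∧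
      (∀ u v, G.Adj u v ↔ (v = nxt u ∨ v = prv u)) ∧
      (∀ v, comp (prv v) = comp v ∧
        idx (prv v) = if idx v = 0 then 2 * K v - 1 else idx v - 1) ∧
      (∀ u v, comp u = comp v → K u = K v ∧ (idx u = idx v → u = v)) := by
  classical
  choose k w hk2 hkV hw hinj hsurj hclose hadj using comp_param G hreg heven
  let cc : V → G.ConnectedComponent := G.connectedComponentMk
  choose idx hidx hwidx using fun v => hsurj (cc v) v rfl
  have : Fintype G.ConnectedComponent := Fintype.ofFinite _
  let e := Fintype.equivFin G.ConnectedComponent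
  let nxt : V → V := fun v => w (cc v) (idx v + 1)
  let prv : V → V := fun v => w (cc v) (if idx v = 0 then 2 * k (cc v) - 1 else idx v - 1)
  have hccw : ∀ c i, cc (w c i) = c := hw
  have hidxw : ∀ c i, i < 2 * k c → idx (w c i) = i := by
    intro c i hi
    have h1 := hidx (w c i)
    have h2 := hwidx (w c i)
    rw [hccw] at h1 h2
    exact hinj c _ _ h1 hi h2
  have hlt : ∀ v, (if idx v = 0 then 2 * k (cc v) - 1 else idx v - 1) < 2 * k (cc v) := by
    intro v
    have := hk2 (cc v)
    have := hidx v
    split_ifs <;> omega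
  have hidxp : ∀ v, idx (prv v) = if idx v = 0 then 2 * k (cc v) - 1 else idx v - 1 :=
    fun v => hidxw _ _ (hlt v)
  have hccp : ∀ v, cc (prv v) = cc v := fun v => hccw _ _
  have hnp : ∀ v, nxt (prv v) = v := by
    intro v
    show w (cc (prv v)) (idx (prv v) + 1) = v
    rw [hccp, hidxp]
    have := hk2 (cc v)
    split_ifs with h
    · rw [show 2 * k (cc v) - 1 + 1 = 2 * k (cc v) by omega, hclose, ← h, hwidx]
    · rw [show idx v - 1 + 1 = idx v by omega, hwidx]
  have hpn : ∀ v, prv (nxt v) = v := by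
    have h1 : Function.Injective prv := fun a b h => by rw [← hnp a, ← hnp b, h]
    have h2 := Finite.surjective_of_injective h1
    intro v
    obtain ⟨u, rfl⟩ := h2 v
    rw [hnp]
  have hadjn : ∀ v, G.Adj v (nxt v) := by
    intro v
    have := hadj (cc v) (idx v) (hidx v)
    rwa [hwidx] at this
  have hadjp : ∀ v, G.Adj v (prv v) := by
    intro v
    have := hadjn (prv v)
    rw [hnp] at this
    exact this.symm
  have hne : ∀ v, nxt v ≠ prv v := by
    intro v h
    have h1 := hidxp v
    have h2 := hidxp (prv v)
    rw [← h, hpn, h, hccp] at h2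
    have := hk2 (cc v)
    have := hidx v
    split_ifs at h1 h2 <;> omega
  refine ⟨nxt, prv, idx, fun v => k (cc v), fun v => (e (cc v) : ℕ), ?_, hnp, hpn, ?_, ?_, ?_⟩
  · exact fun v => ⟨hk2 _, hidx _, hkV _⟩
  · intro u v
    have hsub : ({nxt u, prv u} : Finset V) = G.neighborFinset u := by
      apply Finset.eq_of_subset_of_card_le
      · intro x hx
        simp only [Finset.mem_insert, Finset.mem_singleton] at hx
        rw [SimpleGraph.mem_neighborFinset]
        rcases hx with rfl | rfl
        · exact hadjn u
        · exact hadjp u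
      · rw [Finset.card_pair (hne u)]
        exact (hreg u).le
    rw [← SimpleGraph.mem_neighborFinset, ← hsub]
    simp
  · exact fun v => ⟨by simp only [hccp], hidxp v⟩
  · intro u v h
    have h' : cc u = cc v := e.injective (Fin.ext h)
    refine ⟨by simp only [h'], fun hi => ?_⟩
    rw [← hwidx u, ← hwidx v, h', hi]

/-- Position rank of the `i`-th edge on a cycle of length `2k`. -/
def ell (k i : ℕ) : ℕ := if i < k then 2 * i else 2 * (2 * k - 1 - i) + 1

lemma ell_comparable (k i j i' j' : ℕ) (hk : 2 ≤ k) (hi : i < 2 * k) (hj : j < 2 * k)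
    (hij : i ≠ j) (hi' : i' = if i = 0 then 2 * k - 1 else i - 1)
    (hj' : j' = if j = 0 then 2 * k - 1 else j - 1) :
    (ell k i ≤ ell k j ∧ ell k i' < ell k j') ∨ (ell k j ≤ ell k i ∧ ell k j' < ell k i') ∨
    (ell k i < ell k j' ∧ ell k i' ≤ ell k j) ∨ (ell k j < ell k i' ∧ ell k j' ≤ ell k i) ∨
    (ell k i ≤ ell k j' ∧ ell k i' < ell k j) ∨ (ell k j ≤ ell k i' ∧ ell k j' < ell k i) ∨
    (ell k i < ell k j ∧ ell k i' ≤ ell k j') ∨ (ell k j < ell k i ∧ ell k j' ≤ ell k i') := by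
  unfold ell
  split_ifs at hi' hj' <;> subst hi' hj' <;> split_ifs <;> omega

lemma ell_lt (k i : ℕ) (hi : i < 2 * k) : ell k i < 2 * k := by
  unfold ell; split_ifs <;> omega

lemma ell_inj (k i j : ℕ) (hi : i < 2 * k) (hj : j < 2 * k) (h : ell k i = ell k j) : i = j := by
  unfold ell at h; split_ifs at h <;> omega

/-- Existence of the labels. -/
lemma labels {V : Type*} [Fintype V] [DecidableEq V] (prv : V → V) (idx K comp : V → ℕ)
    (h1 : ∀ v, 2 ≤ K v ∧ idx v < 2 * K v ∧ 2 * K v ≤ Fintype.card V)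
    (h5 : ∀ v, comp (prv v) = comp v ∧
        idx (prv v) = if idx v = 0 then 2 * K v - 1 else idx v - 1)
    (h6 : ∀ u v, comp u = comp v → K u = K v ∧ (idx u = idx v → u = v)) :
    ∃ L : V → ℕ, Function.Injective L ∧ (∀ v, 1 ≤ L v ∧ L v ≤ Fintype.card V) ∧
      ∀ u v, u ≠ v → L u + L (prv u) ≠ L v + L (prv v) := by
  classical
  let key : V → ℕ := fun v => comp v * Fintype.card V + ell (K v) (idx v)
  let L : V → ℕ := fun v => (univ.filter (fun u => key u ≤ key v)).card
  have hlt : ∀ u v, key u < key v → L u < L v := by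
    intro u v h
    apply Finset.card_lt_card
    rw [Finset.ssubset_iff_of_subset]
    · exact ⟨v, by simp, by simpa using h⟩
    · intro x hx
      simp only [mem_filter, mem_univ, true_and] at hx ⊢
      omega
  have hle : ∀ u v, key u ≤ key v → L u ≤ L v := by
    intro u v h
    apply Finset.card_le_card
    intro x hx
    simp only [mem_filter, mem_univ, true_and] at hx ⊢
    omega
  have hcomp : ∀ u v, comp u < comp v → key u < key v := by
    intro u v h
    have := ell_lt _ _ (h1 u).2.1
    have := (h1 u).2.2
    have h' : (comp u + 1) * Fintype.card V ≤ comp v * Fintype.card V :=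
      Nat.mul_le_mul_right _ h
    show comp u * Fintype.card V + ell (K u) (idx u) < comp v * Fintype.card V + ell (K v) (idx v)
    rw [Nat.add_mul] at h'
    omega
  have hsame : ∀ u v, comp u = comp v →
      (ell (K u) (idx u) < ell (K u) (idx v) → L u < L v) ∧
      (ell (K u) (idx u) ≤ ell (K u) (idx v) → L u ≤ L v) := by
    intro u v h
    have hK := (h6 u v h).1
    constructor
    · intro h'
      apply hlt
      simp only [key, ← h, ← hK]
      omega
    · intro h'
      apply hle
      simp only [key, ← h, ← hK]
      omega
  have hkinj : ∀ u v, key u = key v → u = v := by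
    intro u v h
    rcases lt_trichotomy (comp u) (comp v) with hc | hc | hc
    · have := hcomp u v hc; omega
    · apply (h6 u v hc).2
      have hK := (h6 u v hc).1
      simp only [key, hc, hK] at h
      have hu := (h1 u).2.1
      rw [hK] at hu
      exact ell_inj _ _ _ hu (h1 v).2.1 (by omega)
    · have := hcomp v u hc; omega
  refine ⟨L, ?_, ?_, ?_⟩
  · intro u v h
    apply hkinj
    rcases lt_trichotomy (key u) (key v) with hc | hc | hc
    · have := hlt u v hc; omega
    · exact hc
    · have := hlt v u hc; omega
  · intro v
    refine ⟨?_, Finset.card_le_univ _⟩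
    exact Finset.card_pos.2 ⟨v, by simp⟩
  · intro u v huv
    rcases lt_trichotomy (comp u) (comp v) with hc | hc | hc
    · have a := hlt _ _ (hcomp u v hc)
      have b := hlt _ _ (hcomp (prv u) (prv v) (by rwa [(h5 u).1, (h5 v).1]))
      omega
    · have hcu := (h5 u).1
      have hcv := (h5 v).1
      have hK := (h6 u v hc).1
      have hKu := (h6 _ _ hcu).1
      have hKv := (h6 _ _ hcv).1
      have hi : idx u ≠ idx v := fun h => huv ((h6 u v hc).2 h)
      have hv := h5 v
      rw [← hK] at hv
      have hv1 := (h1 v).2.1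
      rw [← hK] at hv1
      have key := ell_comparable (K u) (idx u) (idx v) _ _ (h1 u).1 (h1 u).2.1 hv1 hi
        (h5 u).2 hv.2
      have s1 := hsame u v hc
      have s2 := hsame v u hc.symm
      have s3 := hsame (prv u) (prv v) (by omega)
      have s4 := hsame (prv v) (prv u) (by omega)
      have s5 := hsame u (prv v) (by omega)
      have s6 := hsame (prv v) u (by omega)
      have s7 := hsame v (prv u) (by omega)
      have s8 := hsame (prv u) v (by omega)
      simp only [hKu, hKv, ← hK] at s1 s2 s3 s4 s5 s6 s7 s8
      rcases key with h | h | h | h | h | h | h | h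
      · have := s1.2 h.1; have := s3.1 h.2; omega
      · have := s2.2 h.1; have := s4.1 h.2; omega
      · have := s5.1 h.1; have := s8.2 h.2; omega
      · have := s7.1 h.1; have := s6.2 h.2; omega
      · have := s5.2 h.1; have := s8.1 h.2; omega
      · have := s7.2 h.1; have := s6.1 h.2; omega
      · have := s1.1 h.1; have := s3.2 h.2; omega
      · have := s2.1 h.1; have := s4.2 h.2; omega
    · have a := hlt _ _ (hcomp v u hc)
      have b := hlt _ _ (hcomp (prv v) (prv u) (by rwa [(h5 u).1, (h5 v).1]))
      omega

/-- Every disjoint union of even cycles (i.e. every 2-regular graph all of whose connected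
components have an even number of vertices) admits an antimagic orientation. -/
theorem disjoint_union_even_cycles_admits_antimagic_orientation
    {V : Type*} [Fintype V] [DecidableEq V]
    (G : SimpleGraph V) [DecidableRel G.Adj]
    (hreg : ∀ v : V, G.degree v = 2)
    (heven : ∀ c : G.ConnectedComponent, Even c.supp.ncard) :
    ∃ (A : Finset (V × V)) (c : V × V → ℤ),
      IsOrientation G A ∧
      Set.BijOn c ↑A (Set.Icc 1 (G.edgeFinset.card : ℤ)) ∧
      Pairwise fun u v : V => vertexSum A c u ≠ vertexSum A c v := by
  classical
  obtain ⟨nxt, prv, idx, K, comp, h1, hnp, hpn, hadj, h5, h6⟩ := struct G hreg heven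
  obtain ⟨L, hLinj, hLb, hLsum⟩ := labels prv idx K comp h1 h5 h6
  have hm : G.edgeFinset.card = Fintype.card V := by
    have := G.sum_degrees_eq_twice_card_edges
    simp only [hreg, Finset.sum_const, Finset.card_univ, smul_eq_mul] at this
    omega
  have hparp : ∀ v, (idx (prv v) % 2 = 0 ↔ ¬ idx v % 2 = 0) := by
    intro v
    have a := (h5 v).2
    have b := h1 v
    split_ifs at a <;> omega
  have hparn : ∀ v, (idx (nxt v) % 2 = 0 ↔ ¬ idx v % 2 = 0) := by
    intro v
    have := hparp (nxt v)
    rw [hpn] at this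
    tauto
  have hpp : ∀ v, prv (prv v) ≠ v := by
    intro v h
    have a := (h5 v).2
    have b := (h5 (prv v)).2
    have c := (h6 _ _ (h5 v).1).1
    have d := h1 v
    rw [h, c] at b
    split_ifs at a b <;> omega
  let arc : V → V × V := fun v => if idx v % 2 = 0 then (v, nxt v) else (nxt v, v)
  have arc0 : ∀ v, idx v % 2 = 0 → arc v = (v, nxt v) := fun v h => if_pos h
  have arc1 : ∀ v, ¬ idx v % 2 = 0 → arc v = (nxt v, v) := fun v h => if_neg h
  have harcpar : ∀ v, idx (arc v).1 % 2 = 0 ∧ ¬ idx (arc v).2 % 2 = 0 := by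
    intro v
    by_cases h : idx v % 2 = 0
    · rw [arc0 v h]; exact ⟨h, fun h' => (hparn v).1 h' h⟩
    · rw [arc1 v h]; exact ⟨(hparn v).2 h, h⟩
  have harcinj : Function.Injective arc := by
    intro u v h
    by_cases hu : idx u % 2 = 0 <;> by_cases hv : idx v % 2 = 0
    · rw [arc0 u hu, arc0 v hv] at h; exact (Prod.ext_iff.1 h).1
    · rw [arc0 u hu, arc1 v hv] at h
      obtain ⟨a, b⟩ := Prod.ext_iff.1 h
      simp only at a b
      have e1 : prv u = v := by rw [a, hpn]
      have e2 : prv v = u := by rw [← b, hpn]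
      exact absurd (by rw [e1, e2]) (hpp u)
    · rw [arc1 u hu, arc0 v hv] at h
      obtain ⟨a, b⟩ := Prod.ext_iff.1 h
      simp only at a b
      have e1 : prv u = v := by rw [b, hpn]
      have e2 : prv v = u := by rw [← a, hpn]
      exact absurd (by rw [e1, e2]) (hpp u)
    · rw [arc1 u hu, arc1 v hv] at h; exact (Prod.ext_iff.1 h).2
  let c : V × V → ℤ := Function.extend arc (fun v => (L v : ℤ)) 0
  have hc : ∀ v, c (arc v) = L v := fun v => harcinj.extend_apply _ _ v
  have hsum : ∀ p : V × V → Prop, ∀ _ : DecidablePred p,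
      ∑ a ∈ (univ.image arc).filter p, c a = ∑ v ∈ univ.filter (fun v => p (arc v)), (L v : ℤ) := by
    intro p _
    rw [Finset.filter_image, Finset.sum_image (fun _ _ _ _ h => harcinj h)]
    exact Finset.sum_congr rfl fun v _ => hc v
  have hne : ∀ v, v ≠ prv v := by
    intro v h
    have := hparp v
    rw [← h] at this
    tauto
  have hvs0 : ∀ u, idx u % 2 = 0 →
      vertexSum (univ.image arc) c u = -((L u : ℤ) + L (prv u)) := by
    intro u hu
    unfold vertexSum
    rw [hsum, hsum]
    have e1 : univ.filter (fun v => (arc v).2 = u) = ∅ := by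
      ext v
      simp only [mem_filter, mem_univ, true_and, notMem_empty, iff_false]
      rintro rfl
      exact (harcpar v).2 hu
    have e2 : univ.filter (fun v => (arc v).1 = u) = {u, prv u} := by
      ext v
      simp only [mem_filter, mem_univ, true_and, mem_insert, mem_singleton]
      constructor
      · rintro rfl
        by_cases hv : idx v % 2 = 0
        · rw [arc0 v hv]; exact Or.inl rfl
        · rw [arc1 v hv]; exact Or.inr (hpn v).symm
      · rintro (rfl | rfl)
        · rw [arc0 v hu]
        · rw [arc1 _ (fun h => (hparp u).1 h hu)]; exact hnp u
    rw [e1, e2, Finset.sum_empty, Finset.sum_pair (hne u)]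
    ring
  have hvs1 : ∀ u, ¬ idx u % 2 = 0 →
      vertexSum (univ.image arc) c u = (L u : ℤ) + L (prv u) := by
    intro u hu
    unfold vertexSum
    rw [hsum, hsum]
    have e1 : univ.filter (fun v => (arc v).1 = u) = ∅ := by
      ext v
      simp only [mem_filter, mem_univ, true_and, notMem_empty, iff_false]
      rintro rfl
      exact hu (harcpar v).1
    have e2 : univ.filter (fun v => (arc v).2 = u) = {u, prv u} := by
      ext v
      simp only [mem_filter, mem_univ, true_and, mem_insert, mem_singleton]
      constructor
      · rintro rfl
        by_cases hv : idx v % 2 = 0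
        · rw [arc0 v hv]; exact Or.inr (hpn v).symm
        · rw [arc1 v hv]; exact Or.inl rfl
      · rintro (rfl | rfl)
        · rw [arc1 v hu]
        · rw [arc0 _ ((hparp u).2 hu)]; exact hnp u
    rw [e1, e2, Finset.sum_empty, Finset.sum_pair (hne u)]
    ring
  refine ⟨univ.image arc, c, ⟨?_, ?_⟩, ⟨?_, ?_, ?_⟩, ?_⟩
  · intro u v
    simp only [mem_image, mem_univ, true_and]
    have harcadj : ∀ x, G.Adj (arc x).1 (arc x).2 := by
      intro x
      have hx : G.Adj x (nxt x) := (hadj _ _).2 (Or.inl rfl)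
      by_cases h : idx x % 2 = 0
      · rw [arc0 x h]; exact hx
      · rw [arc1 x h]; exact hx.symm
    have hmemn : ∀ x, (∃ a, arc a = (x, nxt x)) ∨ (∃ a, arc a = (nxt x, x)) := by
      intro x
      by_cases h : idx x % 2 = 0
      · exact Or.inl ⟨x, arc0 x h⟩
      · exact Or.inr ⟨x, arc1 x h⟩
    constructor
    · intro h
      rcases (hadj u v).1 h with rfl | rfl
      · exact hmemn u
      · have := hmemn (prv u)
        rw [hnp] at this
        exact this.symm
    · rintro (⟨a, ha⟩ | ⟨a, ha⟩)
      · have := harcadj a; rw [ha] at this; exact this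
      · have := harcadj a; rw [ha] at this; exact this.symm
  · intro u v
    simp only [mem_image, mem_univ, true_and]
    rintro ⟨⟨a, ha⟩, ⟨b, hb⟩⟩
    have h := (harcpar a).1
    have h' := (harcpar b).2
    rw [ha] at h
    rw [hb] at h'
    exact h' h
  · intro x hx
    simp only [coe_image, Set.mem_image, coe_univ, Set.mem_univ, true_and] at hx
    obtain ⟨v, rfl⟩ := hx
    rw [hc, hm]
    have := hLb v
    exact ⟨by exact_mod_cast this.1, by exact_mod_cast this.2⟩
  · intro x hx y hy h
    simp only [coe_image, Set.mem_image, coe_univ, Set.mem_univ, true_and] at hx hy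
    obtain ⟨u, rfl⟩ := hx
    obtain ⟨v, rfl⟩ := hy
    rw [hc, hc] at h
    rw [hLinj (by exact_mod_cast h : L u = L v)]
  · intro z hz
    rw [hm] at hz
    have himg : univ.image L = Finset.Icc 1 (Fintype.card V) := by
      apply Finset.eq_of_subset_of_card_le
      · intro x hx
        simp only [mem_image, mem_univ, true_and] at hx
        obtain ⟨v, rfl⟩ := hx
        exact Finset.mem_Icc.2 (hLb v)
      · rw [Finset.card_image_of_injective _ hLinj]; simp
    have hz1 := hz.1
    have hz2 := hz.2
    have : z.toNat ∈ univ.image L := by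
      rw [himg, Finset.mem_Icc]
      omega
    simp only [mem_image, mem_univ, true_and] at this
    obtain ⟨v, hv⟩ := this
    refine ⟨arc v, by simp, ?_⟩
    rw [hc, hv]
    omega
  · intro u v huv
    have h := hLsum u v huv
    have hu := hLb u
    have hv := hLb v
    by_cases pu : idx u % 2 = 0 <;> by_cases pv : idx v % 2 = 0
    · rw [hvs0 u pu, hvs0 v pv]; omega
    · rw [hvs0 u pu, hvs1 v pv]; omega
    · rw [hvs1 u pu, hvs0 v pv]; omega
    · rw [hvs1 u pu, hvs1 v pv]; omega
end
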